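/- arXiv:1803.09306 — 3 statements merged into one kernel-verified Lean document; each statement's English description precedes it below -/
import Mathlib

section
/- Let d ≥ 1 be an integer and let ξ = (ξ₁,…,ξ_d) ∈ ℝ^d. Set Ξ = (ξ₁,…,ξ_d, ξ₁²+⋯+ξ_d²) ∈ ℝ^{d+1} and suppose Ξ is totally irrational. Then the uniform Diophantine exponent of Ξ satisfies ω̂(Ξ) ≤ H_d, where H_d is the unique positive root of the equation x^{d+1} + x^d + ⋯ + x = 1. -/
open Filter

/-- The "uniform approximation at exponent `γ`" property: for every sufficiently large
real `Q`, the system `max_j |q θ_j - a_j| < Q^(-γ)`, `1 ≤ q ≤ Q` has an integer solution.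
The uniform Diophantine exponent `ω̂(θ)` is the supremum of such `γ`. -/
def UnifApprox {m : ℕ} (θ : Fin m → ℝ) (γ : ℝ) : Prop :=
  ∀ᶠ Q : ℝ in atTop, ∃ (q : ℤ) (a : Fin m → ℤ),
    1 ≤ q ∧ (q : ℝ) ≤ Q ∧ ∀ j, |(q : ℝ) * θ j - (a j : ℝ)| < Q ^ (-γ)

/-- `1, θ₁, …, θ_m` are linearly independent over `ℚ`. -/
def TotallyIrrational {m : ℕ} (θ : Fin m → ℝ) : Prop :=
  LinearIndependent ℚ (Fin.cons (1 : ℝ) θ)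

/-- The partial sums `1 - α - ... - α^k`. -/
noncomputable def SS (α : ℝ) (k : ℕ) : ℝ := 1 - ∑ i ∈ Finset.range k, α ^ (i + 1)

lemma SS_zero (α : ℝ) : SS α 0 = 1 := by simp [SS]

lemma SS_succ (α : ℝ) (k : ℕ) : SS α (k + 1) = SS α k - α ^ (k + 1) := by
  simp [SS, Finset.sum_range_succ]; ring

/-- Abstract system of dimensions and logarithmic heights attached to consecutive best
approximations. -/
structure HSys (N : ℕ) (α C : ℝ) (D : ℕ → ℕ → ℕ) (h : ℕ → ℕ → ℝ) (x : ℕ → ℝ) : Prop where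
  d_self : ∀ a, D a a = 1
  d_succ : ∀ a, D a (a + 1) = 2
  d_mono : ∀ a a' b' b, a ≤ a' → a' ≤ b' → b' ≤ b → D a' b' ≤ D a b
  d_right : ∀ a b, a ≤ b → D a (b + 1) ≤ D a b + 1
  d_left : ∀ a b, a + 1 ≤ b → D a b ≤ D (a + 1) b + 1
  d_jump : ∀ a j p, a ≤ j → j ≤ p → D a p < D a (p + 1) → D j p < D j (p + 1)
  d_full : ∀ a, ∃ b, a ≤ b ∧ D a b = N
  h_nonneg : ∀ a b, a ≤ b → 0 ≤ h a b
  h_self_ge : ∀ a, x a - C ≤ h a a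
  h_self_le : ∀ a, h a a ≤ x a + C
  h_succ : ∀ a, h a (a + 1) ≤ (1 - α) * x (a + 1) + C
  x_succ : ∀ a, x (a + 1) ≤ x a / α + C
  x_mono : Monotone x
  x_top : Tendsto x atTop atTop
  h_congr : ∀ a a' b' b, a ≤ a' → a' ≤ b' → b' ≤ b → D a' b' = D a b → h a' b' = h a b
  h_sub : ∀ a j p k, a < j → j ≤ p → D a p = k + 1 → D a (p + 1) = k + 2 →
    D j p = k → D j (p + 1) = k + 1 → h a (p + 1) + h j p ≤ h a p + h j (p + 1)
  h_left : ∀ j b, j + 1 ≤ b → D j b = D (j + 1) b + 1 →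
    h j b ≤ h (j + 1) b - α * x (j + 1) + C

namespace HSys

variable {N : ℕ} {α C : ℝ} {D : ℕ → ℕ → ℕ} {h : ℕ → ℕ → ℝ} {x : ℕ → ℝ}

lemma exists_j (S : HSys N α C D h x) (k a p : ℕ) (hap : a ≤ p) (h1 : D a p = k + 2)
    (h2 : D a (p + 1) = k + 3) :
    ∃ i, a ≤ i ∧ i + 1 ≤ p ∧ D (i + 1) (p + 1) = k + 2 ∧ D (i + 1) p = k + 1 ∧
      D i (p + 1) = k + 3 := by
  classical
  have hne : a ≠ p := by
    rintro rfl
    rw [S.d_self] at h1; omega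
  have hex : ∃ i, D (a + i + 1) (p + 1) ≤ k + 2 := by
    refine ⟨p - a - 1, ?_⟩
    have : a + (p - a - 1) + 1 = p := by omega
    rw [this, S.d_succ]; omega
  set m := Nat.find hex with hm
  have hmin := Nat.find_spec hex
  rw [← hm] at hmin
  have hle : m ≤ p - a - 1 := by
    apply Nat.find_min' hex
    have : a + (p - a - 1) + 1 = p := by omega
    rw [this, S.d_succ]; omega
  have hD : D (a + m) (p + 1) = k + 3 := by
    apply le_antisymm
    · rw [← h2]; exact S.d_mono _ _ _ _ (by omega) (by omega) le_rfl
    · rcases Nat.eq_zero_or_pos m with h0 | h0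
      · rw [h0, add_zero, h2]
      · have := Nat.find_min hex (m := m - 1) (by omega)
        have e : a + (m - 1) + 1 = a + m := by omega
        rw [e] at this; omega
  have hl := S.d_left (a + m) (p + 1) (by omega)
  have hj := S.d_jump a (a + m + 1) p (by omega) (by omega) (by omega)
  have hr := S.d_right (a + m + 1) p (by omega)
  exact ⟨a + m, by omega, by omega, by omega, by omega, hD⟩

/-- Property `P`. -/
def PP (α : ℝ) (D : ℕ → ℕ → ℕ) (h : ℕ → ℕ → ℝ) (k : ℕ) : Prop :=
  ∃ K : ℝ, ∀ a p, a ≤ p → D a p = k + 1 → D a (p + 1) = k + 2 →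
    h a (p + 1) ≤ SS α (k + 1) / (α * SS α k) * h a p + K

/-- Property `Q`. -/
def QQ (α : ℝ) (D : ℕ → ℕ → ℕ) (h : ℕ → ℕ → ℝ) (x : ℕ → ℝ) (k : ℕ) : Prop :=
  ∃ K : ℝ, ∀ a b, a ≤ b → D a b = k + 1 → h a b ≤ SS α k / α ^ k * x a + K

lemma q_zero (S : HSys N α C D h x) : QQ α D h x 0 := by
  refine ⟨C, fun a b hab hD => ?_⟩
  rw [← S.h_congr a a a b le_rfl le_rfl hab (by rw [S.d_self, hD])]
  simpa [SS_zero] using S.h_self_le a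

lemma p_zero (S : HSys N α C D h x) (h0 : 0 < α) (h1 : α < 1) : PP α D h 0 := by
  refine ⟨(1 - α) / α * C + (1 - α) * C + C, fun a p hap hD1 hD2 => ?_⟩
  have : p = a := by
    by_contra hne
    have := S.d_mono a a (a + 1) p le_rfl (by omega) (by omega)
    rw [S.d_succ] at this; omega
  subst this
  have e1 := S.h_succ p
  have e2 := S.x_succ p
  have e3 := S.h_self_ge p
  have e4 : SS α (0 + 1) / (α * SS α 0) = (1 - α) / α := by
    rw [SS_succ, SS_zero]; simp
  rw [e4]
  have e5 : (1 - α) * x (p + 1) ≤ (1 - α) * (x p / α + C) :=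
    mul_le_mul_of_nonneg_left e2 (by linarith)
  have e6 : (1 - α) / α * (x p - C) ≤ (1 - α) / α * h p p :=
    mul_le_mul_of_nonneg_left e3 (div_nonneg (by linarith) h0.le)
  have e7 : (1 - α) * (x p / α + C) = (1 - α) / α * (x p - C) + (1 - α) / α * C + (1 - α) * C := by
    field_simp; ring
  linarith

lemma q_succ (S : HSys N α C D h x) (h0 : 0 < α) (k : ℕ) (hk : 0 < SS α k)
    (hk1 : 0 ≤ SS α (k + 1)) (hP : PP α D h k) (hQ : QQ α D h x k) : QQ α D h x (k + 1) := by
  classical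
  obtain ⟨K1, hP⟩ := hP
  obtain ⟨K2, hQ⟩ := hQ
  refine ⟨SS α (k + 1) / (α * SS α k) * K2 + K1, fun a b hab hD => ?_⟩
  have hex : ∃ i, k + 2 ≤ D a (a + i) := ⟨b - a, by rw [Nat.add_sub_cancel' hab]; omega⟩
  set m := Nat.find hex with hm
  have hs := Nat.find_spec hex
  rw [← hm] at hs
  have hmb : m ≤ b - a := Nat.find_min' hex (by rw [Nat.add_sub_cancel' hab]; omega)
  have hm0 : m ≠ 0 := by
    intro h0; rw [h0, add_zero, S.d_self] at hs; omega
  obtain ⟨p, hp⟩ : ∃ p, m = p + 1 := ⟨m - 1, by omega⟩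
  rw [hp] at hs hmb
  have hlt := Nat.find_min hex (m := p) (by omega)
  have hr := S.d_right a (a + p) (by omega)
  have hu := S.d_mono a a (a + (p + 1)) b le_rfl (by omega) (by omega)
  rw [← add_assoc] at hs hu
  have e1 := hP a (a + p) (by omega) (by omega) (by omega)
  have e2 := hQ a (a + p) (by omega) (by omega)
  rw [← S.h_congr a a (a + p + 1) b le_rfl (by omega) (by omega) (by omega)]
  have e3 := mul_le_mul_of_nonneg_left e2
    (show 0 ≤ SS α (k + 1) / (α * SS α k) from div_nonneg hk1 (by positivity))
  have e4 : SS α (k + 1) / (α * SS α k) * (SS α k / α ^ k * x a + K2) =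
    SS α (k + 1) / α ^ (k + 1) * x a + SS α (k + 1) / (α * SS α k) * K2 := by
    field_simp; ring
  linarith

lemma p_succ (S : HSys N α C D h x) (h0 : 0 < α) (hhalf : 1 / 2 ≤ α) (k : ℕ) (hk : 0 < SS α k)
    (hk1 : 0 < SS α (k + 1)) (hk2 : 0 < SS α (k + 2)) (hP : PP α D h k)
    (hQ : QQ α D h x (k + 1)) : PP α D h (k + 1) := by
  obtain ⟨K1, hP⟩ := hP
  obtain ⟨K2, hQ⟩ := hQ
  set s0 := SS α k with hs0
  set s1 := SS α (k + 1) with hs1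
  set s2 := SS α (k + 2) with hs2
  have r1 : s1 = s0 - α ^ (k + 1) := SS_succ α k
  have r2 : s2 = s1 - α ^ (k + 2) := SS_succ α (k + 1)
  have r3 : α ^ (k + 2) = α * α ^ (k + 1) := by ring
  have hpw : 0 < α ^ (k + 1) := by positivity
  have hA : 0 ≤ α * s0 / s1 - 1 := by
    rw [sub_nonneg, le_div_iff₀ hk1]
    -- s1 ≤ α * s0 : by induction-free argument
    have : ∀ n, SS α (n + 1) ≤ α * SS α n := by
      intro n
      induction n with
      | zero => rw [SS_succ, SS_zero]; norm_num; linarith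
      | succ n ih =>
        rw [SS_succ α (n + 1), SS_succ α n] at *
        have : α ^ (n + 1 + 1) = α * α ^ (n + 1) := by ring
        nlinarith
    linarith [this k]
  set A := α * s0 / s1 - 1 with hAd
  set B := s2 / s1 with hBd
  have hB : 0 < B := by positivity
  have hAB : A + B = α := by
    rw [hAd, hBd]; field_simp; rw [r2, r1] ; ring
  refine ⟨(B * (α * s0 / s1 * K1) + A * (α ^ (k + 2) / s1 * K2 + C)) / α,
    fun a p hap hD1 hD2 => ?_⟩
  obtain ⟨i, hai, hip, d1, d2, d3⟩ := S.exists_j k a p hap hD1 hD2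
  have f5 := S.h_sub a (i + 1) p (k + 1) (by omega) hip hD1 hD2 d2 d1
  have f6 := S.h_left i (p + 1) (by omega) (by omega)
  have e0 := S.h_congr a i (p + 1) (p + 1) hai (by omega) le_rfl (by omega)
  rw [e0] at f6
  have eP := hP (i + 1) p hip d2 d1
  have eQ := hQ (i + 1) (p + 1) (by omega) d1
  set Y := h a (p + 1)
  set Z := h a p
  set T := h (i + 1) (p + 1)
  set R := h (i + 1) p
  -- first inequality
  have g1 : α * s0 / s1 * T ≤ R + α * s0 / s1 * K1 := by
    have := mul_le_mul_of_nonneg_left eP (show 0 ≤ α * s0 / s1 by positivity)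
    have e : α * s0 / s1 * (s1 / (α * s0) * R + K1) = R + α * s0 / s1 * K1 := by
      field_simp
    linarith
  have g1' : Y ≤ Z - A * T + α * s0 / s1 * K1 := by
    have : A * T = α * s0 / s1 * T - T := by rw [hAd]; ring
    linarith
  have g2 : α ^ (k + 2) / s1 * T ≤ α * x (i + 1) + α ^ (k + 2) / s1 * K2 := by
    have := mul_le_mul_of_nonneg_left eQ (show 0 ≤ α ^ (k + 2) / s1 by positivity)
    have e : α ^ (k + 2) / s1 * (s1 / α ^ (k + 1) * x (i + 1) + K2) =
        α * x (i + 1) + α ^ (k + 2) / s1 * K2 := by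
      rw [r3]; field_simp
    linarith
  have g2' : Y ≤ B * T + (α ^ (k + 2) / s1 * K2 + C) := by
    have : B * T = T - α ^ (k + 2) / s1 * T := by rw [hBd, r2]; field_simp
    linarith
  have g3 : α * Y ≤ B * Z + (B * (α * s0 / s1 * K1) + A * (α ^ (k + 2) / s1 * K2 + C)) := by
    have a1 := mul_le_mul_of_nonneg_left g1' hB.le
    have a2 := mul_le_mul_of_nonneg_left g2' hA
    have : α * Y = B * Y + A * Y := by rw [← hAB]; ring
    rw [this]
    linarith
  have : s2 / (α * s1) * Z = B * Z / α := by rw [hBd]; field_simp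
  show Y ≤ s2 / (α * s1) * Z + _
  rw [this, ← add_div, le_div_iff₀ h0]
  linarith

theorem absurd_of (k : ℕ) (S : HSys (k + 3) α C D h x) (hhalf : 1 / 2 ≤ α)
    (h1 : α < 1) (hpos : 0 < SS α (k + 1)) (hneg : SS α (k + 2) < 0) : False := by
  have h0 : 0 < α := by linarith
  have hanti : Antitone (SS α) := antitone_nat_of_succ_le (fun n => by
    rw [SS_succ]; have : 0 < α ^ (n + 1) := by positivity
    linarith)
  have hS : ∀ n, n ≤ k + 1 → 0 < SS α n := fun n hn => hpos.trans_le (hanti hn)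
  have key : ∀ n, n ≤ k → PP α D h n ∧ QQ α D h x n := by
    intro n
    induction n with
    | zero => intro _; exact ⟨S.p_zero h0 h1, S.q_zero⟩
    | succ n ih =>
      intro hn
      obtain ⟨hP, hQ⟩ := ih (by omega)
      have hQ' := S.q_succ h0 n (hS n (by omega)) (hS (n + 1) (by omega)).le hP hQ
      exact ⟨S.p_succ h0 hhalf n (hS n (by omega)) (hS (n + 1) (by omega)) (hS (n + 2) (by omega))
        hP hQ', hQ'⟩
  obtain ⟨hP, hQ⟩ := key k le_rfl
  obtain ⟨K, hQ'⟩ := S.q_succ h0 k (hS k (by omega)) hpos.le hP hQ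
  -- contradiction
  have hσ : SS α (k + 1) / α ^ (k + 1) - α < 0 := by
    have : SS α (k + 1) / α ^ (k + 1) - α = SS α (k + 2) / α ^ (k + 1) := by
      rw [SS_succ α (k + 1)]; field_simp; ring
    rw [this]; exact div_neg_of_neg_of_pos hneg (by positivity)
  set σ := SS α (k + 1) / α ^ (k + 1) - α with hσd
  obtain ⟨a, ha⟩ := (S.x_top.eventually (eventually_gt_atTop ((K + C) / (-σ)))).exists
  obtain ⟨b, hab, hb⟩ := S.d_full a
  classical
  have hex : ∃ i, D a (a + i) = k + 3 := ⟨b - a, by rw [Nat.add_sub_cancel' hab]; omega⟩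
  set m := Nat.find hex with hm
  have hs := Nat.find_spec hex
  rw [← hm] at hs
  have hm0 : m ≠ 0 := by
    intro h0; rw [h0, add_zero, S.d_self] at hs; omega
  obtain ⟨p, hp⟩ : ∃ p, m = p + 1 := ⟨m - 1, by omega⟩
  rw [hp, ← add_assoc] at hs
  have hlt := Nat.find_min hex (m := p) (by omega)
  have hr := S.d_right a (a + p) (by omega)
  have hu := S.d_mono a a (a + p) (a + p + 1) le_rfl (by omega) (by omega)
  obtain ⟨i, hai, hip, d1, d2, d3⟩ := S.exists_j k a (a + p) (by omega) (by omega) hs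
  have f6 := S.h_left i (a + p + 1) (by omega) (by omega)
  have e1 := hQ' (i + 1) (a + p + 1) (by omega) d1
  have e2 := S.h_nonneg i (a + p + 1) (by omega)
  have e3 : x a ≤ x (i + 1) := S.x_mono (by omega)
  rw [div_lt_iff₀ (by linarith)] at ha
  have e4 : 0 ≤ σ * x (i + 1) + (K + C) := by rw [hσd]; linarith
  nlinarith

end HSys
section Heights

open Matrix Module

variable {N : ℕ}

/-- Cast an integer vector to a rational vector. -/
def cQ : (Fin N → ℤ) →ₗ[ℤ] (Fin N → ℚ) where
  toFun v := fun i => (v i : ℚ)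
  map_add' u v := by ext; simp
  map_smul' r v := by ext; simp

lemma cQ_apply (v : Fin N → ℤ) (i : Fin N) : cQ v i = (v i : ℚ) := rfl

lemma cQ_injective : Function.Injective (cQ (N := N)) := by
  intro u v h
  ext i
  have := congrFun h i
  simpa [cQ_apply] using this

lemma indep_iff {ι : Type*} (v : ι → Fin N → ℤ) :
    LinearIndependent ℤ v ↔ LinearIndependent ℚ (fun i => cQ (v i)) := by
  rw [← LinearIndependent.iff_fractionRing ℤ ℚ]
  exact (LinearMap.linearIndependent_iff cQ (LinearMap.ker_eq_bot.2 cQ_injective)).symm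

/-- Gram determinant of an integer family. -/
def gd {ι : Type*} [Fintype ι] [DecidableEq ι] (v : ι → Fin N → ℤ) : ℤ :=
  (Matrix.of v * (Matrix.of v)ᵀ).det

/-- Real matrix of an integer family. -/
def rM {ι : Type*} (v : ι → Fin N → ℤ) : Matrix ι (Fin N) ℝ := Matrix.of fun i j => (v i j : ℝ)

lemma gd_cast {ι : Type*} [Fintype ι] [DecidableEq ι] (v : ι → Fin N → ℤ) :
    (gd v : ℝ) = (rM v * (rM v)ᵀ).det := by
  unfold gd
  have := (Int.castRingHom ℝ).map_det (Matrix.of v * (Matrix.of v)ᵀ)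
  simp only [eq_intCast] at this
  rw [this]
  congr 1
  ext i j
  simp [Matrix.mul_apply, rM]

lemma gd_reindex {ι κ : Type*} [Fintype ι] [DecidableEq ι] [Fintype κ] [DecidableEq κ]
    (e : κ ≃ ι) (v : ι → Fin N → ℤ) : gd (fun i => v (e i)) = gd v := by
  unfold gd
  rw [← Matrix.det_submatrix_equiv_self e (Matrix.of v * (Matrix.of v)ᵀ)]
  congr 1

lemma gd_ne_zero {ι : Type*} [Fintype ι] [DecidableEq ι] (v : ι → Fin N → ℤ)
    (hv : LinearIndependent ℤ v) : gd v ≠ 0 := by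
  intro h0
  obtain ⟨u, hu, h⟩ := Matrix.exists_mulVec_eq_zero_iff.2 h0
  have h1 : u ⬝ᵥ ((Matrix.of v * (Matrix.of v)ᵀ) *ᵥ u) = 0 := by rw [h]; simp
  have h2 : (u ᵥ* Matrix.of v) ⬝ᵥ (u ᵥ* Matrix.of v) = 0 := by
    rw [← h1, ← Matrix.mulVec_mulVec, Matrix.dotProduct_mulVec, Matrix.mulVec_transpose]
  rw [dotProduct_self_eq_zero] at h2
  apply hu
  have h3 := Fintype.linearIndependent_iff.1 hv u (by
    rw [← h2]; ext j; simp [Matrix.vecMul, dotProduct, Finset.sum_apply])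
  ext i; exact h3 i

lemma gram_posSemidef {ι : Type*} [Fintype ι] (M : Matrix ι (Fin N) ℝ) :
    (M * Mᵀ).PosSemidef := by
  have := Matrix.posSemidef_self_mul_conjTranspose M
  simpa [Matrix.conjTranspose_eq_transpose_of_trivial] using this

lemma gd_pos {ι : Type*} [Fintype ι] [DecidableEq ι] (v : ι → Fin N → ℤ)
    (hv : LinearIndependent ℤ v) : 0 < gd v := by
  have h1 : (0 : ℝ) ≤ gd v := by
    rw [gd_cast]; exact (gram_posSemidef _).det_nonneg
  have h2 : 0 ≤ gd v := by exact_mod_cast h1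
  exact lt_of_le_of_ne h2 (gd_ne_zero v hv).symm

/-- Integer points of a rational subspace. -/
def lat (W : Submodule ℚ (Fin N → ℚ)) : Submodule ℤ (Fin N → ℤ) :=
  (W.restrictScalars ℤ).comap cQ

lemma mem_lat {W : Submodule ℚ (Fin N → ℚ)} {v : Fin N → ℤ} : v ∈ lat W ↔ cQ v ∈ W := Iff.rfl

lemma exists_clear (w : Fin N → ℚ) : ∃ m : ℤ, m ≠ 0 ∧ ∃ v : Fin N → ℤ, cQ v = (m : ℚ) • w := by
  refine ⟨∏ i, ((w i).den : ℤ), ?_, fun i => (w i).num * ∏ j ∈ Finset.univ.erase i, ((w j).den : ℤ), ?_⟩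
  · rw [Finset.prod_ne_zero_iff]
    intro i _
    exact_mod_cast (w i).den_nz
  · ext i
    rw [cQ_apply, Pi.smul_apply, smul_eq_mul, ← Finset.mul_prod_erase _ _ (Finset.mem_univ i)]
    push_cast
    have : (((w i).den : ℚ)) * w i = (w i).num := by
      rw [mul_comm]; exact Rat.mul_den_eq_num _
    calc _ = (((w i).den : ℚ) * w i) * ∏ j ∈ Finset.univ.erase i, ((w j).den : ℚ) := by rw [this]
      _ = _ := by ring

lemma exists_indep (W : Submodule ℚ (Fin N → ℚ)) :
    ∃ v : Fin (finrank ℚ W) → Fin N → ℤ, LinearIndependent ℤ v ∧ ∀ i, v i ∈ lat W := by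
  let b := finBasis ℚ W
  choose m hm v hv using fun i => exists_clear (b i : Fin N → ℚ)
  refine ⟨v, ?_, fun i => ?_⟩
  · rw [indep_iff]
    have hb : LinearIndependent ℚ (fun i => (b i : Fin N → ℚ)) :=
      b.linearIndependent.map' W.subtype (Submodule.ker_subtype W)
    have := hb.units_smul (fun i => Units.mk0 (m i : ℚ) (by exact_mod_cast hm i))
    convert this using 1
    ext i : 1
    rw [hv]; rfl
  · rw [mem_lat, hv]; exact W.smul_mem _ (b i).2

/-- Squared height of a rational subspace. -/
noncomputable def ht (W : Submodule ℚ (Fin N → ℚ)) : ℕ :=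
  sInf {g : ℕ | ∃ v : Fin (finrank ℚ W) → Fin N → ℤ,
    LinearIndependent ℤ v ∧ (∀ i, v i ∈ lat W) ∧ gd v = g}

lemma ht_spec (W : Submodule ℚ (Fin N → ℚ)) : ∃ v : Fin (finrank ℚ W) → Fin N → ℤ,
    LinearIndependent ℤ v ∧ (∀ i, v i ∈ lat W) ∧ gd v = ht W := by
  have : {g : ℕ | ∃ v : Fin (finrank ℚ W) → Fin N → ℤ,
    LinearIndependent ℤ v ∧ (∀ i, v i ∈ lat W) ∧ gd v = g}.Nonempty := by
    obtain ⟨v, h1, h2⟩ := exists_indep W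
    exact ⟨(gd v).toNat, v, h1, h2, (Int.toNat_of_nonneg (gd_pos v h1).le).symm⟩
  exact Nat.sInf_mem this

lemma ht_le {ι : Type*} [Fintype ι] [DecidableEq ι] (W : Submodule ℚ (Fin N → ℚ))
    (hc : Fintype.card ι = finrank ℚ W) (v : ι → Fin N → ℤ) (hv : LinearIndependent ℤ v)
    (hW : ∀ i, v i ∈ lat W) : (ht W : ℤ) ≤ gd v := by
  let e := Fintype.equivFinOfCardEq hc
  have h1 : LinearIndependent ℤ (fun i => v (e.symm i)) := hv.comp _ e.symm.injective
  have h2 : (ht W) ≤ (gd v).toNat := by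
    apply Nat.sInf_le
    refine ⟨fun i => v (e.symm i), h1, fun i => hW _, ?_⟩
    rw [gd_reindex e.symm v, Int.toNat_of_nonneg (gd_pos v hv).le]
  have := Int.toNat_of_nonneg (gd_pos v hv).le
  omega

lemma ht_pos (W : Submodule ℚ (Fin N → ℚ)) : 1 ≤ ht W := by
  obtain ⟨v, h1, _, h3⟩ := ht_spec W
  have := gd_pos v h1
  omega

lemma indep_coe {W : Submodule ℚ (Fin N → ℚ)} {ι : Type*} (b : Basis ι ℤ (lat W)) :
    LinearIndependent ℤ (fun i => (b i : Fin N → ℤ)) :=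
  b.linearIndependent.map' (lat W).subtype (Submodule.ker_subtype _)

lemma card_basis {W : Submodule ℚ (Fin N → ℚ)} {ι : Type*} [Fintype ι]
    (b : Basis ι ℤ (lat W)) : Fintype.card ι = finrank ℚ W := by
  apply le_antisymm
  · have h := (indep_iff _).1 (indep_coe b)
    have h' : LinearIndependent ℚ (fun i => (⟨cQ (b i : Fin N → ℤ), (b i).2⟩ : W)) := by
      apply LinearIndependent.of_comp W.subtype
      exact h
    exact h'.fintype_card_le_finrank
  · obtain ⟨v, h1, h2⟩ := exists_indep W
    have h' : LinearIndependent ℤ (fun i => (⟨v i, h2 i⟩ : lat W)) := by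
      apply LinearIndependent.of_comp (lat W).subtype
      exact h1
    have := h'.fintype_card_le_finrank
    rw [finrank_eq_card_basis b] at this
    simpa using this

lemma ht_basis {W : Submodule ℚ (Fin N → ℚ)} {ι : Type*} [Fintype ι] [DecidableEq ι]
    (b : Basis ι ℤ (lat W)) : gd (fun i => (b i : Fin N → ℤ)) = ht W := by
  apply le_antisymm
  · obtain ⟨v, h1, h2, h3⟩ := ht_spec W
    rw [← h3]
    let e := Fintype.equivFinOfCardEq (card_basis b)
    rw [← gd_reindex e v]
    set w : ι → Fin N → ℤ := fun i => v (e i) with hw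
    have hwi : LinearIndependent ℤ w := h1.comp _ e.injective
    let P : Matrix ι ι ℤ := Matrix.of fun i j => b.repr ⟨w i, h2 _⟩ j
    have hP : Matrix.of w = P * Matrix.of (fun i => (b i : Fin N → ℤ)) := by
      ext i j
      have := congrArg (fun z : lat W => (z : Fin N → ℤ) j) (b.sum_repr ⟨w i, h2 _⟩)
      rw [AddSubmonoidClass.coe_finsetSum, Finset.sum_apply] at this
      rw [Matrix.of_apply, Matrix.mul_apply]
      exact this.symm
    have hg : gd w = P.det ^ 2 * gd (fun i => (b i : Fin N → ℤ)) := by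
      unfold gd
      rw [hP, Matrix.transpose_mul, Matrix.mul_assoc, ← Matrix.mul_assoc _ _ (Pᵀ), Matrix.det_mul,
        Matrix.det_mul, Matrix.det_transpose]
      ring
    have hpos := gd_pos w hwi
    have hb := gd_pos _ (indep_coe b)
    rw [hg]
    have : 0 < P.det ^ 2 := by
      by_contra hcon
      have : P.det ^ 2 = 0 := le_antisymm (not_lt.1 hcon) (sq_nonneg _)
      rw [hg, this] at hpos; simp at hpos
    nlinarith
  · exact ht_le W (card_basis b) _ (indep_coe b) (fun i => (b i).2)

lemma exists_adapted {V U : Submodule ℚ (Fin N → ℚ)} (hVU : V ≤ U)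
    (hr : finrank ℚ U = finrank ℚ V + 1) {ι : Type*} [Fintype ι] [DecidableEq ι]
    (b : Basis ι ℤ (lat V)) :
    ∃ u : Fin N → ℤ, u ∈ lat U ∧ LinearIndependent ℤ (Sum.elim (fun i => (b i : Fin N → ℤ))
      (fun _ : Unit => u)) ∧
      gd (Sum.elim (fun i => (b i : Fin N → ℤ)) (fun _ : Unit => u)) = ht U := by
  classical
  have hle : lat V ≤ lat U := fun v hv => hVU hv
  let Γ : Submodule ℤ (lat U) := (lat V).submoduleOf (lat U)
  let b' : Basis ι ℤ Γ := b.map (Submodule.submoduleOfEquivOfLe hle).symm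
  have htf : Module.IsTorsionFree ℤ (lat U ⧸ Γ) := by
    refine ⟨fun r hr => ?_⟩
    have hr0 : r ≠ 0 := hr.ne_zero
    intro x y hxy
    obtain ⟨x, rfl⟩ := Submodule.Quotient.mk_surjective _ x
    obtain ⟨y, rfl⟩ := Submodule.Quotient.mk_surjective _ y
    simp only [← Submodule.Quotient.mk_smul] at hxy
    rw [Submodule.Quotient.eq] at hxy ⊢
    rw [← smul_sub] at hxy
    have h1 : cQ (r • ((x - y : lat U) : Fin N → ℤ)) ∈ V := hxy
    show cQ ((x - y : lat U) : Fin N → ℤ) ∈ V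
    rw [map_smul] at h1
    have h2 := V.smul_mem ((r : ℚ)⁻¹) h1
    rw [← Int.cast_smul_eq_zsmul ℚ, smul_smul, inv_mul_cancel₀ (by exact_mod_cast hr0),
      one_smul] at h2
    exact h2
  have : Module.Finite ℤ (lat U ⧸ Γ) := inferInstance
  have : Module.Free ℤ (lat U ⧸ Γ) := Module.free_of_finite_type_torsion_free'
  let c := Module.Free.chooseBasis ℤ (lat U ⧸ Γ)
  have hcard : Fintype.card (Module.Free.ChooseBasisIndex ℤ (lat U ⧸ Γ)) = Fintype.card Unit := by
    have h1 := card_basis (b'.sumQuot c)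
    have h2 := card_basis b
    rw [Fintype.card_sum] at h1
    simp; omega
  let c' := c.reindex (Fintype.equivOfCardEq hcard)
  let B := b'.sumQuot c'
  have hB : (fun i => (B i : Fin N → ℤ)) = Sum.elim (fun i => (b i : Fin N → ℤ))
      (fun _ : Unit => (B (Sum.inr ()) : Fin N → ℤ)) := by
    ext1 i
    rcases i with i | i
    · simp only [B, Module.Basis.sumQuot_inl, Sum.elim_inl]
      rfl
    · rfl
  refine ⟨(B (Sum.inr ()) : Fin N → ℤ), (B (Sum.inr ())).2, ?_, ?_⟩
  · rw [← hB]; exact indep_coe B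
  · rw [← hB]; exact ht_basis B

/-- The Schur form. -/
noncomputable def sch {ι : Type*} [Fintype ι] [DecidableEq ι] (E : Matrix ι (Fin N) ℝ)
    (x y : Fin N → ℝ) : ℝ :=
  x ⬝ᵥ y - (E *ᵥ x) ⬝ᵥ ((E * Eᵀ)⁻¹ *ᵥ (E *ᵥ y))

lemma det_fromRows {ι κ : Type*} [Fintype ι] [DecidableEq ι] [Fintype κ] [DecidableEq κ]
    (E : Matrix ι (Fin N) ℝ) (U : Matrix κ (Fin N) ℝ) (hE : (E * Eᵀ).det ≠ 0) :
    (Matrix.fromRows E U * (Matrix.fromRows E U)ᵀ).det =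
      (E * Eᵀ).det * (Matrix.of fun i j => sch E (U i) (U j)).det := by
  have : Invertible (E * Eᵀ) := Matrix.invertibleOfIsUnitDet _ (isUnit_iff_ne_zero.2 hE)
  rw [Matrix.transpose_fromRows, Matrix.fromRows_mul_fromCols, Matrix.det_fromBlocks₁₁]
  congr 2
  ext i j
  rw [Matrix.of_apply, Matrix.sub_apply, sch, Matrix.invOf_eq_nonsing_inv]
  congr 1
  rw [Matrix.mul_assoc, Matrix.mul_apply']
  have h1 : (U * Eᵀ) i = E *ᵥ U i := by
    ext k
    simp [Matrix.mul_apply, Matrix.mulVec, dotProduct, mul_comm]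
  rw [h1, Matrix.mulVec_mulVec]
  congr 1
  ext k
  rw [← Matrix.mul_assoc]
  rfl

lemma rM_elim {ι κ : Type*} (v : ι → Fin N → ℤ) (u : κ → Fin N → ℤ) :
    rM (Sum.elim v u) = Matrix.fromRows (rM v) (rM u) := by
  ext i j
  rcases i with i | i <;> rfl

lemma gd_elim {ι κ : Type*} [Fintype ι] [DecidableEq ι] [Fintype κ] [DecidableEq κ]
    (v : ι → Fin N → ℤ) (u : κ → Fin N → ℤ) (hv : LinearIndependent ℤ v) :
    (gd (Sum.elim v u) : ℝ) =
      gd v * (Matrix.of fun i j => sch (rM v) (rM u i) (rM u j)).det := by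
  rw [gd_cast, rM_elim, det_fromRows, gd_cast]
  rw [← gd_cast]; exact_mod_cast gd_ne_zero v hv

lemma sch_symm {ι : Type*} [Fintype ι] [DecidableEq ι] (E : Matrix ι (Fin N) ℝ)
    (x y : Fin N → ℝ) : sch E x y = sch E y x := by
  unfold sch
  rw [dotProduct_comm]
  congr 1
  rw [Matrix.dotProduct_mulVec, dotProduct_comm, ← Matrix.mulVec_transpose,
    Matrix.transpose_nonsing_inv, Matrix.transpose_mul, Matrix.transpose_transpose]

lemma gd_unit {ι : Type*} [Fintype ι] [DecidableEq ι]
    (v : ι → Fin N → ℤ) (u : Fin N → ℤ) (hv : LinearIndependent ℤ v) :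
    (gd (Sum.elim v (fun _ : Unit => u)) : ℝ) =
      gd v * sch (rM v) (fun j => (u j : ℝ)) (fun j => (u j : ℝ)) := by
  rw [gd_elim v _ hv, Matrix.det_unique]
  rfl

lemma gd_two {ι : Type*} [Fintype ι] [DecidableEq ι]
    (v : ι → Fin N → ℤ) (u w : Fin N → ℤ) (hv : LinearIndependent ℤ v) :
    (gd v : ℝ) * gd (Sum.elim v ![u, w]) ≤
      gd (Sum.elim v (fun _ : Unit => u)) * gd (Sum.elim v (fun _ : Unit => w)) := by
  rw [gd_unit v u hv, gd_unit v w hv, gd_elim v _ hv, Matrix.det_fin_two]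
  have h0 : ((rM ![u, w]) 0 : Fin N → ℝ) = fun j => (u j : ℝ) := rfl
  have h1 : ((rM ![u, w]) 1 : Fin N → ℝ) = fun j => (w j : ℝ) := rfl
  simp only [Matrix.of_apply]
  rw [h0, h1, sch_symm (rM v) (fun j => (w j : ℝ)) (fun j => (u j : ℝ))]
  have hg : (0 : ℝ) < gd v := by exact_mod_cast gd_pos v hv
  nlinarith [mul_nonneg (mul_nonneg hg.le hg.le)
    (sq_nonneg (sch (rM v) (fun j => (u j : ℝ)) (fun j => (w j : ℝ))))]

theorem ht_submod (U W : Submodule ℚ (Fin N → ℚ))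
    (hU : finrank ℚ U = finrank ℚ (U ⊓ W : Submodule ℚ (Fin N → ℚ)) + 1)
    (hW : finrank ℚ W = finrank ℚ (U ⊓ W : Submodule ℚ (Fin N → ℚ)) + 1) :
    ht (U ⊔ W) * ht (U ⊓ W) ≤ ht U * ht W := by
  classical
  let b := Module.Free.chooseBasis ℤ (lat (U ⊓ W))
  obtain ⟨u, hu1, hu2, hu3⟩ := exists_adapted (inf_le_left : U ⊓ W ≤ U) hU b
  obtain ⟨w, hw1, hw2, hw3⟩ := exists_adapted (inf_le_right : U ⊓ W ≤ W) hW b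
  have hb := indep_coe b
  have h2 := gd_two (fun i => (b i : Fin N → ℤ)) u w hb
  rw [hu3, hw3, ht_basis b] at h2
  have hind : LinearIndependent ℤ (Sum.elim (fun i => (b i : Fin N → ℤ)) ![u, w]) := by
    rw [indep_iff]
    have hcard := card_basis b
    have hs : finrank ℚ (U ⊔ W : Submodule ℚ (Fin N → ℚ)) =
        finrank ℚ (U ⊓ W : Submodule ℚ (Fin N → ℚ)) + 2 := by
      have := Submodule.finrank_sup_add_finrank_inf_eq U W
      omega
    rw [linearIndependent_iff_card_le_finrank_span]
    rw [Fintype.card_sum, Fintype.card_fin, hcard, ← hs]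
    apply Submodule.finrank_mono
    have key : ∀ (X : Submodule ℚ (Fin N → ℚ)) (z : Fin N → ℤ), z ∈ lat X →
        finrank ℚ X = finrank ℚ (U ⊓ W : Submodule ℚ (Fin N → ℚ)) + 1 → 
        LinearIndependent ℤ (Sum.elim (fun i => (b i : Fin N → ℤ)) (fun _ : Unit => z)) →
        U ⊓ W ≤ X → 
        X ≤ Submodule.span ℚ (Set.range
          (fun i => cQ ((Sum.elim (fun i => (b i : Fin N → ℤ)) (fun _ : Unit => z)) i))) := by
      intro X z hz hX hi hle
      have h1 := finrank_span_eq_card ((indep_iff _).1 hi)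
      have h2 : Submodule.span ℚ (Set.range
          (fun i => cQ ((Sum.elim (fun i => (b i : Fin N → ℤ)) (fun _ : Unit => z)) i))) ≤ X := by
        rw [Submodule.span_le]
        rintro _ ⟨i | i, rfl⟩
        · exact hle (b i).2
        · exact hz
      apply le_of_eq
      symm
      apply Submodule.eq_of_le_of_finrank_eq h2
      rw [h1, hX, Fintype.card_sum, hcard]; simp
    refine sup_le ((key U u hu1 hU hu2 inf_le_left).trans ?_)
      ((key W w hw1 hW hw2 inf_le_right).trans ?_)
    · rw [Submodule.span_le]
      rintro _ ⟨i | i, rfl⟩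
      · exact Submodule.subset_span ⟨Sum.inl i, rfl⟩
      · exact Submodule.subset_span ⟨Sum.inr 0, rfl⟩
    · rw [Submodule.span_le]
      rintro _ ⟨i | i, rfl⟩
      · exact Submodule.subset_span ⟨Sum.inl i, rfl⟩
      · exact Submodule.subset_span ⟨Sum.inr 1, rfl⟩
  have h3 : (ht (U ⊔ W) : ℤ) ≤ gd (Sum.elim (fun i => (b i : Fin N → ℤ)) ![u, w]) := by
    apply ht_le _ _ _ hind
    · rintro (i | i)
      · exact (le_sup_left : U ≤ U ⊔ W) ((inf_le_left : U ⊓ W ≤ U) (b i).2)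
      · fin_cases i
        · exact (le_sup_left : U ≤ U ⊔ W) hu1
        · exact (le_sup_right : W ≤ U ⊔ W) hw1
    · have := Submodule.finrank_sup_add_finrank_inf_eq U W
      have hcard := card_basis b
      rw [Fintype.card_sum, Fintype.card_fin]
      omega
  have h4 : (ht (U ⊔ W) : ℝ) ≤ gd (Sum.elim (fun i => (b i : Fin N → ℤ)) ![u, w]) := by
    exact_mod_cast h3
  have h5 : (ht (U ⊔ W) : ℝ) * ht (U ⊓ W) ≤ ht U * ht W := by
    refine le_trans ?_ h2
    rw [mul_comm]
    exact mul_le_mul_of_nonneg_left h4 (by positivity)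
  exact_mod_cast h5

lemma sch_le {ι : Type*} [Fintype ι] [DecidableEq ι] (E : Matrix ι (Fin N) ℝ)
    (hE : (E * Eᵀ).det ≠ 0) (y : Fin N → ℝ) (τ : ι → ℝ) :
    sch E y y ≤ (y - Eᵀ *ᵥ τ) ⬝ᵥ (y - Eᵀ *ᵥ τ) := by
  have hu : IsUnit (E * Eᵀ).det := isUnit_iff_ne_zero.2 hE
  set z := y - Eᵀ *ᵥ τ with hz
  have hy : y = z + Eᵀ *ᵥ τ := by rw [hz]; abel
  have e0 : ∀ x, sch E x (Eᵀ *ᵥ τ) = 0 := by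
    intro x
    unfold sch
    rw [Matrix.mulVec_mulVec, Matrix.mulVec_mulVec, Matrix.mul_assoc, Matrix.nonsing_inv_mul _ hu, Matrix.one_mulVec,
      Matrix.dotProduct_mulVec, Matrix.vecMul_transpose, sub_self]
  have add_r : ∀ x a b, sch E x (a + b) = sch E x a + sch E x b := by
    intro x a b
    unfold sch
    simp only [Matrix.mulVec_add, dotProduct_add]; ring
  have e1 : sch E y y = sch E z z := by
    rw [hy, add_r, e0, add_zero, sch_symm, add_r, e0, add_zero]
  rw [e1]
  unfold sch
  have := ((gram_posSemidef E).inv).dotProduct_mulVec_nonneg (E *ᵥ z)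
  simp only [star_trivial] at this
  linarith

theorem ht_adjoin (W : Submodule ℚ (Fin N → ℚ)) (x y : Fin N → ℤ) (hx : cQ x ∈ W)
    (hy : cQ y ∉ W) (t : ℝ) :
    (ht (W ⊔ Submodule.span ℚ {cQ y}) : ℝ) ≤ ht W * ∑ i, ((y i : ℝ) - t * x i) ^ 2 := by
  classical
  obtain ⟨v, h1, h2, h3⟩ := ht_spec W
  have h1q := (indep_iff _).1 h1
  have hspan : Submodule.span ℚ (Set.range (fun i => cQ (v i))) = W := by
    apply Submodule.eq_of_le_of_finrank_eq
    · rw [Submodule.span_le]; rintro _ ⟨i, rfl⟩; exact h2 i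
    · rw [finrank_span_eq_card h1q]; simp
  have hind : LinearIndependent ℤ (Sum.elim v (fun _ : Unit => y)) := by
    rw [indep_iff]
    have : (fun i => cQ (Sum.elim v (fun _ : Unit => y) i)) =
        Sum.elim (fun i => cQ (v i)) (fun _ : Unit => cQ y) := by
      ext1 i; rcases i with i | i <;> rfl
    rw [this]
    apply LinearIndependent.sum_type h1q
    · rw [linearIndependent_unique_iff]
      intro h0
      apply hy; rw [h0]; exact W.zero_mem
    · rw [hspan, Set.range_const, Submodule.disjoint_span_singleton]
      intro h; exact absurd h hy
  have hr : finrank ℚ (W ⊔ Submodule.span ℚ {cQ y} : Submodule ℚ (Fin N → ℚ)) =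
      finrank ℚ W + 1 := by
    have e : (W ⊔ Submodule.span ℚ {cQ y} : Submodule ℚ (Fin N → ℚ)) =
        Submodule.span ℚ (Set.range (fun i => cQ (Sum.elim v (fun _ : Unit => y) i))) := by
      have : (fun i => cQ (Sum.elim v (fun _ : Unit => y) i)) =
        Sum.elim (fun i => cQ (v i)) (fun _ : Unit => cQ y) := by
        ext1 i; rcases i with i | i <;> rfl
      rw [this, Set.Sum.elim_range, Submodule.span_union, hspan, Set.range_const]
    rw [e, finrank_span_eq_card ((indep_iff _).1 hind)]
    simp
  have h4 : (ht (W ⊔ Submodule.span ℚ {cQ y}) : ℤ) ≤ gd (Sum.elim v (fun _ : Unit => y)) := by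
    apply ht_le _ _ _ hind
    · rintro (i | i)
      · exact (le_sup_left : W ≤ _) (h2 i)
      · exact (le_sup_right : _ ≤ W ⊔ Submodule.span ℚ {cQ y})
          (Submodule.mem_span_singleton_self _)
    · rw [hr]; simp
  have h5 : (ht (W ⊔ Submodule.span ℚ {cQ y}) : ℝ) ≤ gd (Sum.elim v (fun _ : Unit => y)) := by
    exact_mod_cast h4
  refine h5.trans ?_
  rw [gd_unit v y h1, h3]
  refine mul_le_mul_of_nonneg_left ?_ (by positivity)
  -- write x as a combination
  rw [← hspan] at hx
  obtain ⟨c, hc⟩ := (Submodule.mem_span_range_iff_exists_fun ℚ).1 hx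
  have hE : (rM v * (rM v)ᵀ).det ≠ 0 := by
    rw [← gd_cast]; exact_mod_cast gd_ne_zero v h1
  refine (sch_le (rM v) hE (fun j => (y j : ℝ)) (fun i => t * (c i : ℝ))).trans (le_of_eq ?_)
  unfold dotProduct
  refine Finset.sum_congr rfl fun j _ => ?_
  have : ((rM v)ᵀ *ᵥ (fun i => t * (c i : ℝ))) j = t * x j := by
    have h6 : (x j : ℝ) = ∑ i, (c i : ℝ) * (v i j : ℝ) := by
      have := congrFun hc j
      rw [Finset.sum_apply] at this
      simp only [Pi.smul_apply, cQ_apply, smul_eq_mul] at this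
      exact_mod_cast this.symm
    rw [h6, Matrix.mulVec, dotProduct, Finset.mul_sum]
    refine Finset.sum_congr rfl fun i _ => ?_
    simp only [Matrix.transpose_apply, rM, Matrix.of_apply]
    ring
  rw [Pi.sub_apply, this]
  ring

lemma gd_single (y : Fin N → ℤ) : gd (fun _ : Unit => y) = ∑ i, y i ^ 2 := by
  unfold gd
  rw [Matrix.det_unique, Matrix.mul_apply]
  refine Finset.sum_congr rfl fun i _ => ?_
  simp [sq]

lemma finrank_single (x : Fin N → ℤ) (hx : x ≠ 0) :
    finrank ℚ (Submodule.span ℚ {cQ x} : Submodule ℚ (Fin N → ℚ)) = 1 := by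
  apply finrank_span_singleton
  intro h; apply hx; apply cQ_injective; rw [h, map_zero]

lemma ht_single_le (x : Fin N → ℤ) (hx : x ≠ 0) :
    (ht (Submodule.span ℚ {cQ x}) : ℤ) ≤ ∑ i, x i ^ 2 := by
  rw [← gd_single]
  apply ht_le
  · rw [finrank_single x hx]; rfl
  · rw [linearIndependent_unique_iff]; exact hx
  · intro _; exact Submodule.mem_span_singleton_self _

lemma ht_single_ge (x : Fin N → ℤ) (hx : x ≠ 0) :
    ∃ y : Fin N → ℤ, y ≠ 0 ∧ cQ y ∈ Submodule.span ℚ {cQ x} ∧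
      (ht (Submodule.span ℚ {cQ x}) : ℤ) = ∑ i, y i ^ 2 := by
  obtain ⟨v, h1, h2, h3⟩ := ht_spec (Submodule.span ℚ {cQ x})
  have hf := finrank_single x hx
  let e : Unit ≃ Fin (finrank ℚ (Submodule.span ℚ {cQ x} : Submodule ℚ (Fin N → ℚ))) :=
    Fintype.equivOfCardEq (by simp [hf])
  refine ⟨v (e ()), h1.ne_zero _, h2 _, ?_⟩
  rw [← h3, ← gd_reindex e v, ← gd_single]

end Heights
section BestApprox

variable {m : ℕ}

/-- A sequence of best approximations with the uniform exponent bound. -/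
structure BSeq (θ : Fin m → ℝ) (α : ℝ) (q : ℕ → ℕ) (X : ℕ → Fin (m + 1) → ℤ) (L : ℕ → ℝ) :
    Prop where
  q_pos : ∀ n, 1 ≤ q n
  q_mono : StrictMono q
  X_zero : ∀ n, X n 0 = q n
  L_pos : ∀ n, 0 < L n
  L_anti : ∀ n, L (n + 1) < L n
  err : ∀ n j, |(q n : ℝ) * θ j - X n j.succ| ≤ L n
  best : ∀ n (z : Fin (m + 1) → ℤ), 1 ≤ z 0 → z 0 < q (n + 1) → ∀ e : ℝ, 0 ≤ e →
    (∀ j, |(z 0 : ℝ) * θ j - z j.succ| ≤ e) → L n ≤ e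
  L_le : ∀ n, L n ≤ (q (n + 1) : ℝ) ^ (-α)

lemma exists_min_seq (ψ : ℕ → ℝ) (hpos : ∀ q, 1 ≤ q → 0 < ψ q)
    (hsmall : ∀ ε > 0, ∃ q, 1 ≤ q ∧ ψ q < ε) :
    ∃ q : ℕ → ℕ, StrictMono q ∧ (∀ n, 1 ≤ q n) ∧ (∀ n, ψ (q (n + 1)) < ψ (q n)) ∧
      ∀ n k, 1 ≤ k → k < q (n + 1) → ψ (q n) ≤ ψ k := by
  classical
  let T := {q : ℕ // 1 ≤ q ∧ ∀ k, 1 ≤ k → k ≤ q → ψ q ≤ ψ k}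
  have step : ∀ t : T, ∃ t' : T, t.1 < t'.1 ∧ ψ t'.1 < ψ t.1 ∧
      ∀ k, 1 ≤ k → k < t'.1 → ψ t.1 ≤ ψ k := by
    rintro ⟨q, h1, h2⟩
    have hex := hsmall (ψ q) (hpos q h1)
    have hs := Nat.find_spec hex
    have hmin : ∀ k, 1 ≤ k → k < Nat.find hex → ψ q ≤ ψ k := by
      intro k hk hlt
      have := Nat.find_min hex hlt
      by_contra hcon
      exact this ⟨hk, not_le.1 hcon⟩
    refine ⟨⟨Nat.find hex, hs.1, ?_⟩, ?_, hs.2, hmin⟩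
    · intro k hk hle
      rcases eq_or_lt_of_le hle with h | h
      · rw [h]
      · exact hs.2.le.trans (hmin k hk h)
    · by_contra hcon
      have := h2 _ hs.1 (not_lt.1 hcon)
      linarith [hs.2]
  choose nxt hn1 hn2 hn3 using step
  let t0 : T := ⟨1, le_rfl, fun k h1 h2 => by rw [le_antisymm h2 h1]⟩
  let s : ℕ → T := fun n => nxt^[n] t0
  have hs : ∀ n, s (n + 1) = nxt (s n) := fun n => Function.iterate_succ_apply' nxt n t0
  refine ⟨fun n => (s n).1, strictMono_nat_of_lt_succ fun n => ?_, fun n => (s n).2.1,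
    fun n => ?_, fun n => ?_⟩
  · rw [hs]; exact hn1 _
  · show ψ (s (n + 1)).1 < ψ (s n).1
    rw [hs]; exact hn2 _
  · show ∀ k, 1 ≤ k → k < (s (n + 1)).1 → ψ (s n).1 ≤ ψ k
    rw [hs]; exact hn3 _

lemma irr_coeff {θ : Fin m → ℝ} (h : TotallyIrrational θ) (c : Fin (m + 1) → ℚ)
    (hc : (c 0 : ℝ) + ∑ j, (c j.succ : ℝ) * θ j = 0) : c = 0 := by
  have := Fintype.linearIndependent_iff.1 h c (by
    rw [Fin.sum_univ_succ]
    simp only [Fin.cons_zero, Fin.cons_succ, Rat.smul_def, mul_one]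
    exact hc)
  ext i; simpa using this i

lemma BSeq.shift {θ : Fin m → ℝ} {α : ℝ} {q X L} (B : BSeq θ α q X L) (k : ℕ) :
    BSeq θ α (fun n => q (n + k)) (fun n => X (n + k)) (fun n => L (n + k)) where
  q_pos n := B.q_pos _
  q_mono := fun a b h => B.q_mono (by omega)
  X_zero n := B.X_zero _
  L_pos n := B.L_pos _
  L_anti n := by
    have := B.L_anti (n + k); rwa [add_right_comm] at this
  err n := B.err _
  best n z h1 h2 := B.best (n + k) z h1 (by rwa [add_right_comm])
  L_le n := by have := B.L_le (n + k); rwa [add_right_comm] at this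

theorem exists_bseq (hm : 1 ≤ m) (θ : Fin m → ℝ) (hirr : TotallyIrrational θ) (γ α : ℝ)
    (hα : 0 < α) (hγ : α < γ) (happ : UnifApprox θ γ) : ∃ q X L, BSeq θ α q X L := by
  classical
  let ψ : ℕ → ℝ := fun q => ‖fun j => (q : ℝ) * θ j - round ((q : ℝ) * θ j)‖
  have hψle : ∀ (q : ℕ) (z : Fin m → ℤ) (e : ℝ), 0 ≤ e →
      (∀ j, |(q : ℝ) * θ j - z j| ≤ e) → ψ q ≤ e := by
    intro q z e he h
    rw [pi_norm_le_iff_of_nonneg he]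
    intro j
    rw [Real.norm_eq_abs]
    exact (round_le _ _).trans (h j)
  have hψge : ∀ (q : ℕ) j, |(q : ℝ) * θ j - round ((q : ℝ) * θ j)| ≤ ψ q := by
    intro q j
    have := norm_le_pi_norm (fun j => (q : ℝ) * θ j - round ((q : ℝ) * θ j)) j
    simpa [Real.norm_eq_abs] using this
  have hpos : ∀ q, 1 ≤ q → 0 < ψ q := by
    intro q hq
    have h0 : 0 ≤ ψ q := norm_nonneg _
    refine lt_of_le_of_ne h0 fun h => ?_
    let j0 : Fin m := ⟨0, hm⟩
    have h1 := hψge q j0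
    rw [← h] at h1
    have h2 : (q : ℝ) * θ j0 = round ((q : ℝ) * θ j0) := by
      have := abs_nonpos_iff.1 h1; linarith
    have h3 := irr_coeff hirr (Fin.cons (-(round ((q : ℝ) * θ j0) : ℚ)) (Pi.single j0 (q : ℚ))) (by
      simp only [Fin.cons_zero, Fin.cons_succ]
      rw [Finset.sum_eq_single j0]
      · simp; linarith
      · intro b _ hb; simp [hb]
      · simp)
    have h4 := congrFun h3 j0.succ
    simp at h4
    omega
  have hrate : ∀ᶠ Q : ℝ in atTop, ∃ (q : ℕ), 1 ≤ q ∧ (q : ℝ) ≤ Q ∧ ψ q ≤ Q ^ (-γ) := by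
    filter_upwards [happ, eventually_gt_atTop 0] with Q hQ hQ0
    obtain ⟨q, a, h1, h2, h3⟩ := hQ
    lift q to ℕ using (by omega)
    refine ⟨q, by exact_mod_cast h1, by exact_mod_cast h2, ?_⟩
    exact hψle q a _ (Real.rpow_nonneg hQ0.le _) (fun j => (h3 j).le)
  have hlim : Tendsto (fun Q : ℝ => Q ^ (-γ)) atTop (nhds 0) :=
    tendsto_rpow_neg_atTop (by linarith)
  have hsmall : ∀ ε > 0, ∃ q, 1 ≤ q ∧ ψ q < ε := by
    intro ε hε
    obtain ⟨Q, ⟨q, h1, h2, h3⟩, h4⟩ := (hrate.and (hlim.eventually (gt_mem_nhds hε))).exists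
    exact ⟨q, h1, h3.trans_lt h4⟩
  obtain ⟨q, hq1, hq2, hq3, hq4⟩ := exists_min_seq ψ hpos hsmall
  have hq_top : Tendsto (fun n => (q n : ℝ)) atTop atTop :=
    tendsto_natCast_atTop_atTop.comp hq1.tendsto_atTop
  -- eventual bound
  have hev : ∀ᶠ Q : ℝ in atTop, (Q - 1 / 2) ^ (-γ) ≤ Q ^ (-α) := by
    have h1 : ∀ᶠ Q : ℝ in atTop, (2 : ℝ) ^ γ ≤ Q ^ (γ - α) :=
      (tendsto_rpow_atTop (by linarith : 0 < γ - α)).eventually (eventually_ge_atTop _)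
    filter_upwards [h1, eventually_ge_atTop 1] with Q h1 h2
    have hQ : 0 < Q := by linarith
    calc (Q - 1 / 2) ^ (-γ) ≤ (Q / 2) ^ (-γ) :=
          Real.rpow_le_rpow_of_nonpos (by linarith) (by linarith) (by linarith)
      _ = Q ^ (-γ) * 2 ^ γ := by
          rw [Real.div_rpow hQ.le (by norm_num), Real.rpow_neg (by norm_num : (0:ℝ) ≤ 2), div_inv_eq_mul]
      _ ≤ Q ^ (-γ) * Q ^ (γ - α) := by gcongr
      _ = Q ^ (-α) := by rw [← Real.rpow_add hQ]; congr 1; ring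
  have hshift : Tendsto (fun Q : ℝ => Q - 1 / 2) atTop atTop :=
    tendsto_atTop_add_const_right _ _ tendsto_id
  have hL : ∀ᶠ n in atTop, ψ (q n) ≤ (q (n + 1) : ℝ) ^ (-α) := by
    have ht : Tendsto (fun n => (q (n + 1) : ℝ)) atTop atTop :=
      hq_top.comp (tendsto_add_atTop_nat 1)
    filter_upwards [ht.eventually hev, ht.eventually (hshift.eventually hrate)] with n h1 h2
    obtain ⟨k, k1, k2, k3⟩ := h2
    refine (hq4 n k k1 ?_).trans (k3.trans h1)
    have : (k : ℝ) < q (n + 1) := by linarith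
    exact_mod_cast this
  obtain ⟨n0, hn0⟩ := eventually_atTop.1 hL
  refine ⟨fun n => q (n + n0), fun n => Fin.cons (q (n + n0) : ℤ)
    (fun j => round ((q (n + n0) : ℝ) * θ j)), fun n => ψ (q (n + n0)), ?_⟩
  refine ⟨fun n => hq2 _, fun a b h => hq1 (by omega), fun n => rfl, fun n => hpos _ (hq2 _),
    fun n => ?_, fun n j => ?_, fun n z h1 h2 e he h => ?_, fun n => ?_⟩
  · have := hq3 (n + n0); rwa [add_right_comm] at this
  · simpa using hψge (q (n + n0)) j
  · obtain ⟨k, hk⟩ : ∃ k : ℕ, z 0 = k := ⟨(z 0).toNat, by omega⟩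
    rw [hk] at h1 h2 h
    refine (hq4 (n + n0) k (by exact_mod_cast h1) ?_).trans
      (hψle k (fun j => z j.succ) e he (by exact_mod_cast h))
    rw [add_right_comm] at h2
    exact_mod_cast h2
  · have := hn0 (n + n0) (by omega); rwa [add_right_comm] at this

end BestApprox
section NonIsotropic

lemma int_key {d : ℕ} (Q q' b b' : ℤ) (a a' : Fin d → ℤ) (ε : ℝ) (hQ : 0 < Q) 
    (hiso : ∑ i, a i ^ 2 = Q * b)
    (h1 : ∀ i, |(q' : ℝ) * a i - Q * a' i| ≤ 2 * Q * ε)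
    (h2 : |(Q : ℝ) * b' - q' * b| ≤ 2 * Q * ε)
    (hsm : 4 * ((d : ℝ) + 1) * (Q * ε ^ 2) < 1) :
    (∀ i, q' * a i = Q * a' i) ∧ Q * b' = q' * b := by
  have hQr : (0 : ℝ) < Q := by exact_mod_cast hQ
  have hε2 : 0 ≤ (Q : ℝ) * ε ^ 2 := by positivity
  set K : ℤ := q' ^ 2 * b - 2 * q' * ∑ i, a i * a' i + Q * ∑ i, a' i ^ 2 with hK
  have hQK : Q * K = ∑ i, (q' * a i - Q * a' i) ^ 2 := by
    have : ∑ i, (q' * a i - Q * a' i) ^ 2 =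
        q' ^ 2 * ∑ i, a i ^ 2 - 2 * q' * Q * ∑ i, a i * a' i + Q ^ 2 * ∑ i, a' i ^ 2 := by
      simp only [Finset.mul_sum, ← Finset.sum_sub_distrib, ← Finset.sum_add_distrib]
      exact Finset.sum_congr rfl fun i _ => by ring
    rw [this, hiso, hK]; ring
  have hK0 : K = 0 := by
    have hge : 0 ≤ K := by
      have : 0 ≤ Q * K := by rw [hQK]; exact Finset.sum_nonneg fun i _ => sq_nonneg _
      exact nonneg_of_mul_nonneg_right this hQ
    have hlt : (Q : ℝ) * K < Q * 1 := by
      have e : (Q : ℝ) * K = ∑ i, ((q' : ℝ) * a i - Q * a' i) ^ 2 := by exact_mod_cast hQK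
      rw [e]
      calc ∑ i, ((q' : ℝ) * a i - Q * a' i) ^ 2 ≤ ∑ i : Fin d, (2 * Q * ε) ^ 2 :=
            Finset.sum_le_sum fun i _ => sq_le_sq' (by linarith [(abs_le.1 (h1 i)).1])
              (abs_le.1 (h1 i)).2
        _ = Q * (4 * d * (Q * ε ^ 2)) := by simp; ring
        _ < Q * 1 := by
            apply mul_lt_mul_of_pos_left _ hQr
            nlinarith
    have : (K : ℝ) < 1 := lt_of_mul_lt_mul_left hlt hQr.le
    have : K < 1 := by exact_mod_cast this
    omega
  have hA : ∀ i, q' * a i = Q * a' i := by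
    rw [hK0, mul_zero] at hQK
    have := (Finset.sum_eq_zero_iff_of_nonneg (fun i _ => sq_nonneg _)).1 hQK.symm
    intro i
    have := this i (Finset.mem_univ i)
    have := pow_eq_zero_iff (two_ne_zero) |>.1 this
    linarith
  refine ⟨hA, ?_⟩
  have hb : q' ^ 2 * b = Q * ∑ i, a' i ^ 2 := by
    apply mul_left_cancel₀ hQ.ne'
    calc Q * (q' ^ 2 * b) = q' ^ 2 * (Q * b) := by ring
      _ = ∑ i, (q' * a i) ^ 2 := by
        rw [← hiso, Finset.mul_sum]; exact Finset.sum_congr rfl fun i _ => by ring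
      _ = ∑ i, (Q * a' i) ^ 2 := by simp only [hA]
      _ = Q * (Q * ∑ i, a' i ^ 2) := by
        rw [← mul_assoc, Finset.mul_sum]; exact Finset.sum_congr rfl fun i _ => by ring
  set R : ℤ := Q * b' ^ 2 - 2 * q' * b * b' + b * ∑ i, a' i ^ 2 with hR
  have hQR : Q * R = (Q * b' - q' * b) ^ 2 := by
    calc Q * R = Q ^ 2 * b' ^ 2 - 2 * Q * q' * b * b' + b * (Q * ∑ i, a' i ^ 2) := by rw [hR]; ring
      _ = _ := by rw [← hb]; ring
  have hR0 : R = 0 := by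
    have hge : 0 ≤ R := by
      have : 0 ≤ Q * R := by rw [hQR]; exact sq_nonneg _
      exact nonneg_of_mul_nonneg_right this hQ
    have hlt : (Q : ℝ) * R < Q * 1 := by
      have e : (Q : ℝ) * R = ((Q : ℝ) * b' - q' * b) ^ 2 := by exact_mod_cast hQR
      rw [e]
      calc ((Q : ℝ) * b' - q' * b) ^ 2 ≤ (2 * Q * ε) ^ 2 :=
            sq_le_sq' (by linarith [(abs_le.1 h2).1]) (abs_le.1 h2).2
        _ = Q * (4 * (Q * ε ^ 2)) := by ring
        _ < Q * 1 := by
            apply mul_lt_mul_of_pos_left _ hQr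
            have : (0 : ℝ) ≤ d := by positivity
            nlinarith
    have : (R : ℝ) < 1 := lt_of_mul_lt_mul_left hlt hQr.le
    have : R < 1 := by exact_mod_cast this
    omega
  rw [hR0, mul_zero] at hQR
  have := pow_eq_zero_iff (two_ne_zero) |>.1 hQR.symm
  linarith

namespace BSeq

variable {m : ℕ} {θ : Fin m → ℝ} {α : ℝ} {q : ℕ → ℕ} {X : ℕ → Fin (m + 1) → ℤ} {L : ℕ → ℝ}

lemma prim (B : BSeq θ α q X L) (n : ℕ) (y : Fin (m + 1) → ℤ) (hy : y ≠ 0)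
    (hmem : cQ y ∈ Submodule.span ℚ {cQ (X n)}) : (q n : ℤ) ≤ |y 0| := by
  obtain ⟨r, hr⟩ := Submodule.mem_span_singleton.1 hmem
  have hyi : ∀ i, (y i : ℚ) = r * X n i := fun i => by
    have := congrFun hr i
    simpa [cQ_apply] using this.symm
  have hyr : ∀ i, (y i : ℝ) = r * X n i := fun i => by exact_mod_cast hyi i
  have hr0 : r ≠ 0 := by
    rintro rfl
    apply hy; ext i; have := hyi i; simpa using this
  by_contra hcon
  rw [not_le] at hcon
  have hq := B.q_pos n
  have hqr : (0 : ℝ) < q n := by exact_mod_cast hq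
  have hy0 : (y 0 : ℝ) = r * q n := by rw [hyr, B.X_zero]; simp
  have hrr : (r : ℝ) ≠ 0 := by exact_mod_cast hr0
  have hy00 : y 0 ≠ 0 := by
    have : (y 0 : ℝ) ≠ 0 := by rw [hy0]; exact mul_ne_zero hrr hqr.ne'
    exact_mod_cast this
  have hrlt : |(r : ℝ)| < 1 := by
    have h1 : |(y 0 : ℝ)| < q n := by exact_mod_cast hcon
    rw [hy0, abs_mul, abs_of_pos hqr] at h1
    by_contra h; nlinarith
  -- sign
  have hsgn : ∃ s : ℤ, (s = 1 ∨ s = -1) ∧ s * y 0 = |y 0| := by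
    rcases abs_choice (y 0) with h | h
    · exact ⟨1, Or.inl rfl, by rw [h]; ring⟩
    · exact ⟨-1, Or.inr rfl, by rw [h]; ring⟩
  obtain ⟨s, hs, hs'⟩ := hsgn
  have hsabs : |(s : ℝ)| = 1 := by rcases hs with rfl | rfl <;> simp
  have hpos : 1 ≤ |y 0| := Int.one_le_abs hy00
  have hb := B.best n (fun i => s * y i) (by rw [hs']; exact hpos)
    (by
      rw [hs']
      have := B.q_mono (Nat.lt_succ_self n)
      have : (q n : ℤ) < q (n + 1) := by exact_mod_cast this
      omega) (|(r : ℝ)| * L n) (mul_nonneg (abs_nonneg _) (B.L_pos n).le) (by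
      intro j
      have e : (((s * y 0 : ℤ) : ℝ) * θ j - ((s * y j.succ : ℤ) : ℝ)) =
        s * (r * ((q n : ℝ) * θ j - X n j.succ)) := by
        push_cast; rw [hy0, hyr j.succ]; ring
      rw [e, abs_mul, hsabs, one_mul, abs_mul]
      exact mul_le_mul_of_nonneg_left (B.err n j) (abs_nonneg _))
  have := B.L_pos n
  nlinarith

lemma X_ne (B : BSeq θ α q X L) (n : ℕ) : X n ≠ 0 := by
  intro h
  have h1 := B.X_zero n
  have h2 := B.q_pos n
  rw [h] at h1; simp at h1; omega

lemma nonprop (B : BSeq θ α q X L) (n : ℕ) : cQ (X n) ∉ Submodule.span ℚ {cQ (X (n + 1))} := by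
  intro h
  have := B.prim (n + 1) (X n) (B.X_ne n) h
  rw [B.X_zero, abs_of_nonneg (by positivity)] at this
  have h2 := B.q_mono (Nat.lt_succ_self n)
  simp only [Nat.succ_eq_add_one] at h2
  omega

lemma L_le_one (B : BSeq θ α q X L) (hα : 0 < α) (n : ℕ) : L n ≤ 1 := by
  refine (B.L_le n).trans ?_
  apply Real.rpow_le_one_of_one_le_of_nonpos
  · exact_mod_cast B.q_pos _
  · linarith

lemma tendsto_q (B : BSeq θ α q X L) : Tendsto (fun n => (q n : ℝ)) atTop atTop :=
  tendsto_natCast_atTop_atTop.comp B.q_mono.tendsto_atTop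

end BSeq

theorem x_succ_bound {d : ℕ} (ξ : Fin d → ℝ) {α : ℝ} {q : ℕ → ℕ}
    {X : ℕ → Fin (d + 1 + 1) → ℤ} {L : ℕ → ℝ}
    (B : BSeq (Fin.snoc ξ (∑ i, ξ i ^ 2)) α q X L) (hα : 1 / 2 < α) :
    ∃ K : ℝ, 0 ≤ K ∧ ∃ n0, ∀ n, n0 ≤ n →
      Real.log (q (n + 1)) ≤ Real.log (q n) / α + K := by
  have hα0 : 0 < α := by linarith
  -- coordinates
  have eξ : ∀ n i, |(q n : ℝ) * ξ i - X n (Fin.castSucc i).succ| ≤ L n := by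
    intro n i
    have := B.err n (Fin.castSucc i)
    rwa [Fin.snoc_castSucc (α := fun _ => ℝ)] at this
  have es : ∀ n, |(q n : ℝ) * (∑ i, ξ i ^ 2) - X n (Fin.last d).succ| ≤ L n := by
    intro n
    have := B.err n (Fin.last d)
    rwa [Fin.snoc_last (α := fun _ => ℝ)] at this
  -- smallness
  have hsm : ∀ᶠ n in atTop, 4 * ((d : ℝ) + 1) * ((q (n + 1) : ℝ) * (L n) ^ 2) < 1 := by
    have hlim : Tendsto (fun Q : ℝ => 4 * ((d : ℝ) + 1) * Q ^ (-(2 * α - 1))) atTop (nhds 0) := by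
      have := (tendsto_rpow_neg_atTop (by linarith : 0 < 2 * α - 1)).const_mul (4 * ((d : ℝ) + 1))
      simpa using this
    have hq1 : Tendsto (fun n => (q (n + 1) : ℝ)) atTop atTop :=
      B.tendsto_q.comp (tendsto_add_atTop_nat 1)
    filter_upwards [hq1.eventually (hlim.eventually (gt_mem_nhds one_pos))] with n hn
    refine lt_of_le_of_lt ?_ hn
    apply mul_le_mul_of_nonneg_left _ (by positivity)
    have hq0 : (0 : ℝ) < q (n + 1) := by exact_mod_cast B.q_pos _
    calc (q (n + 1) : ℝ) * L n ^ 2 ≤ (q (n + 1) : ℝ) * ((q (n + 1) : ℝ) ^ (-α)) ^ 2 := by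
          apply mul_le_mul_of_nonneg_left _ hq0.le
          exact pow_le_pow_left₀ (B.L_pos n).le (B.L_le n) 2
      _ = (q (n + 1) : ℝ) ^ (-(2 * α - 1)) := by
          rw [← Real.rpow_natCast, ← Real.rpow_mul hq0.le]
          nth_rewrite 1 [← Real.rpow_one (q (n + 1) : ℝ)]
          rw [← Real.rpow_add hq0]
          congr 1; push_cast; ring
  obtain ⟨n1, hn1⟩ := eventually_atTop.1 hsm
  -- non-isotropy
  have hiso : ∀ n, n1 ≤ n → ∑ i : Fin d, X (n + 1) (Fin.castSucc i).succ ^ 2 ≠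
      (q (n + 1) : ℤ) * X (n + 1) (Fin.last d).succ := by
    intro n hn h
    have hqn := B.q_pos (n + 1)
    have hlt : q n < q (n + 1) := B.q_mono (Nat.lt_succ_self n)
    have hltr : (q n : ℝ) ≤ q (n + 1) := by exact_mod_cast hlt.le
    have hLL := (B.L_anti n).le
    have hq0 : (0 : ℝ) ≤ q n := by positivity
    have hL0 := B.L_pos n
    have gen : ∀ t u v : ℝ, |(q (n + 1) : ℝ) * t - u| ≤ L (n + 1) → |(q n : ℝ) * t - v| ≤ L n →
        |(q n : ℝ) * u - q (n + 1) * v| ≤ 2 * (q (n + 1) : ℝ) * L n := by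
      intro t u v h1 h2
      have e : (q n : ℝ) * u - q (n + 1) * v = q (n + 1) * ((q n : ℝ) * t - v) -
        q n * ((q (n + 1) : ℝ) * t - u) := by ring
      rw [e]
      refine (abs_sub _ _).trans ?_
      rw [abs_mul, abs_mul, abs_of_nonneg hq0, abs_of_nonneg (hq0.trans hltr)]
      have a1 : (q (n + 1) : ℝ) * |(q n : ℝ) * t - v| ≤ q (n + 1) * L n :=
        mul_le_mul_of_nonneg_left h2 (hq0.trans hltr)
      have a2 : (q n : ℝ) * |(q (n + 1) : ℝ) * t - u| ≤ q (n + 1) * L n :=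
        mul_le_mul hltr (h1.trans hLL) (abs_nonneg _) (hq0.trans hltr)
      linarith
    have key := int_key (q (n + 1) : ℤ) (q n : ℤ) (X (n + 1) (Fin.last d).succ)
      (X n (Fin.last d).succ) (fun i => X (n + 1) (Fin.castSucc i).succ)
      (fun i => X n (Fin.castSucc i).succ) (L n) (by exact_mod_cast hqn) h
      (fun i => by
        have := gen _ _ _ (eξ (n + 1) i) (eξ n i)
        exact_mod_cast this)
      (by
        have := gen _ _ _ (es (n + 1)) (es n)
        rw [abs_sub_comm] at this
        exact_mod_cast this)
      (by exact_mod_cast hn1 n hn)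
    obtain ⟨k1, k2⟩ := key
    apply B.nonprop n
    rw [Submodule.mem_span_singleton]
    refine ⟨(q n : ℚ) / q (n + 1), ?_⟩
    have hQ : (q (n + 1) : ℚ) ≠ 0 := by
      have : q (n + 1) ≠ 0 := by omega
      exact_mod_cast this
    ext i
    rw [Pi.smul_apply, smul_eq_mul, cQ_apply, cQ_apply, div_mul_eq_mul_div, div_eq_iff hQ]
    refine Fin.cases ?_ (fun j => ?_) i
    · rw [B.X_zero, B.X_zero]; simp
    · refine Fin.lastCases ?_ (fun j => ?_) j
      · have : (q (n + 1) : ℚ) * X n (Fin.last d).succ = q n * X (n + 1) (Fin.last d).succ := by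
          exact_mod_cast k2
        linarith
      · have : (q n : ℚ) * X (n + 1) (Fin.castSucc j).succ =
          q (n + 1) * X n (Fin.castSucc j).succ := by exact_mod_cast k1 j
        linarith
  set M : ℝ := 2 * ∑ i, |ξ i| + d + 1 with hM
  have hMpos : 1 ≤ M := by
    have : 0 ≤ ∑ i, |ξ i| := Finset.sum_nonneg fun i _ => abs_nonneg _
    have : (0 : ℝ) ≤ d := by positivity
    linarith
  refine ⟨Real.log M / α, div_nonneg (Real.log_nonneg hMpos) hα0.le, n1 + 1, fun n hn => ?_⟩
  obtain ⟨n, rfl⟩ : ∃ k, n = k + 1 := ⟨n - 1, by omega⟩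
  have hne := hiso n (by omega)
  set N := n + 1 with hN
  have hq1 : (1 : ℝ) ≤ q N := by exact_mod_cast B.q_pos N
  have hL0 := B.L_pos N
  have hL1 := B.L_le_one hα0 N
  have hF : 1 ≤ |((∑ i : Fin d, X N (Fin.castSucc i).succ ^ 2 -
      (q N : ℤ) * X N (Fin.last d).succ : ℤ) : ℝ)| := by
    have := Int.one_le_abs (sub_ne_zero.2 hne)
    exact_mod_cast this
  have hF2 : |((∑ i : Fin d, X N (Fin.castSucc i).succ ^ 2 -
      (q N : ℤ) * X N (Fin.last d).succ : ℤ) : ℝ)| ≤ q N * L N * M := by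
    push_cast
    have e : (∑ i : Fin d, (X N (Fin.castSucc i).succ : ℝ) ^ 2 -
      (q N : ℝ) * X N (Fin.last d).succ) =
      (∑ i : Fin d, ((X N (Fin.castSucc i).succ : ℝ) ^ 2 - ((q N : ℝ) * ξ i) ^ 2)) +
        (q N : ℝ) * ((q N : ℝ) * (∑ i, ξ i ^ 2) - X N (Fin.last d).succ) := by
      rw [Finset.sum_sub_distrib]
      have : ∑ i, ((q N : ℝ) * ξ i) ^ 2 = (q N : ℝ) * ((q N : ℝ) * ∑ i, ξ i ^ 2) := by
        rw [← mul_assoc, Finset.mul_sum]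
        exact Finset.sum_congr rfl fun i _ => by ring
      rw [this]; ring
    rw [e]
    refine (abs_add_le _ _).trans ?_
    have t1 : ∀ i : Fin d, |(X N (Fin.castSucc i).succ : ℝ) ^ 2 - ((q N : ℝ) * ξ i) ^ 2| ≤
        q N * L N * (2 * |ξ i| + 1) := by
      intro i
      have h1 := eξ N i
      set a : ℝ := ((X N (Fin.castSucc i).succ : ℤ) : ℝ)
      have e1 : a ^ 2 - ((q N : ℝ) * ξ i) ^ 2 =
        ((q N : ℝ) * ξ i - a) * (((q N : ℝ) * ξ i - a) - 2 * (q N * ξ i)) := by ring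
      rw [e1, abs_mul]
      have h2 : |((q N : ℝ) * ξ i - a) - 2 * (q N * ξ i)| ≤ q N * (2 * |ξ i| + 1) := by
        refine (abs_sub _ _).trans ?_
        rw [abs_mul, abs_mul, abs_of_pos (by norm_num : (0:ℝ) < 2),
          abs_of_nonneg (by linarith : (0:ℝ) ≤ q N)]
        linarith
      calc _ ≤ L N * (q N * (2 * |ξ i| + 1)) :=
            mul_le_mul h1 h2 (abs_nonneg _) hL0.le
        _ = _ := by ring
    have t2 : |∑ i : Fin d, ((X N (Fin.castSucc i).succ : ℝ) ^ 2 - ((q N : ℝ) * ξ i) ^ 2)| ≤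
        q N * L N * (2 * ∑ i, |ξ i| + d) := by
      refine (Finset.abs_sum_le_sum_abs _ _).trans ((Finset.sum_le_sum fun i _ => t1 i).trans
        (le_of_eq ?_))
      rw [← Finset.mul_sum, Finset.sum_add_distrib, ← Finset.mul_sum]; simp
    have t3 : |(q N : ℝ) * ((q N : ℝ) * (∑ i, ξ i ^ 2) - X N (Fin.last d).succ)| ≤ q N * L N := by
      rw [abs_mul, abs_of_nonneg (by linarith : (0:ℝ) ≤ q N)]
      exact mul_le_mul_of_nonneg_left (es N) (by linarith)
    rw [hM]
    linarith
  have hq2 : (0 : ℝ) < q (N + 1) := by exact_mod_cast B.q_pos (N + 1)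
  have hfin : (q (N + 1) : ℝ) ^ α ≤ q N * M := by
    have h1 : 1 ≤ (q N : ℝ) * (q (N + 1) : ℝ) ^ (-α) * M := by
      refine hF.trans (hF2.trans ?_)
      have := B.L_le N
      gcongr
    rw [Real.rpow_neg hq2.le] at h1
    have hp : 0 < (q (N + 1) : ℝ) ^ α := Real.rpow_pos_of_pos hq2 _
    have h2 := mul_le_mul_of_nonneg_left h1 hp.le
    have e : (q (N + 1) : ℝ) ^ α * ((q N : ℝ) * ((q (N + 1) : ℝ) ^ α)⁻¹ * M) = q N * M := by
      field_simp
    linarith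
  have hlog := Real.log_le_log (Real.rpow_pos_of_pos hq2 _) hfin
  rw [Real.log_rpow hq2, Real.log_mul (by linarith) (by linarith)] at hlog
  rw [← add_div, le_div_iff₀ hα0]
  linarith

end NonIsotropic
section Assembly

open Module

namespace BSeq

variable {m : ℕ} {θ : Fin m → ℝ} {α : ℝ} {q : ℕ → ℕ} {X : ℕ → Fin (m + 1) → ℤ} {L : ℕ → ℝ}

/-- Span of consecutive best approximations. -/
def spn (X : ℕ → Fin (m + 1) → ℤ) (a b : ℕ) : Submodule ℚ (Fin (m + 1) → ℚ) :=
  Submodule.span ℚ ((fun n => cQ (X n)) '' Set.Icc a b)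

lemma mem_spn (X : ℕ → Fin (m + 1) → ℤ) {a b n : ℕ} (h1 : a ≤ n) (h2 : n ≤ b) :
    cQ (X n) ∈ spn X a b := Submodule.subset_span ⟨n, ⟨h1, h2⟩, rfl⟩

lemma spn_mono (X : ℕ → Fin (m + 1) → ℤ) {a a' b' b : ℕ} (h1 : a ≤ a') (h2 : b' ≤ b) :
    spn X a' b' ≤ spn X a b :=
  Submodule.span_mono (Set.image_mono (Set.Icc_subset_Icc h1 h2))

lemma spn_self (X : ℕ → Fin (m + 1) → ℤ) (a : ℕ) :
    spn X a a = Submodule.span ℚ {cQ (X a)} := by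
  simp [spn]

lemma spn_right (X : ℕ → Fin (m + 1) → ℤ) {a b : ℕ} (h : a ≤ b) :
    spn X a (b + 1) = spn X a b ⊔ Submodule.span ℚ {cQ (X (b + 1))} := by
  apply le_antisymm
  · unfold spn
    rw [Submodule.span_le]
    rintro _ ⟨n, ⟨h1, h2⟩, rfl⟩
    rcases Nat.lt_or_ge b n with h3 | h3
    · have : n = b + 1 := by omega
      subst this
      exact (le_sup_right : _ ≤ spn X a b ⊔ _) (Submodule.mem_span_singleton_self _)
    · exact (le_sup_left : spn X a b ≤ _) (mem_spn X h1 h3)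
  · refine sup_le (spn_mono X le_rfl (by omega)) ?_
    rw [Submodule.span_singleton_le_iff_mem]
    exact mem_spn X (by omega) le_rfl

lemma spn_left (X : ℕ → Fin (m + 1) → ℤ) {a b : ℕ} (h : a + 1 ≤ b) :
    spn X a b = spn X (a + 1) b ⊔ Submodule.span ℚ {cQ (X a)} := by
  apply le_antisymm
  · unfold spn
    rw [Submodule.span_le]
    rintro _ ⟨n, ⟨h1, h2⟩, rfl⟩
    rcases Nat.lt_or_ge a n with h3 | h3
    · exact (le_sup_left : spn X (a + 1) b ≤ _) (mem_spn X h3 h2)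
    · have : n = a := by omega
      subst this
      exact (le_sup_right : _ ≤ spn X (n + 1) b ⊔ _) (Submodule.mem_span_singleton_self _)
  · refine sup_le (spn_mono X (by omega) le_rfl) ?_
    rw [Submodule.span_singleton_le_iff_mem]
    exact mem_spn X le_rfl (by omega)

lemma finrank_sup_single (W : Submodule ℚ (Fin (m + 1) → ℚ)) (y : Fin (m + 1) → ℚ) :
    finrank ℚ (W ⊔ Submodule.span ℚ {y} : Submodule ℚ (Fin (m + 1) → ℚ)) ≤ finrank ℚ W + 1 := by
  have h1 := Submodule.finrank_add_le_finrank_add_finrank W (Submodule.span ℚ {y})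
  have h2 : finrank ℚ (Submodule.span ℚ {y} : Submodule ℚ (Fin (m + 1) → ℚ)) ≤ 1 := by
    have := finrank_span_le_card (R := ℚ) ({y} : Set (Fin (m + 1) → ℚ))
    simpa using this
  omega

lemma finrank_lt_of_not_mem (W : Submodule ℚ (Fin (m + 1) → ℚ)) (y : Fin (m + 1) → ℚ)
    (hy : y ∉ W) :
    finrank ℚ W < finrank ℚ (W ⊔ Submodule.span ℚ {y} : Submodule ℚ (Fin (m + 1) → ℚ)) := by
  apply Submodule.finrank_lt_finrank_of_lt
  refine lt_of_le_of_ne le_sup_left fun h => hy ?_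
  rw [h]
  exact (le_sup_right : _ ≤ W ⊔ Submodule.span ℚ {y}) (Submodule.mem_span_singleton_self _)

lemma span_top (B : BSeq θ α q X L) (hα : 0 < α) (hirr : TotallyIrrational θ) (a : ℕ)
    (W : Submodule ℚ (Fin (m + 1) → ℚ)) (hW : ∀ n, a ≤ n → cQ (X n) ∈ W) : W = ⊤ := by
  by_contra hne
  obtain ⟨f, hf0, hf⟩ := Submodule.exists_le_ker_of_lt_top W (lt_top_iff_ne_top.2 hne)
  let c : Fin (m + 1) → ℚ := fun i => f (Pi.single i 1)
  have hfc : ∀ w : Fin (m + 1) → ℚ, f w = ∑ i, w i * c i := by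
    intro w
    conv_lhs => rw [← Finset.univ_sum_single w]
    rw [map_sum]
    refine Finset.sum_congr rfl fun i _ => ?_
    have : (Pi.single i (w i) : Fin (m + 1) → ℚ) = w i • Pi.single i 1 := by
      rw [← Pi.single_smul]; simp
    rw [this, map_smul, smul_eq_mul]
  set Λ : ℝ := (c 0 : ℝ) + ∑ j, (c j.succ : ℝ) * θ j with hΛ
  set K : ℝ := ∑ j : Fin m, |(c j.succ : ℝ)| with hK
  have hbound : ∀ n, a ≤ n → (q n : ℝ) * |Λ| ≤ K := by
    intro n hn
    have h1 : f (cQ (X n)) = 0 := hf (hW n hn)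
    rw [hfc, Fin.sum_univ_succ] at h1
    simp only [cQ_apply, B.X_zero] at h1
    have h2 : (q n : ℝ) * c 0 + ∑ j : Fin m, (X n j.succ : ℝ) * c j.succ = 0 := by
      exact_mod_cast h1
    have h3 : (q n : ℝ) * Λ = ∑ j : Fin m, (c j.succ : ℝ) * ((q n : ℝ) * θ j - X n j.succ) := by
      have : ∑ j : Fin m, (c j.succ : ℝ) * ((q n : ℝ) * θ j - X n j.succ) =
        (q n : ℝ) * ∑ j : Fin m, (c j.succ : ℝ) * θ j - ∑ j : Fin m, (X n j.succ : ℝ) * c j.succ := by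
        rw [Finset.mul_sum, ← Finset.sum_sub_distrib]
        exact Finset.sum_congr rfl fun i _ => by ring
      rw [this, hΛ]; linarith
    have h4 : (q n : ℝ) * |Λ| = |(q n : ℝ) * Λ| := by
      rw [abs_mul, abs_of_nonneg (by positivity : (0:ℝ) ≤ q n)]
    rw [h4, h3]
    refine (Finset.abs_sum_le_sum_abs _ _).trans (Finset.sum_le_sum fun j _ => ?_)
    rw [abs_mul]
    have := (B.err n j).trans (B.L_le_one hα n)
    nlinarith [abs_nonneg (c j.succ : ℝ)]
  have hΛ0 : Λ = 0 := by
    by_contra h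
    have hpos : 0 < |Λ| := abs_pos.2 h
    have ht := B.tendsto_q.eventually (eventually_gt_atTop (K / |Λ|))
    obtain ⟨n, h1, h2⟩ := (ht.and (eventually_ge_atTop a)).exists
    rw [div_lt_iff₀ hpos] at h1
    linarith [hbound n h2]
  have hc0 := irr_coeff hirr c hΛ0
  apply hf0
  refine LinearMap.ext fun w => ?_
  rw [hfc, hc0]; simp

lemma exists_full (B : BSeq θ α q X L) (hα : 0 < α) (hirr : TotallyIrrational θ) (a : ℕ) :
    ∃ b, a ≤ b ∧ finrank ℚ (spn X a b) = m + 1 := by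
  have hle : ∀ b, finrank ℚ (spn X a b) ≤ m + 1 := fun b => by
    have := Submodule.finrank_le (spn X a b)
    simpa using this
  obtain ⟨b, hb⟩ : ∃ b, ∀ b', finrank ℚ (spn X a b') ≤ finrank ℚ (spn X a b) := by
    have hfin : (Set.range fun b => finrank ℚ (spn X a b)).Finite :=
      (Set.finite_Iic (m + 1)).subset (by rintro _ ⟨b, rfl⟩; exact hle b)
    obtain ⟨_, ⟨b, rfl⟩, h⟩ := hfin.exists_maximalFor id _ ⟨_, ⟨0, rfl⟩⟩
    refine ⟨b, fun b' => ?_⟩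
    rcases le_total (finrank ℚ (spn X a b')) (finrank ℚ (spn X a b)) with h1 | h1
    · exact h1
    · exact h ⟨b', rfl⟩ h1
  have hb' : ∀ b', finrank ℚ (spn X a b') ≤ finrank ℚ (spn X a (max a b)) := fun b' =>
    (hb b').trans (Submodule.finrank_mono (spn_mono X le_rfl (le_max_right _ _)))
  refine ⟨max a b, le_max_left _ _, ?_⟩
  have : spn X a (max a b) = ⊤ := by
    apply B.span_top hα hirr a
    intro n hn
    have h1 : spn X a (max a b) = spn X a (max n (max a b)) := by
      apply Submodule.eq_of_le_of_finrank_le (spn_mono X le_rfl (le_max_right _ _))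
      exact hb' _
    rw [h1]
    exact mem_spn X hn (le_max_left _ _)
  rw [this]; simp

lemma sum_sq_le (B : BSeq θ α q X L) (hα : 0 < α) (n : ℕ) :
    ∑ i, (X n i : ℝ) ^ 2 ≤ ((m + 1 : ℕ) : ℝ) * (‖θ‖ + 1) ^ 2 * (q n : ℝ) ^ 2 := by
  have hq : (1 : ℝ) ≤ q n := by exact_mod_cast B.q_pos n
  have : ∀ i, |(X n i : ℝ)| ≤ (‖θ‖ + 1) * q n := by
    intro i
    refine Fin.cases ?_ (fun j => ?_) i
    · rw [B.X_zero]
      have := norm_nonneg θ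
      simp only [Int.cast_natCast, Nat.abs_cast]
      nlinarith
    · have h1 := (B.err n j).trans (B.L_le_one hα n)
      have h2 : |θ j| ≤ ‖θ‖ := by simpa using norm_le_pi_norm θ j
      have h3 : |(X n j.succ : ℝ)| ≤ |(q n : ℝ) * θ j| + |(q n : ℝ) * θ j - X n j.succ| := by
        have e : (X n j.succ : ℝ) = (q n : ℝ) * θ j - ((q n : ℝ) * θ j - X n j.succ) := by ring
        conv_lhs => rw [e]
        exact abs_sub _ _
      rw [abs_mul, abs_of_nonneg (by linarith : (0:ℝ) ≤ q n)] at h3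
      nlinarith
  calc ∑ i, (X n i : ℝ) ^ 2 ≤ ∑ i : Fin (m + 1), ((‖θ‖ + 1) * q n) ^ 2 :=
        Finset.sum_le_sum fun i _ => sq_le_sq' (by linarith [(abs_le.1 (this i)).1])
          (abs_le.1 (this i)).2
    _ = _ := by simp; ring

lemma diff_sq_le (B : BSeq θ α q X L) (n : ℕ) :
    ∑ i, ((X n i : ℝ) - ((q n : ℝ) / q (n + 1)) * X (n + 1) i) ^ 2 ≤
      ((m + 1 : ℕ) : ℝ) * 4 * ((q (n + 1) : ℝ) ^ (-α)) ^ 2 := by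
  have hq : (1 : ℝ) ≤ q n := by exact_mod_cast B.q_pos n
  have hq' : (0 : ℝ) < q (n + 1) := by exact_mod_cast B.q_pos (n + 1)
  have hlt : (q n : ℝ) ≤ q (n + 1) := by exact_mod_cast (B.q_mono (Nat.lt_succ_self n)).le
  have hL := B.L_le n
  have hL0 := B.L_pos n
  set t : ℝ := (q n : ℝ) / q (n + 1) with ht
  have ht0 : 0 ≤ t := by positivity
  have ht1 : t ≤ 1 := by rw [ht, div_le_one hq']; exact hlt
  have htq : t * q (n + 1) = q n := by rw [ht]; field_simp
  have : ∀ i, |(X n i : ℝ) - t * X (n + 1) i| ≤ 2 * (q (n + 1) : ℝ) ^ (-α) := by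
    intro i
    refine Fin.cases ?_ (fun j => ?_) i
    · rw [B.X_zero, B.X_zero]
      simp only [Int.cast_natCast, htq, sub_self, abs_zero]
      linarith
    · have e : (X n j.succ : ℝ) - t * X (n + 1) j.succ =
        t * ((q (n + 1) : ℝ) * θ j - X (n + 1) j.succ) - ((q n : ℝ) * θ j - X n j.succ) := by
        rw [← htq]; ring
      rw [e]
      refine (abs_sub _ _).trans ?_
      rw [abs_mul, abs_of_nonneg ht0]
      have h1 := B.err n j
      have h2 := (B.err (n + 1) j).trans (B.L_anti n).le
      have h3 := abs_nonneg ((q (n + 1) : ℝ) * θ j - X (n + 1) j.succ)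
      nlinarith
  calc ∑ i, ((X n i : ℝ) - t * X (n + 1) i) ^ 2 ≤
      ∑ i : Fin (m + 1), (2 * (q (n + 1) : ℝ) ^ (-α)) ^ 2 :=
        Finset.sum_le_sum fun i _ => sq_le_sq' (by linarith [(abs_le.1 (this i)).1])
          (abs_le.1 (this i)).2
    _ = _ := by simp; ring

/-- Logarithmic height of the spans. -/
noncomputable def hh (X : ℕ → Fin (m + 1) → ℤ) (a b : ℕ) : ℝ :=
  Real.log (ht (spn X a b)) / 2

lemma htpos (W : Submodule ℚ (Fin (m + 1) → ℚ)) : (0 : ℝ) < ht W := by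
  exact_mod_cast ht_pos W

theorem hsys (B : BSeq θ α q X L) (hα : 0 < α) (hα1 : α < 1) (hirr : TotallyIrrational θ)
    (K : ℝ) (hK0 : 0 ≤ K)
    (hK : ∀ n, Real.log (q (n + 1)) ≤ Real.log (q n) / α + K) :
    ∃ C, HSys (m + 1) α C (fun a b => finrank ℚ (spn X a b)) (hh X)
      (fun n => Real.log (q n)) := by
  set C1 : ℝ := Real.log (((m + 1 : ℕ) : ℝ) * (‖θ‖ + 1) ^ 2) / 2 with hC1
  set C2 : ℝ := Real.log (((m + 1 : ℕ) : ℝ) * 4) / 2 with hC2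
  have hm1 : (1 : ℝ) ≤ ((m + 1 : ℕ) : ℝ) := by push_cast; linarith [(Nat.cast_nonneg m : (0:ℝ) ≤ m)]
  have hC10 : 0 ≤ C1 := by
    apply div_nonneg (Real.log_nonneg _) (by norm_num)
    nlinarith [norm_nonneg θ]
  have hC20 : 0 ≤ C2 := by
    apply div_nonneg (Real.log_nonneg _) (by norm_num)
    linarith
  have hqpos : ∀ n, (0 : ℝ) < q n := fun n => by exact_mod_cast B.q_pos n
  have h_self_le : ∀ a, hh X a a ≤ Real.log (q a) + C1 := by
    intro a
    have h1 : (ht (spn X a a) : ℝ) ≤ ∑ i, (X a i : ℝ) ^ 2 := by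
      rw [spn_self]
      exact_mod_cast ht_single_le (X a) (B.X_ne a)
    have h2 := Real.log_le_log (htpos _) (h1.trans (B.sum_sq_le hα a))
    rw [Real.log_mul (by have := norm_nonneg θ; positivity) (by have := hqpos a; positivity),
      Real.log_pow] at h2
    unfold hh
    rw [hC1]; push_cast at h2 ⊢; linarith
  have h_left : ∀ j b, j + 1 ≤ b → finrank ℚ (spn X j b) = finrank ℚ (spn X (j + 1) b) + 1 →
      hh X j b ≤ hh X (j + 1) b - α * Real.log (q (j + 1)) + C2 := by
    intro j b hjb hD
    have hnot : cQ (X j) ∉ spn X (j + 1) b := by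
      intro hmem
      have : spn X j b = spn X (j + 1) b := by
        rw [spn_left X hjb]
        exact sup_eq_left.2 ((Submodule.span_singleton_le_iff_mem _ _).2 hmem)
      rw [this] at hD; omega
    have h1 := ht_adjoin (spn X (j + 1) b) (X (j + 1)) (X j) (mem_spn X le_rfl hjb) hnot
      ((q j : ℝ) / q (j + 1))
    rw [← spn_left X hjb] at h1
    have h2 : (ht (spn X j b) : ℝ) ≤ ht (spn X (j + 1) b) *
        (((m + 1 : ℕ) : ℝ) * 4 * ((q (j + 1) : ℝ) ^ (-α)) ^ 2) :=
      h1.trans (mul_le_mul_of_nonneg_left (B.diff_sq_le j) (htpos _).le)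
    have hr : 0 < (q (j + 1) : ℝ) ^ (-α) := Real.rpow_pos_of_pos (hqpos _) _
    have h3 := Real.log_le_log (htpos _) h2
    rw [Real.log_mul (htpos _).ne' (by positivity), Real.log_mul (by positivity) (by positivity),
      Real.log_pow, Real.log_rpow (hqpos _)] at h3
    unfold hh
    rw [hC2]; push_cast at h3 ⊢; linarith
  have d_succ : ∀ a, finrank ℚ (spn X a (a + 1)) = 2 := by
    intro a
    have h1 := finrank_sup_single (spn X (a + 1) (a + 1)) (cQ (X a))
    have h2 := finrank_lt_of_not_mem (spn X (a + 1) (a + 1)) (cQ (X a)) (by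
      rw [spn_self]; exact B.nonprop a)
    rw [← spn_left X le_rfl] at h1 h2
    have h3 : finrank ℚ (spn X (a + 1) (a + 1)) = 1 := by
      rw [spn_self]; exact finrank_single _ (B.X_ne _)
    omega
  have d_self : ∀ a, finrank ℚ (spn X a a) = 1 := fun a => by
    rw [spn_self]; exact finrank_single _ (B.X_ne _)
  refine ⟨C1 + C2 + K, ⟨d_self, d_succ, ?_, ?_, ?_, ?_, B.exists_full hα hirr, ?_, ?_, ?_, ?_, ?_,
    ?_, ?_, ?_, ?_, ?_⟩⟩
  · intro a a' b' b h1 _ h3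
    exact Submodule.finrank_mono (spn_mono X h1 h3)
  · intro a b hab
    rw [spn_right X hab]; exact finrank_sup_single _ _
  · intro a b hab
    rw [spn_left X hab]; exact finrank_sup_single _ _
  · intro a j p haj hjp hlt
    rw [spn_right X hjp]
    apply finrank_lt_of_not_mem
    intro hmem
    have : spn X a (p + 1) = spn X a p := by
      rw [spn_right X (haj.trans hjp)]
      exact sup_eq_left.2 ((Submodule.span_singleton_le_iff_mem _ _).2
        (spn_mono X haj le_rfl hmem))
    rw [this] at hlt; omega
  · intro a b _
    apply div_nonneg (Real.log_nonneg _) (by norm_num)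
    exact_mod_cast ht_pos _
  · intro a
    obtain ⟨y, hy0, hy1, hy2⟩ := ht_single_ge (X a) (B.X_ne a)
    have h1 := B.prim a y hy0 hy1
    have h2 : (q a : ℤ) ^ 2 ≤ ht (spn X a a) := by
      rw [spn_self, hy2]
      calc (q a : ℤ) ^ 2 ≤ |y 0| ^ 2 := pow_le_pow_left₀ (by positivity) h1 2
        _ = y 0 ^ 2 := sq_abs _
        _ ≤ _ := Finset.single_le_sum (f := fun i => y i ^ 2) (fun i _ => sq_nonneg _)
          (Finset.mem_univ 0)
    have h3 : (q a : ℝ) ^ 2 ≤ ht (spn X a a) := by exact_mod_cast h2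
    have h4 := Real.log_le_log (pow_pos (hqpos a) 2) h3
    rw [Real.log_pow] at h4
    show _ ≤ Real.log (ht (spn X a a)) / 2
    push_cast at h4
    linarith
  · intro a
    have := h_self_le a
    linarith
  · intro a
    have h1 := h_left a (a + 1) le_rfl (by rw [d_succ, d_self])
    have h2 := h_self_le (a + 1)
    linarith
  · intro a
    have := hK a
    linarith
  · intro a b hab
    exact Real.log_le_log (hqpos a) (by exact_mod_cast B.q_mono.monotone hab)
  · exact Real.tendsto_log_atTop.comp B.tendsto_q
  · intro a a' b' b h1 h2 h3 hD
    have : spn X a' b' = spn X a b :=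
      Submodule.eq_of_le_of_finrank_eq (spn_mono X h1 h3) hD
    unfold hh; rw [this]
  · intro a j p k haj hjp h1 h2 h3 h4
    have hsup : spn X a p ⊔ spn X j (p + 1) = spn X a (p + 1) := by
      apply le_antisymm
      · exact sup_le (spn_mono X le_rfl (by omega)) (spn_mono X haj.le le_rfl)
      · rw [spn_right X (by omega)]
        refine sup_le_sup le_rfl ?_
        rw [Submodule.span_singleton_le_iff_mem]
        exact mem_spn X (by omega) le_rfl
    have hfr := Submodule.finrank_sup_add_finrank_inf_eq (spn X a p) (spn X j (p + 1))
    rw [hsup] at hfr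
    have hinf : spn X j p = spn X a p ⊓ spn X j (p + 1) := by
      apply Submodule.eq_of_le_of_finrank_eq
      · exact le_inf (spn_mono X haj.le le_rfl) (spn_mono X le_rfl (by omega))
      · omega
    have hs := ht_submod (spn X a p) (spn X j (p + 1)) (by rw [← hinf]; omega)
      (by rw [← hinf]; omega)
    rw [hsup, ← hinf] at hs
    have hs' : (ht (spn X a (p + 1)) : ℝ) * ht (spn X j p) ≤
        ht (spn X a p) * ht (spn X j (p + 1)) := by exact_mod_cast hs
    have hl := Real.log_le_log (mul_pos (htpos _) (htpos _)) hs'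
    rw [Real.log_mul (htpos _).ne' (htpos _).ne', Real.log_mul (htpos _).ne' (htpos _).ne'] at hl
    unfold hh
    linarith
  · intro j b hjb hD
    have := h_left j b hjb hD
    linarith

end BSeq

end Assembly

lemma exists_alpha (d : ℕ) (hd : 1 ≤ d) (H : ℝ) (hHpos : 0 < H)
    (hHroot : ∑ k ∈ Finset.range (d + 1), H ^ (k + 1) = 1) (γ : ℝ) (hγ : H < γ) :
    ∃ α, α < γ ∧ 1 / 2 < α ∧ α < 1 ∧ 0 < SS α d ∧ SS α (d + 1) < 0 := by
  have h0 : SS H (d + 1) = 0 := by simp [SS, hHroot]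
  have hd0 : 0 < SS H d := by
    have := SS_succ H d
    have hp : 0 < H ^ (d + 1) := by positivity
    linarith
  have hlt1 : H < 1 := by
    have h1 : ∑ k ∈ Finset.range 2, H ^ (k + 1) ≤ ∑ k ∈ Finset.range (d + 1), H ^ (k + 1) :=
      Finset.sum_le_sum_of_subset_of_nonneg (Finset.range_mono (by omega))
        (fun i _ _ => by positivity)
    rw [hHroot] at h1
    simp [Finset.sum_range_succ] at h1
    nlinarith
  have hhalf : 1 / 2 < H := by
    by_contra hcon
    rw [not_lt] at hcon
    have : ∀ k, (1 / 2 : ℝ) ^ k ≤ SS H k := by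
      intro k
      induction k with
      | zero => simp [SS_zero]
      | succ k ih =>
        rw [SS_succ]
        have h1 : H ^ (k + 1) ≤ (1 / 2) ^ (k + 1) := pow_le_pow_left₀ hHpos.le hcon _
        have h2 : (1 / 2 : ℝ) ^ (k + 1) = (1 / 2) ^ k / 2 := by ring
        linarith
    have := this (d + 1)
    rw [h0] at this
    have : (0 : ℝ) < (1 / 2) ^ (d + 1) := by positivity
    linarith
  have hcont : Continuous (fun α => SS α d) := by unfold SS; fun_prop
  have hev : ∀ᶠ α in nhdsWithin H (Set.Ioi H), 0 < SS α d :=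
    (hcont.continuousAt.eventually (lt_mem_nhds hd0)).filter_mono nhdsWithin_le_nhds
  have hev2 : ∀ᶠ α in nhdsWithin H (Set.Ioi H), α < γ :=
    (gt_mem_nhds hγ).filter_mono nhdsWithin_le_nhds
  have hev3 : ∀ᶠ α in nhdsWithin H (Set.Ioi H), α < 1 :=
    (gt_mem_nhds hlt1).filter_mono nhdsWithin_le_nhds
  have hev4 : ∀ᶠ α in nhdsWithin H (Set.Ioi H), H < α := eventually_mem_nhdsWithin
  obtain ⟨α, ⟨⟨h1, h2⟩, h3⟩, h4⟩ := (((hev.and hev2).and hev3).and hev4).exists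
  refine ⟨α, h2, by linarith, h3, h1, ?_⟩
  rw [← h0]
  unfold SS
  have : ∑ i ∈ Finset.range (d + 1), H ^ (i + 1) < ∑ i ∈ Finset.range (d + 1), α ^ (i + 1) :=
    Finset.sum_lt_sum_of_nonempty ⟨0, by simp⟩
      (fun i _ => pow_lt_pow_left₀ h4 hHpos.le (by omega))
  linarith

/-- Theorem 1: if `Ξ = (ξ₁,…,ξ_d, ξ₁²+⋯+ξ_d²)` is totally irrational then
`ω̂(Ξ) ≤ H_d`, where `H_d` is the unique positive root of `x^{d+1}+⋯+x = 1`. -/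
theorem uniform_exponent_le_of_sum_of_squares
    (d : ℕ) (hd : 1 ≤ d) (ξ : Fin d → ℝ)
    (hirr : TotallyIrrational (Fin.snoc ξ (∑ i, ξ i ^ 2)))
    (H : ℝ) (hHpos : 0 < H)
    (hHroot : ∑ k ∈ Finset.range (d + 1), H ^ (k + 1) = 1) :
    ∀ γ : ℝ, UnifApprox (Fin.snoc ξ (∑ i, ξ i ^ 2)) γ → γ ≤ H := by
  intro γ happ
  by_contra hcon
  rw [not_le] at hcon
  obtain ⟨α, hαγ, hhalf, h1, hp, hn⟩ := exists_alpha d hd H hHpos hHroot γ hcon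
  obtain ⟨q, X, L, B⟩ := exists_bseq (by omega) _ hirr γ α (by linarith) hαγ happ
  obtain ⟨K, hK0, n0, hK⟩ := x_succ_bound ξ B hhalf
  have B' := B.shift n0
  obtain ⟨C, S⟩ := B'.hsys (by linarith) h1 hirr K hK0 (fun n => by
    have := hK (n + n0) (by omega)
    rwa [add_right_comm] at this)
  obtain ⟨k, rfl⟩ : ∃ k, d = k + 1 := ⟨d - 1, by omega⟩
  exact HSys.absurd_of k S hhalf.le h1 hp hn
end

section
/- Let d ≥ 2 be an integer. Suppose ξ = (ξ₁,…,ξ_d) ∈ ℝ^d is totally irrational and ξ₁² + ⋯ + ξ_d² = 1. Then the uniform Diophantine exponent of ξ satisfies ω̂(ξ) ≤ H_{d−1}, where H_{d−1} is the unique positive root of the equation x^d + x^{d−1} + ⋯ + x = 1. -/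
open Filter

/-- Error vector of an approximation. -/
noncomputable def errv {d : ℕ} (ξ : Fin d → ℝ) (q : ℕ) (a : Fin d → ℤ) : Fin d → ℝ :=
  fun j => (q : ℝ) * ξ j - (a j : ℝ)

/-- Nearest integer vector. -/
noncomputable def rnd {d : ℕ} (ξ : Fin d → ℝ) (q : ℕ) : Fin d → ℤ :=
  fun j => round ((q : ℝ) * ξ j)

lemma irr_zero {d : ℕ} {ξ : Fin d → ℝ} (hirr : TotallyIrrational ξ) (c : Fin (d+1) → ℚ)
    (h : (c 0 : ℝ) + ∑ i : Fin d, (c i.succ : ℝ) * ξ i = 0) : c = 0 := by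
  unfold TotallyIrrational at hirr
  rw [Fintype.linearIndependent_iff] at hirr
  have := hirr c (by
    rw [Fin.sum_univ_succ]
    simpa [Rat.smul_def] using h)
  funext i
  exact this i

lemma err_pos {d : ℕ} (hd : 2 ≤ d) {ξ : Fin d → ℝ} (hirr : TotallyIrrational ξ) (q : ℕ)
    (hq : 1 ≤ q) (a : Fin d → ℤ) : 0 < ‖errv ξ q a‖ := by
  rw [norm_pos_iff]
  intro h0
  let j : Fin d := ⟨0, by omega⟩
  have hj : (q : ℝ) * ξ j - (a j : ℝ) = 0 := congrFun h0 j
  have := irr_zero hirr (Fin.cons (-(a j : ℚ)) (Pi.single j (q : ℚ))) (by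
    simp only [Fin.cons_zero, Fin.cons_succ]
    rw [Finset.sum_eq_single j]
    · simp; linarith
    · intro b _ hb
      simp [Pi.single_eq_of_ne hb]
    · simp)
  have h2 := congrFun this j.succ
  simp at h2
  omega

lemma rnd_le {d : ℕ} (ξ : Fin d → ℝ) (q : ℕ) (a : Fin d → ℤ) :
    ‖errv ξ q (rnd ξ q)‖ ≤ ‖errv ξ q a‖ := by
  rw [pi_norm_le_iff_of_nonneg (norm_nonneg _)]
  intro j
  refine le_trans ?_ (norm_le_pi_norm (errv ξ q a) j)
  simp only [errv, rnd, Real.norm_eq_abs]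
  exact round_le _ _

lemma unif_nat {d : ℕ} {ξ : Fin d → ℝ} {γ : ℝ} (hd : 2 ≤ d) (h : UnifApprox ξ γ) :
    ∀ᶠ Q : ℝ in atTop, ∃ q : ℕ, 1 ≤ q ∧ (q : ℝ) ≤ Q ∧ ‖errv ξ q (rnd ξ q)‖ < Q ^ (-γ) := by
  filter_upwards [h] with Q hQ
  obtain ⟨q, a, h1, h2, h3⟩ := hQ
  lift q to ℕ using by omega
  refine ⟨q, by omega, by simpa using h2, ?_⟩
  refine lt_of_le_of_lt (rnd_le ξ q a) ?_
  have : (0:ℝ) < Q ^ (-γ) := lt_of_le_of_lt (abs_nonneg _) (h3 ⟨0, by omega⟩)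
  rw [pi_norm_lt_iff this]
  intro j
  simpa [errv] using h3 j

lemma best_approx {d : ℕ} (hd : 2 ≤ d) {ξ : Fin d → ℝ} (hirr : TotallyIrrational ξ) {α γ : ℝ}
    (hα : 0 < α) (hαγ : α < γ) (h : UnifApprox ξ γ) :
    ∃ (q : ℕ → ℕ) (a : ℕ → Fin d → ℤ), StrictMono q ∧ (∀ n, 1 ≤ q n) ∧
      StrictAnti (fun n => ‖errv ξ (q n) (a n)‖) ∧
      ∀ᶠ n in atTop, ‖errv ξ (q n) (a n)‖ ≤ (q (n+1) : ℝ) ^ (-α) := by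
  have hu := unif_nat hd h
  set D : ℕ → ℝ := fun q => ‖errv ξ q (rnd ξ q)‖ with hD
  have hDpos : ∀ q, 1 ≤ q → 0 < D q := fun q hq => err_pos hd hirr q hq _
  have hγ : 0 < γ := hα.trans hαγ
  have hex : ∀ p : ℕ, 1 ≤ p → ∃ r, 1 ≤ r ∧ D r < D p := by
    intro p hp
    have ht := (tendsto_rpow_neg_atTop hγ).eventually (gt_mem_nhds (hDpos p hp))
    obtain ⟨Q, ⟨r, h1, _, h3⟩, h4⟩ := (hu.and ht).exists
    exact ⟨r, h1, h3.trans h4⟩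
  classical
  let nx : {p : ℕ // 1 ≤ p} → {p : ℕ // 1 ≤ p} :=
    fun p => ⟨Nat.find (hex p.1 p.2), (Nat.find_spec (hex p.1 p.2)).1⟩
  have nx1 : ∀ p, D (nx p).1 < D p.1 := fun p => (Nat.find_spec (hex p.1 p.2)).2
  have nx2 : ∀ p r, 1 ≤ r → r < (nx p).1 → D p.1 ≤ D r := by
    intro p r h1 h2
    have := Nat.find_min (hex p.1 p.2) h2
    push Not at this
    exact this h1
  let s : ℕ → {p : ℕ // 1 ≤ p} := fun n => nx^[n] ⟨1, le_refl 1⟩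
  have hs : ∀ n, s (n+1) = nx (s n) := fun n => Function.iterate_succ_apply' _ _ _
  have hmono : StrictMono (fun n => (s n).1) := by
    apply strictMono_nat_of_lt_succ
    intro n
    by_contra hc
    push Not at hc
    have e1 := nx1 (s n)
    rw [← hs] at e1
    rcases Nat.eq_or_lt_of_le hc with he | hl
    · rw [he] at e1; exact lt_irrefl _ e1
    · cases n with
      | zero =>
        have : (s 0).1 = 1 := rfl
        have := (s 1).2
        simp only [zero_add] at *
        omega
      | succ m =>
        have e2 := nx2 (s m) (s (m+1+1)).1 (s (m+1+1)).2 (by rw [← hs]; exact hl)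
        have e3 := nx1 (s m)
        rw [← hs] at e3
        linarith
  refine ⟨fun n => (s n).1, fun n => rnd ξ (s n).1, hmono, fun n => (s n).2, ?_, ?_⟩
  · apply strictAnti_nat_of_succ_lt
    intro n
    have e1 := nx1 (s n)
    rw [← hs] at e1
    exact e1
  · have hq : Tendsto (fun n => ((s (n+1)).1 : ℝ)) atTop atTop :=
      tendsto_natCast_atTop_atTop.comp (hmono.tendsto_atTop.comp (tendsto_add_atTop_nat 1))
    have hq2 : Tendsto (fun n => ((s (n+1)).1 : ℝ) / 2) atTop atTop :=
      hq.atTop_div_const (by norm_num)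
    have hq3 := (tendsto_rpow_atTop (sub_pos.2 hαγ)).comp hq
    filter_upwards [hq2.eventually hu, hq3.eventually_ge_atTop (2 ^ γ),
      hq.eventually_ge_atTop 1] with n hn h3 hone
    obtain ⟨r, r1, r2, r3⟩ := hn
    have hlt : r < (s (n+1)).1 := by
      have : (r : ℝ) < ((s (n+1)).1 : ℝ) := by linarith
      exact_mod_cast this
    have := nx2 (s n) r r1 (by rw [← hs]; exact hlt)
    refine this.trans (r3.le.trans ?_)
    set X : ℝ := ((s (n+1)).1 : ℝ)
    have hX : 0 < X := by linarith
    simp only [Function.comp] at h3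
    rw [Real.div_rpow hX.le (by norm_num), Real.rpow_neg (by norm_num : (0:ℝ) ≤ 2), div_inv_eq_mul]
    calc X ^ (-γ) * 2 ^ γ ≤ X ^ (-γ) * X ^ (γ - α) := by gcongr
      _ = X ^ (-α) := by rw [← Real.rpow_add hX]; congr 1; ring

lemma cross_pos {d : ℕ} {ξ : Fin d → ℝ} (q q' : ℕ) (a a' : Fin d → ℤ) (hq' : 1 ≤ q')
    (hqq : q' < q) (herr : ‖errv ξ q a‖ < ‖errv ξ q' a'‖) :
    0 < ∑ i, ((q : ℤ) * a' i - q' * a i) ^ 2 := by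
  have hnn : 0 ≤ ∑ i, ((q : ℤ) * a' i - q' * a i) ^ 2 := Finset.sum_nonneg fun i _ => sq_nonneg _
  refine lt_of_le_of_ne hnn fun h0 => ?_
  have h1 := (Finset.sum_eq_zero_iff_of_nonneg (fun i _ => sq_nonneg _)).1 h0.symm
  have h2 : (q : ℝ) • errv ξ q' a' = (q' : ℝ) • errv ξ q a := by
    funext i
    have := h1 i (Finset.mem_univ i)
    have h3 : ((q : ℤ) * a' i - q' * a i) = 0 := by simpa using this
    have h4 : (q : ℝ) * a' i - q' * a i = 0 := by exact_mod_cast h3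
    simp only [errv, Pi.smul_apply, smul_eq_mul]
    linear_combination -h4
  have h3 := congrArg norm h2
  rw [norm_smul, norm_smul] at h3
  simp only [Real.norm_natCast] at h3
  have h5 : (q' : ℝ) < q := by exact_mod_cast hqq
  have h6 : (1 : ℝ) ≤ q' := by exact_mod_cast hq'
  nlinarith [norm_nonneg (errv ξ q a)]

lemma sphere_bound {d : ℕ} {ξ : Fin d → ℝ} (q q' : ℕ) (a a' : Fin d → ℤ) (hq' : 1 ≤ q')
    (hqq : q' < q) (herr : ‖errv ξ q a‖ < ‖errv ξ q' a'‖) (hs : ∑ i, a i ^ 2 = (q : ℤ) ^ 2) :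
    (1 : ℝ) ≤ 4 * d * q * ‖errv ξ q' a'‖ ^ 2 := by
  have hpos := cross_pos q q' a a' hq' hqq herr
  have hdvd : (q : ℤ) ∣ ∑ i, ((q : ℤ) * a' i - q' * a i) ^ 2 := by
    have : ∑ i, ((q : ℤ) * a' i - q' * a i) ^ 2
        = q * (q * ∑ i, a' i ^ 2) - q * (2 * q' * ∑ i, a i * a' i) + q' ^ 2 * ∑ i, a i ^ 2 := by
      simp only [Finset.mul_sum, ← Finset.sum_sub_distrib, ← Finset.sum_add_distrib]
      exact Finset.sum_congr rfl fun i _ => by ring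
    rw [this, hs]
    exact ⟨q * ∑ i, a' i ^ 2 - 2 * q' * ∑ i, a i * a' i + q' ^ 2 * q, by ring⟩
  have hle : (q : ℤ) ≤ ∑ i, ((q : ℤ) * a' i - q' * a i) ^ 2 := Int.le_of_dvd hpos hdvd
  have hleR : (q : ℝ) ≤ ∑ i, ((q : ℝ) * a' i - q' * a i) ^ 2 := by exact_mod_cast hle
  have hqp : (0:ℝ) < q := by exact_mod_cast (by omega : 0 < q)
  have h5 : (q' : ℝ) < q := by exact_mod_cast hqq
  set δ := ‖errv ξ q' a'‖
  have hδ : 0 ≤ δ := norm_nonneg _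
  have hterm : ∀ i, ((q : ℝ) * a' i - q' * a i) ^ 2 ≤ (2 * q * δ) ^ 2 := by
    intro i
    have e1 : |errv ξ q' a' i| ≤ δ := norm_le_pi_norm (errv ξ q' a') i
    have e2 : |errv ξ q a i| ≤ δ := (norm_le_pi_norm (errv ξ q a) i).trans herr.le
    have e3 : (q : ℝ) * a' i - q' * a i = q' * errv ξ q a i - q * errv ξ q' a' i := by
      simp only [errv]; ring
    rw [e3]
    apply sq_le_sq'
    · rw [abs_le] at e1 e2
      nlinarith [Nat.cast_nonneg (α := ℝ) q']
    · rw [abs_le] at e1 e2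
      nlinarith [Nat.cast_nonneg (α := ℝ) q']
  have hsum := Finset.sum_le_sum fun i (_ : i ∈ Finset.univ) => hterm i
  simp only [Finset.sum_const, Finset.card_univ, Fintype.card_fin, nsmul_eq_mul] at hsum
  have h7 : (q : ℝ) * 1 ≤ q * (4 * d * q * δ ^ 2) := by
    calc (q : ℝ) * 1 = q := by ring
      _ ≤ _ := hleR.trans hsum
      _ = _ := by ring
  exact le_of_mul_le_mul_left h7 hqp

lemma nonsphere_bound {d : ℕ} {ξ : Fin d → ℝ} (hsphere : ∑ i, ξ i ^ 2 = 1) (q : ℕ)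
    (a : Fin d → ℤ) (hq : 1 ≤ q) (hδ1 : ‖errv ξ q a‖ ≤ 1)
    (hs : ∑ i, a i ^ 2 ≠ (q : ℤ) ^ 2) :
    (1 : ℝ) ≤ 3 * d * q * ‖errv ξ q a‖ := by
  set δ := ‖errv ξ q a‖
  have hδ : 0 ≤ δ := norm_nonneg _
  have hqR : (1:ℝ) ≤ q := by exact_mod_cast hq
  have h1 : 1 ≤ |∑ i, a i ^ 2 - (q : ℤ) ^ 2| := Int.one_le_abs (sub_ne_zero.2 hs)
  have h1R : (1:ℝ) ≤ |∑ i, (a i : ℝ) ^ 2 - (q : ℝ) ^ 2| := by exact_mod_cast h1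
  have h2 : ∑ i, (a i : ℝ) ^ 2 - (q : ℝ) ^ 2
      = ∑ i, (errv ξ q a i ^ 2 - 2 * q * ξ i * errv ξ q a i) := by
    have : (q : ℝ) ^ 2 = ∑ i, (q : ℝ) ^ 2 * ξ i ^ 2 := by
      rw [← Finset.mul_sum, hsphere, mul_one]
    rw [this, ← Finset.sum_sub_distrib]
    refine Finset.sum_congr rfl fun i _ => ?_
    simp only [errv]; ring
  have hterm : ∀ i, |errv ξ q a i ^ 2 - 2 * q * ξ i * errv ξ q a i| ≤ 3 * q * δ := by
    intro i
    have e1 : |errv ξ q a i| ≤ δ := norm_le_pi_norm (errv ξ q a) i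
    have e2 : |ξ i| ≤ 1 := by
      rw [← sq_le_one_iff_abs_le_one, ← hsphere]
      exact Finset.single_le_sum (f := fun i => ξ i ^ 2) (fun i _ => sq_nonneg _) (Finset.mem_univ i)
    have e3 : |errv ξ q a i ^ 2 - 2 * q * ξ i * errv ξ q a i|
        = |errv ξ q a i| * |errv ξ q a i - 2 * q * ξ i| := by rw [← abs_mul]; ring_nf
    rw [e3]
    have e4 : |errv ξ q a i - 2 * q * ξ i| ≤ 3 * q := by
      rw [abs_le] at *
      constructor <;> nlinarith
    calc _ ≤ δ * (3 * q) := by gcongr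
      _ = _ := by ring
  calc (1:ℝ) ≤ _ := h1R
    _ ≤ ∑ i : Fin d, 3 * q * δ := by
      rw [h2]
      exact (Finset.abs_sum_le_sum_abs _ _).trans (Finset.sum_le_sum fun i _ => hterm i)
    _ = _ := by simp; ring

lemma chain_exists {d : ℕ} {V : Type*} [AddCommGroup V] [Module ℚ V] [FiniteDimensional ℚ V]
    (hV : Module.finrank ℚ V = d + 1) (x : ℕ → V) (n : ℕ) (hx0 : x n ≠ 0)
    (hspan : ∀ W : Submodule ℚ V, W ≠ ⊤ → ∃ m, n ≤ m ∧ x m ∉ W) :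
    ∃ e : ℕ → ℕ, e 0 = n ∧ (∀ k < d, e k < e (k+1)) ∧
      LinearIndependent ℚ (fun i : Fin (d+1) => x (e i)) ∧
      ∀ k < d, x (e (k+1) - 1) ∈
        Submodule.span ℚ (Set.range (fun i : Fin (k+1) => x (e i))) := by
  classical
  let S : ℕ → Submodule ℚ V := fun p => Submodule.span ℚ (x '' Set.Icc n p)
  let nx : ℕ → ℕ := fun p => if h : ∃ m, n ≤ m ∧ x m ∉ S p then Nat.find h else p + 1
  let e : ℕ → ℕ := fun k => nx^[k] n
  have he : ∀ k, e (k+1) = nx (e k) := fun k => Function.iterate_succ_apply' _ _ _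
  let T : ℕ → Submodule ℚ V := fun k => Submodule.span ℚ (Set.range (fun i : Fin (k+1) => x (e i)))
  have hT : ∀ k i, i ≤ k → x (e i) ∈ T k := fun k i hi =>
    Submodule.subset_span ⟨⟨i, by omega⟩, rfl⟩
  have hTmono : ∀ k, T k ≤ T (k+1) := by
    intro k
    apply Submodule.span_le.2
    rintro _ ⟨i, rfl⟩
    exact hT (k+1) i (by omega)
  have step : ∀ k < d, n ≤ e k → S (e k) ≤ T k →
      e k < e (k+1) ∧ x (e (k+1) - 1) ∈ S (e k) ∧ x (e (k+1)) ∉ S (e k) ∧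
        S (e (k+1)) ≤ T (k+1) := by
    intro k hk hn hS
    have hne : S (e k) ≠ ⊤ := by
      intro h
      have h1 : T k = ⊤ := top_le_iff.1 (h ▸ hS)
      have h2 := finrank_range_le_card (R := ℚ) (fun i : Fin (k+1) => x (e i))
      have h3 : (Set.range (fun i : Fin (k+1) => x (e i))).finrank ℚ = Module.finrank ℚ (T k) := rfl
      rw [h3, h1, finrank_top, hV, Fintype.card_fin] at h2
      omega
    have hex := hspan _ hne
    have hf : e (k+1) = Nat.find hex := by
      rw [he]; exact dif_pos hex
    have s1 := Nat.find_spec hex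
    have s2 : ∀ m, n ≤ m → m < e (k+1) → x m ∈ S (e k) := by
      intro m hm hlt
      rw [hf] at hlt
      have := Nat.find_min hex hlt
      by_contra hc
      exact this ⟨hm, hc⟩
    rw [← hf] at s1
    have hlt : e k < e (k+1) := by
      by_contra hc
      exact s1.2 (Submodule.subset_span ⟨e (k+1), ⟨s1.1, by omega⟩, rfl⟩)
    refine ⟨hlt, s2 _ (by omega) (by omega), s1.2, ?_⟩
    apply Submodule.span_le.2
    rintro _ ⟨m, ⟨m1, m2⟩, rfl⟩
    rcases Nat.eq_or_lt_of_le m2 with h | h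
    · rw [h]; exact hT _ _ le_rfl
    · exact hTmono k (hS (s2 m m1 h))
  have P : ∀ k ≤ d, n ≤ e k ∧ S (e k) ≤ T k ∧ T k ≤ S (e k) := by
    intro k
    induction k with
    | zero =>
      intro _
      have e0 : e 0 = n := rfl
      refine ⟨le_rfl, ?_, ?_⟩
      · apply Submodule.span_le.2
        rintro _ ⟨m, ⟨m1, m2⟩, rfl⟩
        have : m = e 0 := by omega
        rw [this]; exact hT 0 0 le_rfl
      · apply Submodule.span_le.2
        rintro _ ⟨i, rfl⟩
        have : (i : ℕ) = 0 := by omega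
        refine Submodule.subset_span ⟨e 0, ⟨le_rfl, le_rfl⟩, ?_⟩
        simp only [this]
    | succ k ih =>
      intro hk
      obtain ⟨i1, i2, i3⟩ := ih (by omega)
      obtain ⟨t1, t2, t3, t4⟩ := step k (by omega) i1 i2
      refine ⟨by omega, t4, ?_⟩
      apply Submodule.span_le.2
      rintro _ ⟨i, rfl⟩
      rcases Nat.lt_or_ge i (k+1) with h | h
      · have := i3 (hT k i (by omega))
        refine Submodule.span_mono (Set.image_mono (Set.Icc_subset_Icc_right t1.le)) this
      · have : (i : ℕ) = k + 1 := by omega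
        refine Submodule.subset_span ⟨e (k+1), ⟨by omega, le_rfl⟩, ?_⟩
        simp only [this]
  refine ⟨e, rfl, fun k hk => (step k hk (P k hk.le).1 (P k hk.le).2.1).1, ?_, fun k hk =>
    (P k hk.le).2.1 (step k hk (P k hk.le).1 (P k hk.le).2.1).2.1⟩
  have LI : ∀ k ≤ d, LinearIndependent ℚ (fun i : Fin (k+1) => x (e i)) := by
    intro k
    induction k with
    | zero =>
      intro _
      have : LinearIndependent ℚ (fun i : Fin 1 => x (e i)) := by
        rw [linearIndependent_unique_iff]
        exact hx0
      exact this
    | succ k ih =>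
      intro hk
      rw [linearIndependent_finSucc']
      refine ⟨ih (by omega), ?_⟩
      intro hmem
      have hmem' : x (e (k+1)) ∈ T k := hmem
      have hP := P k (by omega)
      exact (step k (by omega) hP.1 hP.2.1).2.2.1 (hP.2.2 hmem')
  exact LI d le_rfl

lemma det_eq_of_sub_mem {m : ℕ} (y z : Fin m → Fin m → ℚ)
    (h : ∀ k, y k - z k ∈ Submodule.span ℚ (y '' Set.Iio k)) :
    (Matrix.of z).det = (Matrix.of y).det := by
  classical
  have h' : ∀ k, ∃ c : Fin m → ℚ, ∑ i ∈ Finset.Iio k, c i • y i = y k - z k := by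
    intro k
    rw [← Submodule.mem_span_image_finset_iff_exists_fun']
    simpa using h k
  choose c hc using h'
  let U : Matrix (Fin m) (Fin m) ℚ := fun k i => if i = k then 1 else if i < k then - c k i else 0
  have hz : Matrix.of z = U * Matrix.of y := by
    ext k j
    rw [Matrix.mul_apply]
    simp only [Matrix.of_apply]
    have e1 : z k j = y k j - ∑ i ∈ Finset.Iio k, c k i * y i j := by
      have := congrFun (hc k) j
      simp at this
      linarith
    have e2 : ∀ i, U k i * y i j = (if i = k then y i j else 0) -
        (if i ∈ Finset.Iio k then c k i * y i j else 0) := by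
      intro i
      by_cases h1 : i = k
      · subst h1; simp [U]
      · by_cases h2 : i < k <;> simp [U, h1, h2]
    simp only [e2, Finset.sum_sub_distrib, Finset.sum_ite_mem, Finset.univ_inter,
      Finset.sum_ite_eq', Finset.mem_univ, if_true, e1]
  have hU : U.det = 1 := by
    rw [Matrix.det_of_isLowerTriangular]
    · simp [U]
    · intro i j hij
      have : i < j := hij
      simp [U, this.ne', this.not_gt]
  rw [hz, Matrix.det_mul, hU, one_mul]

lemma det_bound {d : ℕ} (z : Matrix (Fin (d+1)) (Fin (d+1)) ℝ) (E : Fin d → ℝ)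
    (h0 : ∀ k : Fin d, z k.succ 0 = 0) (hE : ∀ k i : Fin d, |z k.succ i.succ| ≤ E k) :
    |z.det| ≤ |z 0 0| * (d.factorial * ∏ k, E k) := by
  rw [Matrix.det_succ_column_zero, Fin.sum_univ_succ]
  simp only [h0, mul_zero, zero_mul, Finset.sum_const_zero, add_zero, Fin.val_zero, pow_zero,
    one_mul, abs_mul]
  gcongr
  rw [← Matrix.det_transpose, Matrix.det_apply]
  refine (Finset.abs_sum_le_sum_abs _ _).trans ?_
  have : ∀ σ ∈ (Finset.univ : Finset (Equiv.Perm (Fin d))), 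
      |Equiv.Perm.sign σ • ∏ i, ((z.submatrix (Fin.succAbove 0) Fin.succ).transpose) (σ i) i|
      ≤ ∏ k, E k := by
    intro σ _
    have : ∀ (u : ℤˣ) (r : ℝ), |u • r| = |r| := by
      intro u r
      rcases Int.units_eq_one_or u with h | h <;> simp [h]
    rw [this, Finset.abs_prod]
    refine Finset.prod_le_prod (fun i _ => abs_nonneg _) fun i _ => ?_
    simpa using hE i (σ i)
  refine (Finset.sum_le_sum this).trans ?_
  simp [Fintype.card_perm]

/-- Integer point attached to an approximation, with rational entries. -/
def pnt {d : ℕ} (q : ℕ) (a : Fin d → ℤ) : Fin (d+1) → ℚ :=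
  Fin.cons (q : ℚ) (fun i => (a i : ℚ))

lemma span_all {d : ℕ} {ξ : Fin d → ℝ} (hirr : TotallyIrrational ξ)
    (q : ℕ → ℕ) (a : ℕ → Fin d → ℤ) (hq : StrictMono q)
    (herr : StrictAnti (fun n => ‖errv ξ (q n) (a n)‖)) (n : ℕ)
    (W : Submodule ℚ (Fin (d+1) → ℚ)) (hW : W ≠ ⊤) : ∃ m, n ≤ m ∧ pnt (q m) (a m) ∉ W := by
  by_contra hcon
  push Not at hcon
  obtain ⟨f, hf, hWf⟩ := Submodule.exists_le_ker_of_lt_top W (lt_top_iff_ne_top.2 hW)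
  let c : Fin (d+1) → ℚ := fun i => f (Pi.single i 1)
  have hfc : ∀ v : Fin (d+1) → ℚ, f v = ∑ i, v i * c i := by
    intro v
    rw [LinearMap.pi_apply_eq_sum_univ f v]
    refine Finset.sum_congr rfl fun i _ => ?_
    simp only [smul_eq_mul, c]
    congr 2
    ext j
    simp [Pi.single_apply, eq_comm]
  set s : ℝ := (c 0 : ℝ) + ∑ i : Fin d, (c i.succ : ℝ) * ξ i with hs
  set K : ℝ := ∑ i : Fin d, |(c i.succ : ℝ)| * ‖errv ξ (q 0) (a 0)‖ with hK
  have key : ∀ m, n ≤ m → (q m : ℝ) * |s| ≤ K := by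
    intro m hm
    have h1 : f (pnt (q m) (a m)) = 0 := hWf (hcon m hm)
    rw [hfc, Fin.sum_univ_succ] at h1
    simp only [pnt, Fin.cons_zero, Fin.cons_succ] at h1
    have h2 : (q m : ℝ) * (c 0 : ℝ) + ∑ i : Fin d, (a m i : ℝ) * (c i.succ : ℝ) = 0 := by
      exact_mod_cast h1
    have h3 : (q m : ℝ) * s = ∑ i : Fin d, (c i.succ : ℝ) * errv ξ (q m) (a m) i := by
      have : ∑ i : Fin d, (c i.succ : ℝ) * errv ξ (q m) (a m) i
          = q m * (∑ i : Fin d, (c i.succ : ℝ) * ξ i) - ∑ i : Fin d, (a m i : ℝ) * (c i.succ : ℝ) := by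
        rw [Finset.mul_sum, ← Finset.sum_sub_distrib]
        refine Finset.sum_congr rfl fun i _ => ?_
        simp only [errv]; ring
      rw [this, hs]
      linarith
    have h4 : (q m : ℝ) * |s| = |(q m : ℝ) * s| := by rw [abs_mul, Nat.abs_cast]
    rw [h4, h3]
    refine (Finset.abs_sum_le_sum_abs _ _).trans (Finset.sum_le_sum fun i _ => ?_)
    rw [abs_mul]
    gcongr
    exact (norm_le_pi_norm (errv ξ (q m) (a m)) i).trans (herr.antitone (Nat.zero_le m))
  have hs0 : s = 0 := by
    by_contra hne
    have hpos : 0 < |s| := abs_pos.2 hne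
    have ht : Tendsto (fun m => (q m : ℝ)) atTop atTop :=
      tendsto_natCast_atTop_atTop.comp hq.tendsto_atTop
    obtain ⟨m, hm1, hm2⟩ := ((ht.eventually_gt_atTop (K / |s|)).and (eventually_ge_atTop n)).exists
    have := key m hm2
    rw [div_lt_iff₀ hpos] at hm1
    linarith
  have hc0 : c = 0 := irr_zero hirr c hs0
  apply hf
  apply LinearMap.ext
  intro v
  rw [hfc v, hc0]
  simp

lemma growth {d : ℕ} {α C : ℝ} (hα : 0 < α) (hC : 1 ≤ C) (p r A : ℕ → ℝ)
    (hp : ∀ k, 1 ≤ p k) (hpr : ∀ k < d, p k ≤ r k) (hrp : ∀ k < d, p (k+1) ^ α ≤ C * r k)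
    (A0 : A 0 = 1) (Arec : ∀ k, A (k+1) = 1 - α - α * (1 - A k))
    (A1 : ∀ k < d, 0 ≤ A k) (A2 : ∀ k < d, A k ≤ 1) :
    ∀ k ≤ d, p 0 * ∏ i ∈ Finset.range k, (p (i+1) ^ (1 - α) / r i) ≤ C ^ k * p k ^ A k := by
  intro k
  induction k with
  | zero => intro _; simp [A0]
  | succ k ih =>
    intro hk
    have ih := ih (by omega)
    have hk' : k < d := by omega
    have hp0 : 0 < p k := by linarith [hp k]
    have hp1 : 0 < p (k+1) := by linarith [hp (k+1)]
    have hr0 : 0 < r k := by linarith [hpr k hk']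
    have hC0 : 0 < C := by linarith
    rw [Finset.prod_range_succ, ← mul_assoc]
    have e1 : p k ^ A k ≤ r k ^ A k := Real.rpow_le_rpow hp0.le (hpr k hk') (A1 k hk')
    have e2 : r k ^ A k / r k ≤ C * p (k+1) ^ (-(α * (1 - A k))) := by
      have f1 : r k ^ A k / r k = (r k ^ (1 - A k))⁻¹ := by
        rw [← Real.rpow_neg hr0.le, neg_sub, Real.rpow_sub_one hr0.ne']
      rw [f1]
      have hb : 0 ≤ 1 - A k := by linarith [A2 k hk']
      have f2 : (p (k+1) ^ α) ^ (1 - A k) ≤ (C * r k) ^ (1 - A k) :=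
        Real.rpow_le_rpow (by positivity) (hrp k hk') hb
      rw [Real.mul_rpow hC0.le hr0.le, ← Real.rpow_mul hp1.le] at f2
      have f3 : C ^ (1 - A k) ≤ C := by
        calc C ^ (1 - A k) ≤ C ^ (1:ℝ) := Real.rpow_le_rpow_of_exponent_le hC (by linarith [A1 k hk'])
          _ = C := Real.rpow_one C
      have f4 : p (k+1) ^ (α * (1 - A k)) ≤ C * r k ^ (1 - A k) := f2.trans (by gcongr)
      rw [Real.rpow_neg hp1.le]
      have g1 : 0 < p (k+1) ^ (α * (1 - A k)) := by positivity
      have g2 : 0 < r k ^ (1 - A k) := by positivity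
      rw [← div_eq_mul_inv, inv_eq_one_div, div_le_div_iff₀ g2 g1]
      linarith
    calc (p 0 * ∏ i ∈ Finset.range k, (p (i+1) ^ (1 - α) / r i)) * (p (k+1) ^ (1 - α) / r k)
        ≤ C ^ k * p k ^ A k * (p (k+1) ^ (1 - α) / r k) := by gcongr
      _ ≤ C ^ k * r k ^ A k * (p (k+1) ^ (1 - α) / r k) := by gcongr
      _ = C ^ k * p (k+1) ^ (1 - α) * (r k ^ A k / r k) := by ring
      _ ≤ C ^ k * p (k+1) ^ (1 - α) * (C * p (k+1) ^ (-(α * (1 - A k)))) := by gcongr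
      _ = C ^ (k+1) * (p (k+1) ^ (1 - α) * p (k+1) ^ (-(α * (1 - A k)))) := by ring
      _ = C ^ (k+1) * p (k+1) ^ A (k+1) := by
        rw [← Real.rpow_add hp1, Arec]; congr 2

lemma chain_det {d : ℕ} {ξ : Fin d → ℝ} (hirr : TotallyIrrational ξ)
    (q : ℕ → ℕ) (a : ℕ → Fin d → ℤ) (hq : StrictMono q) (hq1 : ∀ n, 1 ≤ q n)
    (herr : StrictAnti (fun n => ‖errv ξ (q n) (a n)‖)) (n : ℕ) :
    ∃ e : ℕ → ℕ, e 0 = n ∧ (∀ k < d, e k < e (k+1)) ∧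
      (1 : ℝ) ≤ q n * (d.factorial * ∏ k : Fin d,
        (2 * q (e (k+1)) * ‖errv ξ (q (e (k+1) - 1)) (a (e (k+1) - 1))‖ / q (e (k+1) - 1))) := by
  let x : ℕ → Fin (d+1) → ℚ := fun m => pnt (q m) (a m)
  have hx00 : ∀ m, x m 0 = q m := fun m => rfl
  have hxs : ∀ m (i : Fin d), x m i.succ = a m i := fun m i => rfl
  have hx0 : x n ≠ 0 := by
    intro h
    have := congrFun h 0
    rw [hx00] at this
    have h2 := hq1 n
    simp at this
    omega
  obtain ⟨e, e0, elt, eli, emem⟩ := chain_exists (d := d) (by simp) x n hx0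
    (fun W hW => span_all hirr q a hq herr n W hW)
  refine ⟨e, e0, elt, ?_⟩
  let y : Fin (d+1) → Fin (d+1) → ℚ := fun i => x (e i)
  let z : Fin (d+1) → Fin (d+1) → ℚ := Fin.cons (y 0) (fun k : Fin d =>
    x (e (k+1)) - ((q (e (k+1)) : ℚ) / q (e (k+1) - 1)) • x (e (k+1) - 1))
  have hz0 : z 0 = y 0 := rfl
  have hzs : ∀ k : Fin d, z k.succ =
    x (e (k+1)) - ((q (e (k+1)) : ℚ) / q (e (k+1) - 1)) • x (e (k+1) - 1) := fun k => rfl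
  have hys : ∀ k : Fin d, y k.succ = x (e (k+1)) := fun k => rfl
  have hdet : (Matrix.of z).det = (Matrix.of y).det := by
    apply det_eq_of_sub_mem
    intro k
    refine Fin.cases ?_ (fun k => ?_) k
    · rw [hz0, sub_self]; exact Submodule.zero_mem _
    · rw [hzs, hys, sub_sub_cancel]
      apply Submodule.smul_mem
      refine Submodule.span_mono ?_ (emem k k.2)
      rintro _ ⟨i, rfl⟩
      refine ⟨⟨i, by omega⟩, ?_, rfl⟩
      rw [Set.mem_Iio, Fin.lt_def]
      have := i.2
      simp
      omega
  have hyne : (Matrix.of y).det ≠ 0 := by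
    have : IsUnit (Matrix.of y) := Matrix.linearIndependent_rows_iff_isUnit.1 eli
    exact ((Matrix.isUnit_iff_isUnit_det _).1 this).ne_zero
  have hyint : ∃ D : ℤ, (Matrix.of y).det = D := by
    let Y : Matrix (Fin (d+1)) (Fin (d+1)) ℤ := fun i => Fin.cons (q (e i) : ℤ) (a (e i))
    refine ⟨Y.det, ?_⟩
    have h1 : Matrix.of y = Y.map (Int.castRingHom ℚ) := by
      ext i j
      refine Fin.cases ?_ (fun j => ?_) j
      · show ((q (e i) : ℕ) : ℚ) = (((q (e i) : ℕ) : ℤ) : ℚ)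
        simp
      · rfl
    rw [h1, ← RingHom.mapMatrix_apply, ← RingHom.map_det]
    rfl
  have h1 : (1 : ℝ) ≤ |(((Matrix.of z).det : ℚ) : ℝ)| := by
    obtain ⟨D, hD⟩ := hyint
    rw [hdet]
    rw [hD] at hyne ⊢
    have : D ≠ 0 := by exact_mod_cast hyne
    have := Int.one_le_abs this
    exact_mod_cast this
  have h2 : (((Matrix.of z).det : ℚ) : ℝ) = ((Matrix.of z).map (Rat.castHom ℝ)).det := by
    rw [← RingHom.mapMatrix_apply, ← RingHom.map_det]
    rfl
  rw [h2] at h1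
  have hb := det_bound ((Matrix.of z).map (Rat.castHom ℝ)) (fun k : Fin d =>
    (2 * q (e (k+1)) * ‖errv ξ (q (e (k+1) - 1)) (a (e (k+1) - 1))‖ / q (e (k+1) - 1))) ?_ ?_
  · refine h1.trans (hb.trans (le_of_eq ?_))
    have : ((Matrix.of z).map (Rat.castHom ℝ)) 0 0 = q n := by
      simp [hz0, y, hx00, e0]
    rw [this, Nat.abs_cast]
  · intro k
    have hne : (q (e (k+1) - 1) : ℝ) ≠ 0 := by
      have := hq1 (e (k+1) - 1)
      positivity
    simp [hzs, hx00, hne]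
  · intro k i
    have hek := elt k k.2
    set j := e (k+1) - 1 with hj
    set l := e (k+1) with hl
    have hjl : j < l := by omega
    have hq0 : (0:ℝ) < q j := by have := hq1 j; positivity
    have hqq : (q j : ℝ) ≤ q l := by exact_mod_cast (hq hjl).le
    have e1 : ((Matrix.of z).map (Rat.castHom ℝ)) k.succ i.succ
        = (q l : ℝ) / q j * errv ξ (q j) (a j) i - errv ξ (q l) (a l) i := by
      have hz2 : z k.succ = x l - ((q l : ℚ) / q j) • x j := hzs k
      simp only [Matrix.map_apply, Matrix.of_apply, hz2, Pi.sub_apply, Pi.smul_apply, hxs, errv,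
        smul_eq_mul, map_sub, map_mul, map_div₀, map_natCast, map_intCast]
      field_simp
      ring
    rw [e1]
    set δ := ‖errv ξ (q j) (a j)‖ with hδ
    have f1 : |errv ξ (q j) (a j) i| ≤ δ := norm_le_pi_norm (errv ξ (q j) (a j)) i
    have f2 : |errv ξ (q l) (a l) i| ≤ δ :=
      (norm_le_pi_norm (errv ξ (q l) (a l)) i).trans (herr hjl).le
    have f3 : 1 ≤ (q l : ℝ) / q j := by rwa [le_div_iff₀ hq0, one_mul]
    have hδ0 : 0 ≤ δ := norm_nonneg _
    calc _ ≤ |(q l : ℝ) / q j * errv ξ (q j) (a j) i| + |errv ξ (q l) (a l) i| := abs_sub _ _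
      _ ≤ (q l : ℝ) / q j * δ + (q l : ℝ) / q j * δ := by
        rw [abs_mul, abs_of_nonneg (by positivity : (0:ℝ) ≤ (q l : ℝ) / q j)]
        gcongr
        nlinarith
      _ = _ := by ring

lemma half_lt {d : ℕ} {H : ℝ} (hHpos : 0 < H)
    (hHroot : ∑ k ∈ Finset.range d, H ^ (k + 1) = 1) : 1 / 2 < H := by
  by_contra hc
  push Not at hc
  have h1 : ∑ k ∈ Finset.range d, H ^ (k + 1) ≤ ∑ k ∈ Finset.range d, (1 / 2 : ℝ) ^ (k + 1) :=
    Finset.sum_le_sum fun k _ => pow_le_pow_left₀ hHpos.le hc _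
  have h2 : ∀ m : ℕ, ∑ k ∈ Finset.range m, (1 / 2 : ℝ) ^ (k + 1) = 1 - (1 / 2) ^ m := by
    intro m
    induction m with
    | zero => simp
    | succ m ih => rw [Finset.sum_range_succ, ih]; ring
  rw [h2, hHroot] at h1
  have : (0:ℝ) < (1/2) ^ d := by positivity
  linarith

/-- Theorem 2: if `ξ ∈ ℝ^d` (`d ≥ 2`) is totally irrational and lies on the unit sphere,
then `ω̂(ξ) ≤ H_{d-1}`, where `H_{d-1}` is the unique positive root of `x^d+⋯+x = 1`. -/
theorem uniform_exponent_le_of_on_sphere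
    (d : ℕ) (hd : 2 ≤ d) (ξ : Fin d → ℝ)
    (hirr : TotallyIrrational ξ)
    (hsphere : ∑ i, ξ i ^ 2 = 1)
    (H : ℝ) (hHpos : 0 < H)
    (hHroot : ∑ k ∈ Finset.range d, H ^ (k + 1) = 1) :
    ∀ γ : ℝ, UnifApprox ξ γ → γ ≤ H := by
  intro γ hγ
  by_contra hcon
  push Not at hcon
  have hhalf := half_lt hHpos hHroot
  -- choose `α` slightly above `H`
  obtain ⟨α, hαH, hαγ, hα1⟩ : ∃ α, H < α ∧ α < γ ∧
      ∑ k ∈ Finset.range (d - 1), α ^ (k + 1) < 1 := by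
    have hc : Continuous (fun t : ℝ => ∑ k ∈ Finset.range (d - 1), t ^ (k + 1)) := by fun_prop
    have hlt : ∑ k ∈ Finset.range (d - 1), H ^ (k + 1) < 1 := by
      have : d = (d - 1) + 1 := by omega
      rw [this, Finset.sum_range_succ] at hHroot
      have : 0 < H ^ (d - 1 + 1) := by positivity
      linarith
    have h1 : ∀ᶠ t in nhdsWithin H (Set.Ioi H),
        ∑ k ∈ Finset.range (d - 1), t ^ (k + 1) < 1 :=
      (hc.continuousAt.eventually (gt_mem_nhds hlt)).filter_mono nhdsWithin_le_nhds
    have h2 : ∀ᶠ t in nhdsWithin H (Set.Ioi H), t < γ :=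
      (gt_mem_nhds hcon).filter_mono nhdsWithin_le_nhds
    have h3 : ∀ᶠ t in nhdsWithin H (Set.Ioi H), H < t := self_mem_nhdsWithin
    obtain ⟨t, ht1, ht2, ht3⟩ := (h1.and (h2.and h3)).exists
    exact ⟨t, ht3, ht2, ht1⟩
  have hα0 : 0 < α := hHpos.trans hαH
  have hαhalf : 1 / 2 < α := hhalf.trans hαH
  obtain ⟨q, a, hq, hq1, herr, hev⟩ := best_approx hd hirr hα0 hαγ hγ
  have hqR : ∀ n, (1:ℝ) ≤ q n := fun n => by exact_mod_cast hq1 n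
  have hqt : Tendsto (fun n => (q n : ℝ)) atTop atTop :=
    tendsto_natCast_atTop_atTop.comp hq.tendsto_atTop
  have hqt1 : Tendsto (fun n => (q (n+1) : ℝ)) atTop atTop :=
    hqt.comp (tendsto_add_atTop_nat 1)
  -- best approximations eventually are not on the sphere
  have hns : ∀ᶠ n in atTop, ∑ i, a (n+1) i ^ 2 ≠ (q (n+1) : ℤ) ^ 2 := by
    have ht := (tendsto_rpow_atTop (show 0 < 2 * α - 1 by linarith)).comp hqt1
    filter_upwards [hev, ht.eventually_gt_atTop (4 * d)] with n hn hbig hs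
    have hb := sphere_bound (ξ := ξ) (q (n+1)) (q n) (a (n+1)) (a n) (hq1 n) (hq (Nat.lt_succ_self n))
      (herr (Nat.lt_succ_self n)) hs
    simp only [Function.comp] at hbig
    set X : ℝ := (q (n+1) : ℝ)
    have hX : 0 < X := by have := hqR (n+1); positivity
    have h1 : ‖errv ξ (q n) (a n)‖ ^ 2 ≤ X ^ (-(2 * α)) := by
      calc _ ≤ (X ^ (-α)) ^ 2 := by gcongr
        _ = _ := by rw [← Real.rpow_natCast, ← Real.rpow_mul hX.le]; congr 1; push_cast; ring
    have h2 : (1:ℝ) ≤ 4 * d * X ^ (1 - 2 * α) := by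
      calc (1:ℝ) ≤ _ := hb
        _ ≤ 4 * d * X * X ^ (-(2 * α)) := by gcongr
        _ = 4 * d * (X ^ (1:ℝ) * X ^ (-(2 * α))) := by rw [Real.rpow_one]; ring
        _ = _ := by rw [← Real.rpow_add hX]; congr 2
    have h3 : X ^ (1 - 2 * α) * X ^ (2 * α - 1) = 1 := by
      rw [← Real.rpow_add hX]; simp
    have h4 : 0 < X ^ (1 - 2 * α) := by positivity
    nlinarith
  have hns' : ∀ᶠ n in atTop, ∑ i, a n i ^ 2 ≠ (q n : ℤ) ^ 2 := by
    obtain ⟨N, hN⟩ := eventually_atTop.1 hns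
    refine eventually_atTop.2 ⟨N + 1, fun n hn => ?_⟩
    obtain ⟨m, rfl⟩ : ∃ m, n = m + 1 := ⟨n - 1, by omega⟩
    exact hN m (by omega)
  -- hence the ratio bound
  have hratio : ∀ᶠ n in atTop, (q (n+1) : ℝ) ^ α ≤ 3 * d * q n := by
    filter_upwards [hev, hns'] with n hn hs
    set X : ℝ := (q (n+1) : ℝ) with hX'
    have hX : 0 < X := by have := hqR (n+1); positivity
    have hX1 : X ^ (-α) ≤ 1 := Real.rpow_le_one_of_one_le_of_nonpos (hqR (n+1)) (by linarith)
    have hb := nonsphere_bound hsphere (q n) (a n) (hq1 n) (hn.trans hX1) hs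
    have h1 : (1:ℝ) ≤ 3 * d * q n * X ^ (-α) := hb.trans (by gcongr)
    rw [Real.rpow_neg hX.le, ← div_eq_mul_inv, le_div_iff₀ (by positivity), one_mul] at h1
    exact h1
  obtain ⟨N, hN⟩ := eventually_atTop.1 (hev.and hratio)
  let A : ℕ → ℝ := fun k => 1 - ∑ i ∈ Finset.range k, α ^ (i + 1)
  have Arec : ∀ k, A (k+1) = 1 - α - α * (1 - A k) := by
    intro k
    simp only [A]
    rw [Finset.sum_range_succ', Finset.sum_congr rfl (fun i _ => pow_succ' α (i+1)),
      ← Finset.mul_sum]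
    ring
  have A1 : ∀ k < d, 0 ≤ A k := by
    intro k hk
    have : ∑ i ∈ Finset.range k, α ^ (i + 1) ≤ ∑ i ∈ Finset.range (d - 1), α ^ (i + 1) :=
      Finset.sum_le_sum_of_subset_of_nonneg (Finset.range_mono (by omega))
        fun i _ _ => by positivity
    simp only [A]; linarith
  have A2 : ∀ k < d, A k ≤ 1 := by
    intro k _
    have : 0 ≤ ∑ i ∈ Finset.range k, α ^ (i + 1) := Finset.sum_nonneg fun i _ => by positivity
    simp only [A]; linarith
  have Ad : A d < 0 := by
    have : ∑ k ∈ Finset.range d, H ^ (k + 1) < ∑ k ∈ Finset.range d, α ^ (k + 1) := by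
      apply Finset.sum_lt_sum_of_nonempty
      · simp; omega
      · intro i _
        exact pow_lt_pow_left₀ hαH hHpos.le (by omega)
    simp only [A]; linarith
  have hdR : (2:ℝ) ≤ d := by exact_mod_cast hd
  -- main estimate
  have main : ∀ n, N ≤ n → (1:ℝ) ≤ d.factorial * 2 ^ d * (3 * d) ^ d * (q n : ℝ) ^ A d := by
    intro n hn
    obtain ⟨e, e0, elt, hdet⟩ := chain_det hirr q a hq hq1 herr n
    have hne : ∀ k ≤ d, n ≤ e k := by
      intro k
      induction k with
      | zero => intro _; omega
      | succ k ih =>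
        intro hk
        have := elt k (by omega)
        have := ih (by omega)
        omega
    have hsucc : ∀ k < d, e (k+1) - 1 + 1 = e (k+1) := by
      intro k hk
      have := elt k hk
      omega
    have hprod : ∏ k : Fin d,
        (2 * q (e (k+1)) * ‖errv ξ (q (e (k+1) - 1)) (a (e (k+1) - 1))‖ / q (e (k+1) - 1) : ℝ)
        ≤ ∏ k : Fin d, (2 * ((q (e (k+1)) : ℝ) ^ (1 - α) / q (e (k+1) - 1))) := by
      refine Finset.prod_le_prod (fun k _ => by positivity) fun k _ => ?_
      have h1 := hne k k.2.le
      have h2 := elt k k.2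
      have h3 := (hN (e (k+1) - 1) (by omega)).1
      rw [hsucc k k.2] at h3
      have hX : (0:ℝ) < q (e (k+1)) := by have := hqR (e (k+1)); positivity
      calc _ ≤ (2 * q (e (k+1)) * (q (e (k+1)) : ℝ) ^ (-α) / q (e (k+1) - 1) : ℝ) := by gcongr
        _ = _ := by
          rw [sub_eq_add_neg, Real.rpow_add hX, Real.rpow_one]; ring
    have hg := growth (d := d) (α := α) (C := 3 * d) hα0 (by linarith)
      (fun k => (q (e k) : ℝ)) (fun k => (q (e (k+1) - 1) : ℝ)) A (fun k => hqR _)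
      (fun k hk => by
        have := elt k hk
        exact_mod_cast hq.monotone (by omega))
      (fun k hk => by
        have h1 := hne k hk.le
        have h2 := elt k hk
        have h3 := (hN (e (k+1) - 1) (by omega)).2
        rw [hsucc k hk] at h3
        exact h3)
      (by simp [A]) Arec A1 A2 d le_rfl
    rw [Finset.prod_mul_distrib, Finset.prod_const, Finset.card_univ, Fintype.card_fin,
      Fin.prod_univ_eq_prod_range
        (fun k => ((q (e (k+1)) : ℝ) ^ (1 - α) / q (e (k+1) - 1))) d] at hprod
    simp only [e0] at hg
    have hlast : (q (e d) : ℝ) ^ A d ≤ (q n : ℝ) ^ A d := by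
      apply Real.rpow_le_rpow_of_nonpos
      · have := hqR n; positivity
      · exact_mod_cast hq.monotone (hne d le_rfl)
      · exact Ad.le
    calc (1:ℝ) ≤ _ := hdet
      _ ≤ q n * (d.factorial * (2 ^ d *
          ∏ i ∈ Finset.range d, ((q (e (i+1)) : ℝ) ^ (1 - α) / q (e (i+1) - 1)))) := by gcongr
      _ = d.factorial * 2 ^ d * (q n *
          ∏ i ∈ Finset.range d, ((q (e (i+1)) : ℝ) ^ (1 - α) / q (e (i+1) - 1))) := by ring
      _ ≤ d.factorial * 2 ^ d * ((3 * d) ^ d * (q (e d) : ℝ) ^ A d) := by gcongr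
      _ ≤ d.factorial * 2 ^ d * ((3 * d) ^ d * (q n : ℝ) ^ A d) := by gcongr
      _ = _ := by ring
  have hlim : Tendsto (fun n => (d.factorial * 2 ^ d * (3 * d) ^ d * (q n : ℝ) ^ A d : ℝ))
      atTop (nhds 0) := by
    have h1 := (tendsto_rpow_neg_atTop (show 0 < - A d by linarith)).comp hqt
    have h2 := h1.const_mul (d.factorial * 2 ^ d * (3 * d) ^ d : ℝ)
    simpa [Function.comp_def] using h2
  obtain ⟨n, hn1, hn2⟩ := ((hlim.eventually (gt_mem_nhds zero_lt_one)).and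
    (eventually_ge_atTop N)).exists
  exact absurd (main n hn2) (not_le.2 hn1)
end

section
/- Let s ≥ 2 and d ≥ 2 be integers and let f be a homogeneous polynomial of degree s in d variables with rational coefficients such that the set {x ∈ ℚ^d : f(x) = 0} is finite. If ξ = (ξ₁,…,ξ_d) ∈ ℝ^d is totally irrational and f(ξ) = 1, then the uniform Diophantine exponent of ξ satisfies ω̂(ξ) ≤ H_{d−1,s}, where H_{d−1,s} is the unique positive root of the equation 1 − x = x · Σ_{k=1}^{d−1} (x/(s−1))^k. -/
open Filter

lemma abs_det_le_prod {n : ℕ} (M : Matrix (Fin n) (Fin n) ℝ) (B : Fin n → ℝ)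
    (h : ∀ i c, |M i c| ≤ B i) : |M.det| ≤ (n.factorial : ℝ) * ∏ i, B i := by
  rw [← Matrix.det_transpose, Matrix.det_apply]
  refine (Finset.abs_sum_le_sum_abs _ _).trans ?_
  have : ∀ σ ∈ (Finset.univ : Finset (Equiv.Perm (Fin n))),
      |Equiv.Perm.sign σ • ∏ i, M.transpose (σ i) i| ≤ ∏ i, B i := by
    intro σ _
    have h1 : |Equiv.Perm.sign σ • ∏ i, M.transpose (σ i) i| = |∏ i, M.transpose (σ i) i| := by
      rcases Int.units_eq_one_or (Equiv.Perm.sign σ) with h | h <;> simp [h]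
    rw [h1, Finset.abs_prod]
    exact Finset.prod_le_prod (fun i _ => abs_nonneg _) (fun i _ => h i (σ i))
  refine (Finset.sum_le_sum this).trans ?_
  simp [Finset.card_univ, Fintype.card_perm]

/-- The chain construction. -/
lemma chain_exists_s5 (d : ℕ) (z : ℕ → Fin (d+1) → ℚ) (ℓ : ℕ → ℝ) (c : ℕ → ℝ)
    (N : ℕ) (r K H γ : ℝ) (hK : 0 ≤ K) (hHγ : H < γ)
    (hspan : Submodule.span ℚ (z '' Set.Ici N) = ⊤)
    (hw : ∀ i ≥ N, ∃ lam : ℚ, ∀ t, |((z (i+1) t - lam * z i t : ℚ) : ℝ)|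
      ≤ Real.exp (K + (1-γ) * ℓ (i+1) - ℓ i))
    (hzN : z N ≠ 0)
    (h0 : ∀ t, |(z N t : ℝ)| ≤ Real.exp (ℓ N + K))
    (hr : ∀ i ≥ N, r * ℓ (i+1) ≤ ℓ i + K)
    (hmono : Monotone ℓ)
    (hc0 : c 0 = 1) (hc : ∀ k, c (k+1) = 1 - H + (c k - 1) * r)
    (hcn : ∀ k ≤ d, 0 ≤ c k) (hc1 : ∀ k, c k ≤ 1) (k : ℕ) (hk : k ≤ d) :
    ∃ (j : ℕ) (idx : Fin (k+1) → ℕ) (w : Fin (k+1) → Fin (d+1) → ℚ) (b : Fin (k+1) → ℝ),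
      N ≤ j ∧
      LinearIndependent ℚ (z ∘ idx) ∧
      (∀ i, N ≤ i → i ≤ j → z i ∈ Submodule.span ℚ (Set.range (z ∘ idx))) ∧
      (∀ g : (Fin (d+1) → ℚ) [⋀^Fin (k+1)]→ₗ[ℚ] ℚ, g (z ∘ idx) = g w) ∧
      (∀ m t, |(w m t : ℝ)| ≤ Real.exp (b m)) ∧
      ∑ m, b m ≤ c k * ℓ j + (2 * k + 1) * K - k * ((γ - H) * ℓ N) := by
  induction k with
  | zero =>
    refine ⟨N, fun _ => N, fun _ => z N, fun _ => ℓ N + K, le_rfl, ?_, ?_, ?_, ?_, ?_⟩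
    · have : Unique (Fin (0+1)) := inferInstanceAs (Unique (Fin 1))
      rw [linearIndependent_unique_iff]; simpa using hzN
    · intro i h1 h2
      obtain rfl : i = N := le_antisymm h2 h1
      exact Submodule.subset_span ⟨0, rfl⟩
    · intro g; rfl
    · intro m t; exact h0 t
    · simp [hc0]
  | succ k ih =>
    obtain ⟨j, idx, w, b, hNj, hli, hsp, hg, hwb, hsum⟩ := ih (by omega)
    have hex : ∃ i, N ≤ i ∧ z i ∉ Submodule.span ℚ (Set.range (z ∘ idx)) := by
      by_contra! hcon
      have h1 : Submodule.span ℚ (Set.range (z ∘ idx)) = ⊤ := by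
        rw [eq_top_iff, ← hspan, Submodule.span_le]
        rintro _ ⟨i, hi, rfl⟩
        exact hcon i hi
      have h2 := finrank_span_eq_card hli
      rw [h1, finrank_top] at h2
      simp at h2
      omega
    classical
    obtain ⟨hj1, hj2⟩ := Nat.find_spec hex
    have hmin := fun m hm => Nat.find_min hex (m := m) hm
    set j' := Nat.find hex with hj'
    have hjj : j < j' := by
      by_contra hcon
      exact hj2 (hsp j' hj1 (by omega))
    obtain ⟨p, hp⟩ : ∃ p, j' = p + 1 := ⟨j' - 1, by omega⟩
    have hpN : N ≤ p := by omega
    have hmin' : ∀ i, N ≤ i → i ≤ p → z i ∈ Submodule.span ℚ (Set.range (z ∘ idx)) := by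
      intro i h1 h2
      have := hmin i (by omega)
      simp only [not_and, not_not] at this
      exact this h1
    obtain ⟨lam, hlam⟩ := hw p hpN
    have hcomp : z ∘ (Fin.cons j' idx : Fin (k+2) → ℕ) = Fin.cons (z j') (z ∘ idx) := by
      funext m
      refine Fin.cases ?_ (fun m => ?_) m <;> simp
    refine ⟨j', Fin.cons j' idx, Fin.cons (z j' - lam • z p) w,
      Fin.cons (K + (1-γ) * ℓ (p+1) - ℓ p) b, by omega, ?_, ?_, ?_, ?_, ?_⟩
    · rw [hcomp, linearIndependent_finCons]
      exact ⟨hli, hj2⟩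
    · intro i h1 h2
      rw [hcomp, Fin.range_cons]
      rcases h2.lt_or_eq with h3 | h3
      · exact Submodule.span_mono (Set.subset_insert _ _) (hmin' i h1 (by omega))
      · rw [h3]; exact Submodule.subset_span (Set.mem_insert _ _)
    · intro g
      rw [hcomp]
      have e1 : g (Fin.cons (z p) (z ∘ idx)) = 0 := by
        apply AlternatingMap.map_linearDependent
        rw [linearIndependent_finCons]
        exact fun h => h.2 (hmin' p hpN le_rfl)
      have e2 : ∀ x v, g (Fin.cons x v) = g.curryLeft x v := fun x v => rfl
      rw [e2] at e1
      rw [e2, e2, ← hg, map_sub, map_smul, AlternatingMap.sub_apply, AlternatingMap.smul_apply, e1]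
      simp
    · intro m t
      refine Fin.cases ?_ (fun m => ?_) m
      · simpa [hp] using hlam t
      · simpa using hwb m t
    · rw [Fin.sum_univ_succ]
      simp only [Fin.cons_zero, Fin.cons_succ]
      have hck := hcn k (by omega)
      have h1 : c k * ℓ j ≤ c k * ℓ p := mul_le_mul_of_nonneg_left (hmono (by omega)) hck
      have h2 : (1 - c k) * (r * ℓ (p+1)) ≤ (1 - c k) * (ℓ p + K) :=
        mul_le_mul_of_nonneg_left (hr p hpN) (by linarith [hc1 k])
      have h3 : (γ - H) * ℓ N ≤ (γ - H) * ℓ (p+1) :=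
        mul_le_mul_of_nonneg_left (hmono (by omega)) (by linarith)
      have h4 : 0 ≤ c k * K := mul_nonneg hck hK
      rw [hc, hp]
      push_cast
      nlinarith

lemma core_bound (d : ℕ) (hd : 1 ≤ d) (zz : ℕ → Fin (d+1) → ℤ) (z : ℕ → Fin (d+1) → ℚ)
    (hz : ∀ i t, z i t = zz i t) (ℓ : ℕ → ℝ) (c : ℕ → ℝ)
    (N0 : ℕ) (r K H γ : ℝ) (hK : 0 ≤ K) (hHγ : H < γ)
    (hspan : ∀ N, Submodule.span ℚ (z '' Set.Ici N) = ⊤)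
    (hw : ∀ i ≥ N0, ∃ lam : ℚ, ∀ t, |((z (i+1) t - lam * z i t : ℚ) : ℝ)|
      ≤ Real.exp (K + (1-γ) * ℓ (i+1) - ℓ i))
    (hzN : ∀ i, z i ≠ 0)
    (h0 : ∀ i t, |(z i t : ℝ)| ≤ Real.exp (ℓ i + K))
    (hr : ∀ i ≥ N0, r * ℓ (i+1) ≤ ℓ i + K)
    (hmono : Monotone ℓ) (htop : Tendsto ℓ atTop atTop)
    (hc0 : c 0 = 1) (hc : ∀ k, c (k+1) = 1 - H + (c k - 1) * r)
    (hcn : ∀ k ≤ d, 0 ≤ c k) (hc1 : ∀ k, c k ≤ 1) (hcd : c d = 0) : False := by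
  obtain ⟨N, hN0, hN⟩ := ((eventually_ge_atTop N0).and (htop.eventually
    (eventually_gt_atTop ((Real.log ((d+1).factorial) + (2 * d + 1) * K) / (d * (γ - H)))))).exists
  obtain ⟨j, idx, w, b, hNj, hli, hsp, hg, hwb, hsum⟩ :=
    chain_exists_s5 d z ℓ c N r K H γ hK hHγ (hspan N) (fun i hi => hw i (hN0.trans hi)) (hzN N) (h0 N)
      (fun i hi => hr i (hN0.trans hi)) hmono hc0 hc hcn hc1 d le_rfl
  have hdp : (0:ℝ) < d * (γ - H) := mul_pos (by exact_mod_cast hd) (by linarith)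
  rw [div_lt_iff₀ hdp] at hN
  set A : Matrix (Fin (d+1)) (Fin (d+1)) ℚ := Matrix.of (z ∘ idx) with hA
  have hdet0 : A.det ≠ 0 := by
    have : LinearIndependent ℚ A.row := hli
    rw [Matrix.linearIndependent_rows_iff_isUnit, Matrix.isUnit_iff_isUnit_det] at this
    exact this.ne_zero
  have hdetw : A.det = (Matrix.of w).det := hg Matrix.detRowAlternating
  have hint : A.det = ((Matrix.of (zz ∘ idx)).det : ℤ) := by
    have : A = (Matrix.of (zz ∘ idx)).map (Int.castRingHom ℚ) := by
      ext i t; simp [hA, hz]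
    rw [this, ← RingHom.mapMatrix_apply, ← RingHom.map_det]; rfl
  have hge : (1:ℝ) ≤ |((Matrix.of w).det : ℝ)| := by
    rw [← hdetw, hint]
    have : (Matrix.of (zz ∘ idx)).det ≠ 0 := by
      intro h; rw [hint, h] at hdet0; simp at hdet0
    have := Int.one_le_abs this
    push_cast
    exact_mod_cast this
  have hle := abs_det_le_prod ((Matrix.of w).map (Rat.castHom ℝ)) (fun m => Real.exp (b m))
    (fun i t => by simpa using hwb i t)
  have e : ((Matrix.of w).det : ℝ) = ((Matrix.of w).map (Rat.castHom ℝ)).det := by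
    rw [← RingHom.mapMatrix_apply, ← RingHom.map_det]; rfl
  rw [e] at hge
  have h1 := hge.trans hle
  rw [← Real.exp_sum] at h1
  have hf : (0:ℝ) < (d+1).factorial := by exact_mod_cast Nat.factorial_pos _
  have h2 := Real.log_le_log one_pos h1
  rw [Real.log_one, Real.log_mul hf.ne' (Real.exp_pos _).ne', Real.log_exp] at h2
  rw [hcd] at hsum
  nlinarith
lemma aeval_smul_homog {d s : ℕ} {f : MvPolynomial (Fin d) ℚ} (hhom : f.IsHomogeneous s)
    {A : Type*} [Field A] [Algebra ℚ A] (c : A) (x : Fin d → A) :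
    MvPolynomial.aeval (fun i => c * x i) f = c ^ s * MvPolynomial.aeval x f := by
  rw [MvPolynomial.aeval_def, MvPolynomial.aeval_def, MvPolynomial.eval₂_eq', 
    MvPolynomial.eval₂_eq', Finset.mul_sum]
  refine Finset.sum_congr rfl fun m hm => ?_
  have hdeg : ∑ i, m i = s := by
    have := hhom (MvPolynomial.mem_support_iff.mp hm)
    rw [← this, Finsupp.weight_apply, Finsupp.sum_fintype] <;> simp
  simp only [mul_pow, Finset.prod_mul_distrib, Finset.prod_pow_eq_pow_sum, hdeg]
  ring

lemma homog_bound {d s : ℕ} {f : MvPolynomial (Fin d) ℚ} (hhom : f.IsHomogeneous s) :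
    ∃ C : ℝ, 0 < C ∧ ∀ x : Fin d → ℝ, |MvPolynomial.aeval x f| ≤ C * ‖x‖ ^ s := by
  refine ⟨1 + ∑ m ∈ f.support, |((f.coeff m : ℚ) : ℝ)|, by positivity, fun x => ?_⟩
  rw [MvPolynomial.aeval_def, MvPolynomial.eval₂_eq']
  refine (Finset.abs_sum_le_sum_abs _ _).trans ?_
  have h0 : (0:ℝ) ≤ ‖x‖ ^ s := by positivity
  rw [add_mul, Finset.sum_mul]
  have : ∑ m ∈ f.support, |(algebraMap ℚ ℝ) (f.coeff m) * ∏ i, x i ^ m i| ≤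
      ∑ m ∈ f.support, |((f.coeff m : ℚ) : ℝ)| * ‖x‖ ^ s := by
    refine Finset.sum_le_sum fun m hm => ?_
    have hdeg : ∑ i, m i = s := by
      have := hhom (MvPolynomial.mem_support_iff.mp hm)
      rw [← this, Finsupp.weight_apply, Finsupp.sum_fintype] <;> simp
    rw [abs_mul]
    refine mul_le_mul_of_nonneg_left ?_ (abs_nonneg _)
    rw [Finset.abs_prod, ← hdeg, ← Finset.prod_pow_eq_pow_sum]
    refine Finset.prod_le_prod (fun i _ => abs_nonneg _) fun i _ => ?_
    rw [abs_pow]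
    exact pow_le_pow_left₀ (abs_nonneg _) (norm_le_pi_norm x i) _
  linarith

lemma lipschitz_near {d : ℕ} (f : MvPolynomial (Fin d) ℚ) (ξ : Fin d → ℝ) :
    ∃ C : ℝ, 0 ≤ C ∧ ∀ x : Fin d → ℝ, ‖x - ξ‖ ≤ 1 →
      |MvPolynomial.aeval x f - MvPolynomial.aeval ξ f| ≤ C * ‖x - ξ‖ := by
  induction f using MvPolynomial.induction_on with
  | C a => exact ⟨0, le_rfl, fun x _ => by simp⟩
  | add p q hp hq =>
    obtain ⟨C, hC, h⟩ := hp
    obtain ⟨C', hC', h'⟩ := hq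
    refine ⟨C + C', by positivity, fun x hx => ?_⟩
    have h1 := h x hx
    have h2 := h' x hx
    rw [map_add, map_add, add_mul]
    refine le_trans ?_ (add_le_add h1 h2)
    refine le_trans (le_of_eq ?_) (abs_add_le _ _)
    congr 1; ring
  | mul_X p n hp =>
    obtain ⟨C, hC, h⟩ := hp
    refine ⟨C * (‖ξ‖ + 1) + |MvPolynomial.aeval ξ p|, by positivity, fun x hx => ?_⟩
    have h1 := h x hx
    rw [map_mul, map_mul, MvPolynomial.aeval_X, MvPolynomial.aeval_X]
    have h2 : |x n - ξ n| ≤ ‖x - ξ‖ := norm_le_pi_norm (x - ξ) n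
    have h3 : |ξ n| ≤ ‖ξ‖ := norm_le_pi_norm ξ n
    have h4 : |x n| ≤ ‖ξ‖ + 1 := by
      have := abs_add_le (x n - ξ n) (ξ n)
      rw [sub_add_cancel] at this
      linarith
    have e : (MvPolynomial.aeval x) p * x n - (MvPolynomial.aeval ξ) p * ξ n =
      ((MvPolynomial.aeval x) p - (MvPolynomial.aeval ξ) p) * x n
        + (MvPolynomial.aeval ξ) p * (x n - ξ n) := by ring
    rw [e]
    refine (abs_add_le _ _).trans ?_
    rw [abs_mul, abs_mul, add_mul]
    refine add_le_add ?_ ?_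
    · calc _ ≤ (C * ‖x - ξ‖) * (‖ξ‖ + 1) := by gcongr
        _ = _ := by ring
    · gcongr

lemma clear_denoms {d : ℕ} (f : MvPolynomial (Fin d) ℚ) :
    ∃ (D : ℤ) (G : (Fin d → ℤ) → ℤ), 0 < D ∧
      (∀ x, (G x : ℚ) = D * MvPolynomial.aeval (fun i => (x i : ℚ)) f) ∧
      ∀ (q : ℤ) (x y), (∀ i, q ∣ x i - y i) → q ∣ G x - G y := by
  induction f using MvPolynomial.induction_on with
  | C a =>
    refine ⟨a.den, fun _ => a.num, by exact_mod_cast a.den_pos, fun x => ?_, fun q x y _ => by simp⟩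
    simp [Rat.den_mul_eq_num]
  | add p q hp hq =>
    obtain ⟨D, G, hD, h, h'⟩ := hp
    obtain ⟨D2, G2, hD2, h2, h2'⟩ := hq
    refine ⟨D * D2, fun x => D2 * G x + D * G2 x, by positivity, fun x => ?_, fun q x y hxy => ?_⟩
    · rw [map_add]; push_cast; rw [h, h2]; ring
    · change q ∣ (D2 * G x + D * G2 x) - (D2 * G y + D * G2 y)
      have := dvd_add ((h' q x y hxy).mul_left D2) ((h2' q x y hxy).mul_left D)
      refine (Eq.mpr ?_ this)
      congr 1
      ring
  | mul_X p n hp =>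
    obtain ⟨D, G, hD, h, h'⟩ := hp
    refine ⟨D, fun x => G x * x n, hD, fun x => ?_, fun q x y hxy => ?_⟩
    · rw [map_mul, MvPolynomial.aeval_X]; push_cast; rw [h]; ring
    · change q ∣ G x * x n - G y * y n
      have := dvd_add ((h' q x y hxy).mul_right (x n)) ((hxy n).mul_left (G y))
      refine (Eq.mpr ?_ this)
      congr 1
      ring

lemma anisotropic {d s : ℕ} {f : MvPolynomial (Fin d) ℚ} (hhom : f.IsHomogeneous s)
    (hfin : {x : Fin d → ℚ | MvPolynomial.eval x f = 0}.Finite) (v : Fin d → ℚ) (hv : v ≠ 0) :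
    MvPolynomial.aeval v f ≠ 0 := by
  intro h
  refine Set.infinite_of_injective_forall_mem (f := fun n : ℕ => (fun i => ((n:ℚ)) * v i)) ?_ ?_ hfin
  · intro m n hmn
    obtain ⟨i, hi⟩ := Function.ne_iff.mp hv
    have := congrFun hmn i
    simp only at this
    have := mul_right_cancel₀ hi this
    exact_mod_cast this
  · intro n
    have := aeval_smul_homog hhom (n:ℚ) v
    rw [h, mul_zero, MvPolynomial.aeval_eq_eval] at this
    exact this

lemma aeval_cast {d : ℕ} (f : MvPolynomial (Fin d) ℚ) (a : Fin d → ℤ) :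
    ((MvPolynomial.aeval (fun i => (a i : ℚ)) f : ℚ) : ℝ) =
      MvPolynomial.aeval (fun i => (a i : ℝ)) f := by
  have := MvPolynomial.map_aeval (fun i => (a i : ℚ)) (algebraMap ℚ ℝ) f
  simp only [eq_ratCast] at this
  rw [this]
  simp [MvPolynomial.aeval_def, MvPolynomial.eval₂_eq']

lemma on_surface {d s : ℕ} (hs : 2 ≤ s) {f : MvPolynomial (Fin d) ℚ} (hhom : f.IsHomogeneous s)
    (hfin : {x : Fin d → ℚ | MvPolynomial.eval x f = 0}.Finite) :
    ∃ C : ℝ, 0 < C ∧ ∀ (q q' : ℤ) (a a' : Fin d → ℤ), 1 ≤ q →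
      MvPolynomial.aeval (fun i => (a i : ℚ)) f = (q : ℚ) ^ s →
      (fun i => q * a' i - q' * a i) ≠ 0 →
      (q : ℝ) ≤ C * ‖(fun i => ((q * a' i - q' * a i : ℤ) : ℝ))‖ ^ s := by
  obtain ⟨D, G, hD, hG, hmod⟩ := clear_denoms f
  obtain ⟨C, hC, hb⟩ := homog_bound hhom
  have hDr : (0:ℝ) < D := by exact_mod_cast hD
  refine ⟨D * C, by positivity, fun q q' a a' hq hf hv => ?_⟩
  set v : Fin d → ℤ := fun i => q * a' i - q' * a i with hvdef
  have h1 : q ∣ G v - G (fun i => -q' * a i) := hmod q _ _ fun i => ⟨a' i, by simp [hvdef]⟩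
  have h2 : G (fun i => -q' * a i) = D * (-q') ^ s * q ^ s := by
    have := hG (fun i => -q' * a i)
    have e := aeval_smul_homog hhom ((-q' : ℤ):ℚ) (fun i => (a i:ℚ))
    push_cast at this e
    rw [e, hf] at this
    have : ((G (fun i => -q' * a i) : ℤ) : ℚ) = ((D * (-q') ^ s * q ^ s : ℤ) : ℚ) := by
      rw [this]; push_cast; ring
    exact_mod_cast this
  have h3 : q ∣ G v := by
    have : q ∣ G (fun i => -q' * a i) := by
      rw [h2]; exact (dvd_pow_self q (by omega)).mul_left _
    simpa using dvd_add h1 this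
  have h4 : G v ≠ 0 := by
    intro h
    have := hG v
    rw [h] at this
    have hv' : (fun i => (v i : ℚ)) ≠ 0 := by
      intro h; apply hv; funext i; simpa using congrFun h i
    have := anisotropic hhom hfin _ hv'
    simp_all
  have h5 : q ≤ |G v| := Int.le_of_dvd (abs_pos.mpr h4) ((dvd_abs _ _).mpr h3)
  have h6 : (q:ℝ) ≤ |(G v : ℝ)| := by exact_mod_cast h5
  have h7 : (G v : ℝ) = D * MvPolynomial.aeval (fun i => (v i : ℝ)) f := by
    rw [← aeval_cast]; exact_mod_cast congrArg (fun x : ℚ => (x:ℝ)) (hG v)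
  rw [h7, abs_mul, abs_of_pos hDr] at h6
  refine h6.trans ?_
  rw [mul_assoc]
  exact mul_le_mul_of_nonneg_left (hb _) hDr.le

lemma off_surface {d s : ℕ} (hs : 2 ≤ s) {f : MvPolynomial (Fin d) ℚ} (hhom : f.IsHomogeneous s)
    (ξ : Fin d → ℝ) (hsurf : MvPolynomial.aeval ξ f = 1) :
    ∃ C : ℝ, 0 < C ∧ ∀ (q : ℤ) (a : Fin d → ℤ), 1 ≤ q →
      MvPolynomial.aeval (fun i => (a i : ℚ)) f ≠ (q : ℚ) ^ s →
      ‖(fun i => (q : ℝ) * ξ i - a i)‖ ≤ 1 →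
      1 ≤ C * (q:ℝ) ^ (s - 1) * ‖(fun i => (q : ℝ) * ξ i - a i)‖ := by
  obtain ⟨D, G, hD, hG, -⟩ := clear_denoms f
  obtain ⟨C, hC, hb⟩ := lipschitz_near f ξ
  have hDr : (0:ℝ) < D := by exact_mod_cast hD
  refine ⟨D * (C + 1), by positivity, fun q a hq hf hL => ?_⟩
  set L := ‖(fun i => (q : ℝ) * ξ i - a i)‖ with hLdef
  have hqr : (1:ℝ) ≤ q := by exact_mod_cast hq
  have hq0 : (0:ℝ) < q := by linarith
  have h1 : (1:ℝ) ≤ |D * (MvPolynomial.aeval (fun i => (a i : ℝ)) f - (q:ℝ) ^ s)| := by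
    have e : (D * (MvPolynomial.aeval (fun i => (a i : ℝ)) f - (q:ℝ) ^ s)) =
        ((G a - D * q ^ s : ℤ) : ℝ) := by
      have := congrArg (fun x : ℚ => (x:ℝ)) (hG a)
      push_cast [aeval_cast] at this
      push_cast
      rw [this]; ring
    rw [e]
    have : G a - D * q ^ s ≠ 0 := by
      intro h
      have h' : G a = D * q ^ s := by linarith
      have := hG a
      rw [h'] at this
      push_cast at this
      have hD0 : (D:ℚ) ≠ 0 := by exact_mod_cast hD.ne'
      exact hf (mul_left_cancel₀ hD0 this).symm
    exact_mod_cast Int.one_le_abs this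
  have hx : ‖(fun i => (q:ℝ)⁻¹ * (a i : ℝ)) - ξ‖ = (q:ℝ)⁻¹ * L := by
    have : (fun i => (q:ℝ)⁻¹ * (a i : ℝ)) - ξ = (-(q:ℝ)⁻¹) • (fun i => (q : ℝ) * ξ i - a i) := by
      funext i; simp; field_simp; ring
    rw [this, norm_smul, norm_neg, Real.norm_of_nonneg (by positivity)]
  have hinv : (q:ℝ)⁻¹ ≤ 1 := inv_le_one_of_one_le₀ hqr
  have hL0 : 0 ≤ L := norm_nonneg _
  have h2 := hb (fun i => (q:ℝ)⁻¹ * (a i : ℝ)) (by rw [hx]; nlinarith [inv_pos.mpr hq0])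
  rw [hx, hsurf, aeval_smul_homog hhom] at h2
  rw [abs_mul, abs_of_pos hDr] at h1
  have e : MvPolynomial.aeval (fun i => (a i : ℝ)) f - (q:ℝ) ^ s =
      (q:ℝ)^s * ((q:ℝ)⁻¹ ^ s * MvPolynomial.aeval (fun i => (a i : ℝ)) f - 1) := by
    rw [inv_pow, mul_sub, ← mul_assoc, mul_inv_cancel₀ (by positivity)]; ring
  rw [e, abs_mul, abs_of_pos (by positivity : (0:ℝ) < (q:ℝ)^s)] at h1
  have hsp : (q:ℝ)^s = (q:ℝ)^(s-1) * q := by rw [← pow_succ]; congr 1; omega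
  calc (1:ℝ) ≤ _ := h1
    _ ≤ D * ((q:ℝ)^s * (C * ((q:ℝ)⁻¹ * L))) := by gcongr
    _ = D * C * (q:ℝ)^(s-1) * L := by rw [hsp]; field_simp
    _ ≤ D * (C+1) * (q:ℝ)^(s-1) * L := by gcongr; linarith

/-- distance of `n ξ` to the nearest integer point -/
noncomputable def distInt {d : ℕ} (ξ : Fin d → ℝ) (n : ℕ) : ℝ :=
  ‖(fun j => (n : ℝ) * ξ j - (round ((n : ℝ) * ξ j) : ℤ))‖

lemma distInt_le_one {d : ℕ} (ξ : Fin d → ℝ) (n : ℕ) : distInt ξ n ≤ 1 := by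
  refine (pi_norm_le_iff_of_nonneg zero_le_one).mpr fun j => ?_
  have := abs_sub_round ((n : ℝ) * ξ j)
  rw [Real.norm_eq_abs]; linarith

lemma coord_le_distInt {d : ℕ} (ξ : Fin d → ℝ) (n : ℕ) (j : Fin d) :
    |(n : ℝ) * ξ j - (round ((n : ℝ) * ξ j) : ℤ)| ≤ distInt ξ n :=
  norm_le_pi_norm (fun j => (n : ℝ) * ξ j - (round ((n : ℝ) * ξ j) : ℤ)) j

lemma distInt_pos {d : ℕ} (hd : 1 ≤ d) (ξ : Fin d → ℝ) (hirr : TotallyIrrational ξ) (n : ℕ)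
    (hn : 1 ≤ n) : 0 < distInt ξ n := by
  by_contra hcon
  let j : Fin d := ⟨0, hd⟩
  have h1 := coord_le_distInt ξ n j
  have h2 : (n : ℝ) * ξ j - (round ((n : ℝ) * ξ j) : ℤ) = 0 :=
    abs_nonpos_iff.mp (by linarith)
  rw [TotallyIrrational, Fintype.linearIndependent_iff] at hirr
  have := hirr (Fin.cons (-(round ((n : ℝ) * ξ j) : ℤ) : ℚ) (Pi.single j (n:ℚ))) ?_ j.succ
  · simp at this; omega
  · rw [Fin.sum_univ_succ]
    simp only [Fin.cons_zero, Fin.cons_succ]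
    rw [Finset.sum_eq_single j]
    · simp [Rat.smul_def]; linarith
    · intro b _ hb; simp [hb]
    · simp

lemma unif_distInt {d : ℕ} (ξ : Fin d → ℝ) (γ : ℝ) (hU : UnifApprox ξ γ) :
    ∀ᶠ Q : ℝ in atTop, ∃ n : ℕ, 1 ≤ n ∧ (n : ℝ) ≤ Q ∧ distInt ξ n < Q ^ (-γ) := by
  filter_upwards [hU, eventually_gt_atTop 0] with Q hQ hQ0
  obtain ⟨q, a, h1, h2, h3⟩ := hQ
  lift q to ℕ using by omega
  refine ⟨q, by exact_mod_cast h1, by exact_mod_cast h2, ?_⟩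
  refine (pi_norm_lt_iff (Real.rpow_pos_of_pos hQ0 _)).mpr fun j => ?_
  refine lt_of_le_of_lt (round_le _ (a j)) ?_
  exact_mod_cast h3 j

lemma best_seq {d : ℕ} (hd : 1 ≤ d) (ξ : Fin d → ℝ) (hirr : TotallyIrrational ξ) (γ : ℝ)
    (hγ : 0 < γ) (hU : UnifApprox ξ γ) :
    ∃ q : ℕ → ℕ, (∀ i, 1 ≤ q i) ∧ StrictMono q ∧
      (∀ i, distInt ξ (q (i+1)) < distInt ξ (q i)) ∧
      ∃ C : ℝ, 0 < C ∧ ∃ N, ∀ i ≥ N, distInt ξ (q i) ≤ C * (q (i+1) : ℝ) ^ (-γ) := by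
  have hUd := unif_distInt ξ γ hU
  have hnext : ∀ n : ℕ, ∃ m, 1 ≤ n → (n < m ∧ distInt ξ m < distInt ξ n ∧
      ∀ k, n ≤ k → k < m → distInt ξ n ≤ distInt ξ k) := by
    intro n
    by_cases hn : 1 ≤ n
    swap
    · exact ⟨0, fun h => absurd h hn⟩
    have hex : ∃ m, n < m ∧ distInt ξ m < distInt ξ n := by
      -- the minimum of distInt over [1,n] is positive
      obtain ⟨k0, hk0, hmin⟩ := Finset.exists_min_image (Finset.Icc 1 n) (distInt ξ)
        ⟨1, by simp [hn]⟩
      have hpos := distInt_pos hd ξ hirr k0 (Finset.mem_Icc.mp hk0).1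
      have ht : Tendsto (fun Q : ℝ => Q ^ (-γ)) atTop (nhds 0) := tendsto_rpow_neg_atTop hγ
      obtain ⟨Q, hQ1, hQ2⟩ := (hUd.and (ht.eventually (gt_mem_nhds hpos))).exists
      obtain ⟨m, hm1, -, hm2⟩ := hQ1
      have hmlt : distInt ξ m < distInt ξ k0 := hm2.trans hQ2
      refine ⟨m, ?_, hmlt.trans_le (hmin n (by simp [hn]))⟩
      by_contra hcon
      have := hmin m (Finset.mem_Icc.mpr ⟨hm1, by omega⟩)
      linarith
    classical
    refine ⟨Nat.find hex, fun _ => ⟨(Nat.find_spec hex).1, (Nat.find_spec hex).2, fun k h1 h2 => ?_⟩⟩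
    have := Nat.find_min hex h2
    rcases h1.eq_or_lt with h | h
    · rw [h]
    · push Not at this
      exact this h
  choose nx hnx using hnext
  let q : ℕ → ℕ := fun i => nx^[i] 1
  have hqs : ∀ i, q (i+1) = nx (q i) := fun i => Function.iterate_succ_apply' nx i 1
  have hq1 : ∀ i, 1 ≤ q i := by
    intro i
    induction i with
    | zero => simp [q]
    | succ i ih => rw [hqs]; exact ih.trans (hnx _ ih).1.le
  have hmono : StrictMono q := strictMono_nat_of_lt_succ fun i => by
    rw [hqs]; exact (hnx _ (hq1 i)).1
  have hlt : ∀ i, distInt ξ (q (i+1)) < distInt ξ (q i) := fun i => by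
    rw [hqs]; exact (hnx _ (hq1 i)).2.1
  have hrec : ∀ i k, 1 ≤ k → k < q (i+1) → distInt ξ (q i) ≤ distInt ξ k := by
    intro i
    induction i with
    | zero =>
      intro k h1 h2
      rw [hqs] at h2
      exact (hnx _ (hq1 0)).2.2 k h1 h2
    | succ i ih =>
      intro k h1 h2
      rcases lt_or_ge k (q (i+1)) with h | h
      · exact (hlt i).le.trans (ih k h1 h)
      · rw [hqs (i+1)] at h2
        exact (hnx _ (hq1 (i+1))).2.2 k h h2
  refine ⟨q, hq1, hmono, hlt, (1/2:ℝ) ^ (-γ), by positivity, ?_⟩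
  have ht : Tendsto (fun i : ℕ => (1/2:ℝ) * (q (i+1) : ℝ)) atTop atTop := by
    apply Tendsto.const_mul_atTop (by norm_num)
    exact tendsto_natCast_atTop_atTop.comp (hmono.tendsto_atTop.comp (tendsto_add_atTop_nat 1))
  obtain ⟨N, hN⟩ := eventually_atTop.mp (ht.eventually hUd)
  refine ⟨N, fun i hi => ?_⟩
  obtain ⟨n, hn1, hn2, hn3⟩ := hN i hi
  have hp : (0:ℝ) < q (i+1) := by exact_mod_cast hq1 (i+1)
  have hnlt : n < q (i+1) := by
    have : (n:ℝ) < q (i+1) := by linarith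
    exact_mod_cast this
  have := (hrec i n hn1 hnlt).trans hn3.le
  rwa [Real.mul_rpow (by norm_num) hp.le] at this

/-- integer vector `(n, round (n ξ))` -/
noncomputable def vecInt {d : ℕ} (ξ : Fin d → ℝ) (n : ℕ) : Fin (d+1) → ℤ :=
  Fin.cons (n : ℤ) (fun j => round ((n : ℝ) * ξ j))

lemma span_tail {d : ℕ} (ξ : Fin d → ℝ) (hirr : TotallyIrrational ξ) (q : ℕ → ℕ)
    (hq1 : ∀ i, 1 ≤ q i) (hmono : StrictMono q) (N : ℕ) :
    Submodule.span ℚ ((fun i => (fun t => (vecInt ξ (q i) t : ℚ))) '' Set.Ici N) = ⊤ := by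
  by_contra hcon
  obtain ⟨φ, hφ0, hφ⟩ := Submodule.exists_le_ker_of_lt_top _ (lt_top_iff_ne_top.mpr hcon)
  set e : Fin (d+1) → ℚ := fun i => φ fun j => if i = j then 1 else 0 with he
  have hφe : ∀ x, φ x = ∑ i, x i * e i := fun x => LinearMap.pi_apply_eq_sum_univ φ x
  have hlim : ∀ t : Fin (d+1), Tendsto (fun i => (vecInt ξ (q i) t : ℝ) / (q i : ℝ)) atTop
      (nhds ((Fin.cons 1 ξ : Fin (d+1) → ℝ) t)) := by
    intro t
    refine Fin.cases ?_ (fun j => ?_) t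
    · refine tendsto_const_nhds.congr fun i => ?_
      have : (0:ℝ) < q i := by exact_mod_cast hq1 i
      simp [vecInt, this.ne']
    · have h0 : Tendsto (fun i => 1 / (q i : ℝ)) atTop (nhds 0) :=
        (tendsto_const_div_atTop_nhds_zero_nat (1:ℝ)).comp hmono.tendsto_atTop
      rw [tendsto_iff_norm_sub_tendsto_zero]
      refine squeeze_zero (fun _ => norm_nonneg _) (fun i => ?_) h0
      have hp : (0:ℝ) < q i := by exact_mod_cast hq1 i
      have h1 := (coord_le_distInt ξ (q i) j).trans (distInt_le_one ξ (q i))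
      have e1 : (vecInt ξ (q i) j.succ : ℝ) / (q i : ℝ) - (Fin.cons 1 ξ : Fin (d+1) → ℝ) j.succ =
          -((q i : ℝ) * ξ j - (round ((q i : ℝ) * ξ j) : ℤ)) / (q i : ℝ) := by
        simp [vecInt]; field_simp
      rw [e1, norm_div, norm_neg, Real.norm_eq_abs, Real.norm_of_nonneg hp.le]
      gcongr
  have hzero : ∑ t, (e t : ℝ) * (Fin.cons 1 ξ : Fin (d+1) → ℝ) t = 0 := by
    have h1 : Tendsto (fun i => ∑ t, (e t : ℝ) * ((vecInt ξ (q i) t : ℝ) / (q i : ℝ))) atTop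
        (nhds (∑ t, (e t : ℝ) * (Fin.cons 1 ξ : Fin (d+1) → ℝ) t)) :=
      tendsto_finsetSum _ fun t _ => (hlim t).const_mul _
    refine tendsto_nhds_unique (h1.congr' ?_) tendsto_const_nhds
    filter_upwards [eventually_ge_atTop N] with i hi
    have h2 : φ (fun t => (vecInt ξ (q i) t : ℚ)) = 0 :=
      hφ (Submodule.subset_span ⟨i, hi, rfl⟩)
    rw [hφe] at h2
    have h3 : ∑ t, (vecInt ξ (q i) t : ℝ) * (e t : ℝ) = 0 := by exact_mod_cast congrArg (fun x : ℚ => (x:ℝ)) h2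
    calc _ = (∑ t, (vecInt ξ (q i) t : ℝ) * (e t : ℝ)) / (q i : ℝ) := by
          rw [Finset.sum_div]; exact Finset.sum_congr rfl fun t _ => by ring
      _ = 0 := by rw [h3, zero_div]
  rw [TotallyIrrational, Fintype.linearIndependent_iff] at hirr
  have := hirr e (by simpa [Rat.smul_def] using hzero)
  apply hφ0
  ext x
  simp [hφe, this]

set_option maxHeartbeats 2000000 in
/-- Theorem 2a: if `f` is a homogeneous polynomial of degree `s ≥ 2` in `d ≥ 2` variables
with rational coefficients having only finitely many rational zeros, and `ξ` is totally
irrational with `f(ξ) = 1`, then `ω̂(ξ) ≤ H_{d-1,s}`, where `H_{d-1,s}` is the unique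
positive root of `1 - x = x · Σ_{k=1}^{d-1} (x/(s-1))^k`. -/
theorem uniform_exponent_le_of_on_homogeneous_hypersurface
    (d s : ℕ) (hd : 2 ≤ d) (hs : 2 ≤ s)
    (f : MvPolynomial (Fin d) ℚ) (hhom : f.IsHomogeneous s)
    (hfin : {x : Fin d → ℚ | MvPolynomial.eval x f = 0}.Finite)
    (ξ : Fin d → ℝ)
    (hirr : TotallyIrrational ξ)
    (hsurf : MvPolynomial.aeval ξ f = 1)
    (H : ℝ) (hHpos : 0 < H)
    (hHroot : 1 - H = H * ∑ k ∈ Finset.range (d - 1), (H / ((s : ℝ) - 1)) ^ (k + 1)) :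
    ∀ γ : ℝ, UnifApprox ξ γ → γ ≤ H := by
  intro γ hU
  by_contra hcon
  have hHγ : H < γ := not_le.mp hcon
  have hγ0 : 0 < γ := hHpos.trans hHγ
  have hs1 : (1:ℝ) ≤ (s:ℝ) - 1 := by
    have : (2:ℝ) ≤ s := by exact_mod_cast hs
    linarith
  set r : ℝ := H / ((s:ℝ) - 1) with hrdef
  have hr0 : 0 < r := by positivity
  have hrH : r * ((s:ℝ) - 1) = H := by rw [hrdef]; field_simp
  -- the sequence c
  let c : ℕ → ℝ := fun k => 1 - H * ∑ i ∈ Finset.range k, r ^ i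
  have hc0 : c 0 = 1 := by simp [c]
  have hcs : ∀ k, c (k+1) = 1 - H + (c k - 1) * r := by
    intro k; simp only [c]; rw [geom_sum_succ]; ring
  have hgeom : H * ∑ i ∈ Finset.range d, r ^ i = 1 := by
    obtain ⟨e, rfl⟩ : ∃ e, d = e + 1 := ⟨d - 1, by omega⟩
    rw [Finset.sum_range_succ']
    simp only [Nat.add_sub_cancel] at hHroot
    simp only [pow_zero]
    linarith
  have hcd : c d = 0 := by simp only [c]; rw [hgeom]; ring
  have hc1 : ∀ k, c k ≤ 1 := by
    intro k
    have : 0 ≤ H * ∑ i ∈ Finset.range k, r ^ i := by positivity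
    simp only [c]; linarith
  have hcn : ∀ k ≤ d, 0 ≤ c k := by
    intro k hk
    rw [← hcd]
    simp only [c]
    have : ∑ i ∈ Finset.range k, r ^ i ≤ ∑ i ∈ Finset.range d, r ^ i :=
      Finset.sum_le_sum_of_subset_of_nonneg (Finset.range_mono hk) (fun _ _ _ => by positivity)
    nlinarith
  have hHs : (s:ℝ) * (1 - H) < 1 := by
    have h1 : (∑ i ∈ Finset.range d, r ^ i) * (1 - r) = 1 - r ^ d := geom_sum_mul_neg r d
    have h2 : 0 < r ^ d := by positivity
    have h3 : 1 - r < H := by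
      have : H * ((∑ i ∈ Finset.range d, r ^ i) * (1 - r)) = 1 - r := by
        rw [← mul_assoc, hgeom, one_mul]
      rw [h1] at this
      nlinarith
    nlinarith
  have hsγ : 0 < 1 - (s:ℝ) * (1 - γ) := by
    have : (s:ℝ) * (1 - γ) ≤ s * (1 - H) := by gcongr
    linarith
  obtain ⟨q, hq1, hmono, hlt, C, hC, N1, hN1⟩ := best_seq (by omega : 1 ≤ d) ξ hirr γ hγ0 hU
  obtain ⟨C1, hC1, hoff⟩ := off_surface hs hhom ξ hsurf
  obtain ⟨C2, hC2, hon⟩ := on_surface hs hhom hfin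
  have hqp : ∀ i, (0:ℝ) < q i := fun i => by exact_mod_cast hq1 i
  have hDp : ∀ i, 0 < distInt ξ (q i) := fun i => distInt_pos (by omega) ξ hirr _ (hq1 i)
  let ℓ : ℕ → ℝ := fun i => Real.log (q i)
  have hexp : ∀ i, Real.exp (ℓ i) = q i := fun i => Real.exp_log (hqp i)
  have hℓ0 : ∀ i, 0 ≤ ℓ i := fun i => Real.log_nonneg (by exact_mod_cast hq1 i)
  have hℓmono : Monotone ℓ := fun i j hij =>
    Real.log_le_log (hqp i) (by exact_mod_cast hmono.monotone hij)
  have hℓtop : Tendsto ℓ atTop atTop :=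
    Real.tendsto_log_atTop.comp (tendsto_natCast_atTop_atTop.comp hmono.tendsto_atTop)
  have hlogL : ∀ i ≥ N1, Real.log (distInt ξ (q i)) ≤ Real.log C - γ * ℓ (i+1) := by
    intro i hi
    have := Real.log_le_log (hDp i) (hN1 i hi)
    rw [Real.log_mul hC.ne' (Real.rpow_pos_of_pos (hqp _) _).ne', Real.log_rpow (hqp _)] at this
    simp only [ℓ]; linarith
  -- eventually the best approximations are off the surface
  obtain ⟨N2, hN2⟩ := eventually_atTop.mp (hℓtop.eventually (eventually_gt_atTop
    ((Real.log C2 + s * (Real.log 2 + Real.log C)) / (1 - (s:ℝ) * (1 - γ)))))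
  have hoffs : ∀ i, N1 + 1 ≤ i → N2 ≤ i →
      MvPolynomial.aeval (fun j => ((round ((q i : ℝ) * ξ j) : ℤ) : ℚ)) f ≠ ((q i : ℤ) : ℚ) ^ s := by
    intro i hi1 hi2 heq
    obtain ⟨p, rfl⟩ : ∃ p, i = p + 1 := ⟨i - 1, by omega⟩
    have hpp : (q p : ℝ) < q (p+1) := by exact_mod_cast hmono (Nat.lt_succ_self p)
    have hv := hon (q (p+1)) (q p) (fun j => round ((q (p+1) : ℝ) * ξ j))
      (fun j => round ((q p : ℝ) * ξ j)) (by exact_mod_cast hq1 (p+1)) heq ?_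
    · set L := distInt ξ (q p) with hL
      have hLp : 0 < L := hDp p
      have hnorm : ‖(fun j => (((q (p+1) : ℤ) * round ((q p : ℝ) * ξ j)
          - (q p : ℤ) * round ((q (p+1) : ℝ) * ξ j) : ℤ) : ℝ))‖ ≤ 2 * (q (p+1) * L) := by
        refine (pi_norm_le_iff_of_nonneg (by positivity)).mpr fun j => ?_
        have h1 := coord_le_distInt ξ (q p) j
        have h2 := (coord_le_distInt ξ (q (p+1)) j).trans (hlt p).le
        have e : (((q (p+1) : ℤ) * round ((q p : ℝ) * ξ j)
            - (q p : ℤ) * round ((q (p+1) : ℝ) * ξ j) : ℤ) : ℝ) =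
            (q p : ℝ) * ((q (p+1) : ℝ) * ξ j - (round ((q (p+1) : ℝ) * ξ j) : ℤ))
            - (q (p+1) : ℝ) * ((q p : ℝ) * ξ j - (round ((q p : ℝ) * ξ j) : ℤ)) := by
          push_cast; ring
        rw [e, Real.norm_eq_abs]
        refine (abs_sub _ _).trans ?_
        rw [abs_mul, abs_mul, abs_of_pos (hqp p), abs_of_pos (hqp (p+1))]
        have h3 := mul_le_mul hpp.le h2 (abs_nonneg _) (hqp (p+1)).le
        have h4 := mul_le_mul_of_nonneg_left h1 (hqp (p+1)).le
        linarith
      have h5 : (q (p+1) : ℝ) ≤ C2 * (2 * (q (p+1) * L)) ^ s := by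
        refine le_trans (by exact_mod_cast hv) ?_
        gcongr
      have hqq := hqp (p+1)
      have h6 := Real.log_le_log (hqp (p+1)) h5
      rw [Real.log_mul hC2.ne' (by positivity), Real.log_pow, Real.log_mul (by norm_num)
        (by positivity), Real.log_mul (by positivity) (by positivity)] at h6
      have h7 := hlogL p (by omega)
      have h8 := hN2 (p+1) hi2
      rw [div_lt_iff₀ hsγ] at h8
      have h9 : (s:ℝ) * Real.log L ≤ s * (Real.log C - γ * ℓ (p+1)) := by gcongr
      have h10 : ℓ (p+1) = Real.log (q (p+1)) := rfl
      rw [← h10] at h6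
      nlinarith
    · intro h0
      have e : (q p : ℝ) * distInt ξ (q (p+1)) = q (p+1) * distInt ξ (q p) := by
        unfold distInt
        rw [← Real.norm_of_nonneg (hqp p).le, ← Real.norm_of_nonneg (hqp (p+1)).le, ← norm_smul,
          ← norm_smul]
        rw [Real.norm_of_nonneg (hqp p).le, Real.norm_of_nonneg (hqp (p+1)).le]
        congr 1
        funext j
        have h1 := congrFun h0 j
        simp only [Pi.zero_apply] at h1
        have h2 : (q (p+1) : ℝ) * (round ((q p : ℝ) * ξ j) : ℤ)
          - (q p : ℝ) * (round ((q (p+1) : ℝ) * ξ j) : ℤ) = 0 := by exact_mod_cast h1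
        simp only [Pi.smul_apply, smul_eq_mul]
        linarith
      have h1 := hlt p
      have h2 := hDp (p+1)
      have h3 := hqp p
      nlinarith
  -- constants
  set K : ℝ := |Real.log (2 * C)| + Real.log (‖ξ‖ + 1) + |Real.log (C1 * C)| with hK
  have hξ0 : 0 ≤ Real.log (‖ξ‖ + 1) := Real.log_nonneg (by linarith [norm_nonneg ξ])
  have hK0 : 0 ≤ K := by positivity
  have hK1 : Real.log (2 * C) ≤ K := by
    linarith [le_abs_self (Real.log (2 * C)), abs_nonneg (Real.log (C1 * C))]
  have hK2 : Real.log (‖ξ‖ + 1) ≤ K := by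
    linarith [abs_nonneg (Real.log (2 * C)), abs_nonneg (Real.log (C1 * C))]
  have hK3 : Real.log (C1 * C) ≤ K := by
    linarith [le_abs_self (Real.log (C1 * C)), abs_nonneg (Real.log (2 * C))]
  refine core_bound d (by omega) (fun i => vecInt ξ (q i)) (fun i t => (vecInt ξ (q i) t : ℚ))
    (fun i t => rfl) ℓ c (N1 + 1 + N2) r K H γ hK0 hHγ (span_tail ξ hirr q hq1 hmono) ?_ ?_ ?_ ?_
    hℓmono hℓtop hc0 hcs hcn hc1 hcd
  · intro i hi
    refine ⟨(q (i+1) : ℚ) / (q i : ℚ), fun t => ?_⟩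
    have hqi := hqp i
    have hqi' := hqp (i+1)
    refine Fin.cases ?_ (fun j => ?_) t
    · have : (q i : ℚ) ≠ 0 := by exact_mod_cast hqi.ne'
      simp only [vecInt, Fin.cons_zero]
      push_cast
      rw [div_mul_cancel₀ _ (by exact_mod_cast hqi.ne')]
      simp [Real.exp_nonneg]
    · simp only [vecInt, Fin.cons_succ]
      have h1 := coord_le_distInt ξ (q i) j
      have h2 := (coord_le_distInt ξ (q (i+1)) j).trans (hlt i).le
      have hratio : 1 ≤ (q (i+1) : ℝ) / q i := by
        rw [one_le_div hqi]; exact_mod_cast (hmono (Nat.lt_succ_self i)).le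
      set x := (round ((q i : ℝ) * ξ j) : ℤ)
      set y := (round ((q (i+1) : ℝ) * ξ j) : ℤ)
      have e : (((y : ℚ) - (q (i+1) : ℚ) / (q i : ℚ) * (x : ℚ) : ℚ) : ℝ) =
          (q (i+1) : ℝ) / q i * ((q i : ℝ) * ξ j - x) - ((q (i+1) : ℝ) * ξ j - y) := by
        push_cast; field_simp; ring
      rw [e]
      set L := distInt ξ (q i) with hL
      have hLp : 0 < L := hDp i
      have h3 : |(q (i+1) : ℝ) / q i * ((q i : ℝ) * ξ j - x) - ((q (i+1) : ℝ) * ξ j - y)| ≤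
          2 * ((q (i+1) : ℝ) / q i * L) := by
        refine (abs_sub _ _).trans ?_
        rw [abs_mul, abs_of_pos (by positivity : (0:ℝ) < (q (i+1) : ℝ) / q i)]
        have h4 := mul_le_mul_of_nonneg_left h1 (by positivity : (0:ℝ) ≤ (q (i+1) : ℝ) / q i)
        nlinarith
      refine h3.trans ?_
      rw [← Real.log_le_iff_le_exp (by positivity), Real.log_mul (by norm_num) (by positivity),
        Real.log_mul (by positivity) (by positivity), Real.log_div (by positivity) (by positivity)]
      have h5 := hlogL i (by omega)
      rw [Real.log_mul (by norm_num) hC.ne'] at hK1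
      have h10 : ℓ (i+1) = Real.log (q (i+1)) := rfl
      have h11 : ℓ i = Real.log (q i) := rfl
      rw [← h10, ← h11]
      linarith
  · intro i h0
    have := congrFun h0 0
    simp [vecInt] at this
    have := hq1 i
    omega
  · intro i t
    have hqi := hqp i
    have hq1' : (1:ℝ) ≤ q i := by exact_mod_cast hq1 i
    have hle : (q i : ℝ) * (‖ξ‖ + 1) ≤ Real.exp (ℓ i + K) := by
      rw [Real.exp_add, hexp]
      have : ‖ξ‖ + 1 ≤ Real.exp K := by
        rwa [← Real.log_le_iff_le_exp (by positivity)]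
      gcongr
    refine le_trans ?_ hle
    have hn := norm_nonneg ξ
    refine Fin.cases ?_ (fun j => ?_) t
    · simp only [vecInt, Fin.cons_zero]
      push_cast
      rw [abs_of_pos hqi]
      nlinarith
    · simp only [vecInt, Fin.cons_succ]
      push_cast
      have h1 := (coord_le_distInt ξ (q i) j).trans (distInt_le_one ξ (q i))
      have h2 : |ξ j| ≤ ‖ξ‖ := norm_le_pi_norm ξ j
      have h3 : |(q i : ℝ) * ξ j| ≤ q i * ‖ξ‖ := by
        rw [abs_mul, abs_of_pos hqi]; gcongr
      rw [abs_le] at h1 h3 ⊢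
      constructor <;> nlinarith
  · intro i hi
    have hqi := hqp i
    have h1 := hoff (q i) (fun j => round ((q i : ℝ) * ξ j)) (by exact_mod_cast hq1 i)
      (hoffs i (by omega) (by omega)) (by exact_mod_cast distInt_le_one ξ (q i))
    have h2 : 1 ≤ C1 * (q i : ℝ) ^ (s-1) * distInt ξ (q i) := by exact_mod_cast h1
    have hLp := hDp i
    have h3 := Real.log_le_log one_pos h2
    rw [Real.log_one, Real.log_mul (by positivity) hLp.ne', Real.log_mul hC1.ne' (by positivity),
      Real.log_pow] at h3
    have h5 := hlogL i (by omega)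
    rw [Real.log_mul hC1.ne' hC.ne'] at hK3
    have h11 : ℓ i = Real.log (q i) := rfl
    rw [← h11, Nat.cast_sub (by omega)] at h3
    push_cast at h3
    have h6 : H * ℓ (i+1) ≤ γ * ℓ (i+1) := mul_le_mul_of_nonneg_right hHγ.le (hℓ0 _)
    have h7 : H * ℓ (i+1) ≤ ((s:ℝ) - 1) * ℓ i + K := by linarith
    have h8 : K ≤ ((s:ℝ) - 1) * K := by nlinarith
    have h9 : ((s:ℝ) - 1) * (r * ℓ (i+1)) ≤ ((s:ℝ) - 1) * (ℓ i + K) := by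
      rw [← mul_assoc, mul_comm ((s:ℝ) - 1) r, hrH]; linarith
    exact le_of_mul_le_mul_left h9 (by linarith)
end
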